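/- arXiv:2111.04166 — 4 statements merged into one kernel-verified Lean document; each statement's English description precedes it below -/
import Mathlib

section
/- Let q be a power of two and let n > 1 be an integer. Then |𝓘(x^3 + x^2, 1, n, q)| = (1/(3 n_3)) (I(n/n_3, q^{n_3}) − I(n/n_3, ε)), where ε = 1 if q ≡ 1 (mod 3) and ε = −1 if q ≡ −1 (mod 3). -/
open Polynomial

/-- The transform `f_R` of a nonzero polynomial `f` by the rational expression `R = g/h`. -/
noncomputable def ratTransform {K : Type*} [Field K] (g h f : K[X]) : K[X] :=
  ∑ i ∈ Finset.range (f.natDegree + 1), C (f.coeff i) * g ^ i * h ^ (f.natDegree - i)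

/-- `𝓘(g,h,n,q)`: the set of monic irreducible polynomials `f` of degree `n` over the field
such that `f_R` is irreducible. -/
noncomputable def IrredSet {K : Type*} [Field K] (g h : K[X]) (n : ℕ) : Set K[X] :=
  {f | f.Monic ∧ Irreducible f ∧ f.natDegree = n ∧ Irreducible (ratTransform g h f)}

/-- `I(n,q) = (1/n) ∑_{d ∣ n} μ(d) q^{n/d}`, used formally for any rational `q`. -/
noncomputable def Ifun (n : ℕ) (q : ℚ) : ℚ :=
  (1 / (n : ℚ)) * ∑ d ∈ n.divisors, ((ArithmeticFunction.moebius d : ℤ) : ℚ) * q ^ (n / d)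

/-- `I(n/m, q)` with the convention that it is `0` when `m` does not divide `n`
(i.e. when `n/m` is not a positive integer). -/
noncomputable def IfunD (n m : ℕ) (q : ℚ) : ℚ := if m ∣ n then Ifun (n / m) q else 0

/-- `n₃`: the largest power of `3` dividing `n`. -/
def nThree (n : ℕ) : ℕ := 3 ^ (n.factorization 3)

theorem ratTransform_eq_comp {K : Type*} [Field K] (g f : K[X]) :
    ratTransform g 1 f = f.comp g := by
  rw [ratTransform, comp, eval₂_eq_sum_range]
  simp

theorem card_cube_roots {K : Type*} [Field K] [Fintype K] [DecidableEq K] [CharP K 2] :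
    (Fintype.card K % 3 = 1 → (Finset.univ.filter fun t : K => t ^ 2 + t + 1 = 0).card = 2) ∧
    (Fintype.card K % 3 = 2 → (Finset.univ.filter fun t : K => t ^ 2 + t + 1 = 0).card = 0) := by
  have h2 : (2 : K) = 0 := CharTwo.two_eq_zero
  constructor
  · intro h
    have h3 : 3 ∣ Fintype.card Kˣ := by
      rw [Fintype.card_units]
      omega
    obtain ⟨u, hu⟩ := exists_prime_orderOf_dvd_card 3 h3
    have hu1 : (u : K) ≠ 1 := by
      intro h'
      have : u = 1 := Units.ext h'
      rw [this, orderOf_one] at hu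
      omega
    have hu3 : (u : K) ^ 3 = 1 := by
      have := pow_orderOf_eq_one u
      rw [hu] at this
      rw [← Units.val_pow_eq_pow_val, this, Units.val_one]
    have hq : (u : K) ^ 2 + u + 1 = 0 := by
      have : ((u : K) - 1) * ((u : K) ^ 2 + u + 1) = 0 := by linear_combination hu3
      exact (mul_eq_zero.mp this).resolve_left (sub_ne_zero.mpr hu1)
    have : (Finset.univ.filter fun t : K => t ^ 2 + t + 1 = 0) = {(u : K), (u : K) + 1} := by
      ext t
      simp only [Finset.mem_filter, Finset.mem_univ, true_and, Finset.mem_insert,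
        Finset.mem_singleton]
      constructor
      · intro ht
        have : (t - u) * (t - (u + 1)) = 0 := by
          linear_combination ht + hq - h2 * (t * u + t + 1)
        rcases mul_eq_zero.mp this with h | h
        · left; exact sub_eq_zero.mp h
        · right; exact sub_eq_zero.mp h
      · rintro (rfl | rfl)
        · exact hq
        · linear_combination hq + h2 * (u + 1)
    rw [this, Finset.card_pair]
    simp
  · intro h
    rw [Finset.card_eq_zero, Finset.filter_eq_empty_iff]
    intro t _ ht
    have ht3 : t ^ 3 = 1 := by linear_combination (t - 1) * ht
    have ht1 : t ≠ 1 := by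
      rintro rfl
      have : (1 : K) = 0 := by linear_combination ht - h2
      exact one_ne_zero this
    have ht0 : t ≠ 0 := by rintro rfl; simp at ht
    have hc := FiniteField.pow_card_sub_one_eq_one t ht0
    apply ht1
    have e : Fintype.card K - 1 = 3 * ((Fintype.card K - 1) / 3) + 1 := by omega
    rw [e, pow_add, pow_mul, ht3, one_pow, one_mul, pow_one] at hc
    exact hc

/-- number of pairs with the same image -/
theorem card_pairs {K : Type*} [Field K] [Fintype K] [DecidableEq K] [CharP K 2] :
    (Finset.univ.filter fun p : K × K => p.1 ^ 2 + p.1 * p.2 + p.2 ^ 2 + p.1 + p.2 = 0).card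
      + (Finset.univ.filter fun t : K => t ^ 2 + t + 1 = 0).card = Fintype.card K + 1 := by
  have h2 : (2 : K) = 0 := CharTwo.two_eq_zero
  have hset : (Finset.univ.filter fun p : K × K =>
      p.1 ^ 2 + p.1 * p.2 + p.2 ^ 2 + p.1 + p.2 = 0) =
      insert (0, 1) ((Finset.univ.filter fun t : K => ¬ t ^ 2 + t + 1 = 0).image
        fun t => ((1 + t) / (t ^ 2 + t + 1), t * ((1 + t) / (t ^ 2 + t + 1)))) := by
    ext ⟨x, y⟩
    simp only [Finset.mem_filter, Finset.mem_univ, true_and, Finset.mem_insert, Finset.mem_image,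
      Prod.mk.injEq]
    constructor
    · intro h
      by_cases hx : x = 0
      · subst hx
        have : y * (y + 1) = 0 := by linear_combination h
        rcases mul_eq_zero.mp this with hy | hy
        · right
          refine ⟨1, ?_, ?_, ?_⟩
          · intro h'
            exact one_ne_zero (α := K) (by linear_combination h' - h2)
          · rw [one_add_one_eq_two, h2, zero_div]
          · rw [one_add_one_eq_two, h2, zero_div, mul_zero, hy]
        · left
          exact ⟨rfl, by linear_combination hy - h2⟩
      · right
        obtain ⟨t, rfl⟩ : ∃ t, y = t * x := ⟨y / x, by field_simp⟩
        have h' : x * (t ^ 2 + t + 1) + (1 + t) = 0 := by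
          have : x * (x * (t ^ 2 + t + 1) + (1 + t)) = 0 := by linear_combination h
          exact (mul_eq_zero.mp this).resolve_left hx
        have ht : t ^ 2 + t + 1 ≠ 0 := by
          intro h0
          rw [h0, mul_zero, zero_add] at h'
          have : t = 1 := by linear_combination h' - h2
          rw [this] at h0
          exact one_ne_zero (α := K) (by linear_combination h0 - h2)
        have hxe : (1 + t) / (t ^ 2 + t + 1) = x := by
          rw [div_eq_iff ht]
          linear_combination -h' + h2 * (1 + t)
        exact ⟨t, ht, hxe, by rw [hxe]⟩
    · rintro (⟨rfl, rfl⟩ | ⟨t, ht, rfl, rfl⟩)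
      · linear_combination h2
      · have : (1 + t) / (t ^ 2 + t + 1) * (t ^ 2 + t + 1) = 1 + t := div_mul_cancel₀ _ ht
        generalize (1 + t) / (t ^ 2 + t + 1) = z at *
        linear_combination z * this + h2 * z * (1 + t)
  rw [hset, Finset.card_insert_of_notMem, Finset.card_image_of_injOn]
  · have := Finset.card_filter_add_card_filter_not (s := (Finset.univ : Finset K))
      (fun t : K => t ^ 2 + t + 1 = 0)
    rw [Finset.card_univ] at this
    omega
  · intro s hs t ht h
    simp only [Finset.coe_filter, Finset.mem_univ, true_and, Set.mem_ofPred_eq] at hs ht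
    simp only [Prod.mk.injEq] at h
    obtain ⟨h1, h2'⟩ := h
    rw [h1] at h2'
    by_cases h0 : (1 + t) / (t ^ 2 + t + 1) = 0
    · rw [h0] at h1
      have a := (div_eq_zero_iff.mp h1).resolve_right hs
      have b := (div_eq_zero_iff.mp h0).resolve_right ht
      linear_combination a - b
    · exact mul_right_cancel₀ h0 h2'
  · simp only [Finset.mem_image, Finset.mem_filter, Finset.mem_univ, true_and, Prod.mk.injEq,
      not_exists, not_and]
    intro t _ h1 h3
    rw [h1, mul_zero] at h3
    exact zero_ne_one h3

theorem card_not_image {K : Type*} [Field K] [Fintype K] [DecidableEq K] [CharP K 2] :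
    3 * (Finset.univ.filter fun a : K => ∀ x : K, x ^ 3 + x ^ 2 ≠ a).card
      + (Finset.univ.filter fun t : K => t ^ 2 + t + 1 = 0).card = Fintype.card K + 1 := by
  have h2 : (2 : K) = 0 := CharTwo.two_eq_zero
  set c : K → ℤ := fun a => ((Finset.univ.filter fun x : K => x ^ 3 + x ^ 2 = a).card : ℤ) with hc
  -- first moment
  have m1 : ∑ a, c a = Fintype.card K := by
    have := Finset.card_eq_sum_card_fiberwise (s := (Finset.univ : Finset K))
      (t := (Finset.univ : Finset K)) (f := fun x : K => x ^ 3 + x ^ 2) (by simp)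
    rw [Finset.card_univ] at this
    rw [this]
    push_cast
    rfl
  -- second moment
  have m2 : ∑ a, c a ^ 2 = ((Finset.univ.filter fun p : K × K =>
      p.1 ^ 3 + p.1 ^ 2 = p.2 ^ 3 + p.2 ^ 2).card : ℤ) := by
    rw [Finset.card_eq_sum_card_fiberwise (t := (Finset.univ : Finset K))
      (f := fun p : K × K => p.1 ^ 3 + p.1 ^ 2) (by simp)]
    push_cast
    refine Finset.sum_congr rfl fun a _ => ?_
    rw [hc, sq, ← Nat.cast_mul, ← Finset.card_product]
    congr 2
    ext ⟨x, y⟩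
    simp only [Finset.mem_product, Finset.mem_filter, Finset.mem_univ, true_and]
    constructor
    · rintro ⟨h, h'⟩; exact ⟨h.trans h'.symm, h⟩
    · rintro ⟨h, h'⟩; exact ⟨h', h ▸ h'⟩
  have m3 : (Finset.univ.filter fun p : K × K =>
      p.1 ^ 3 + p.1 ^ 2 = p.2 ^ 3 + p.2 ^ 2).card + 1 = Fintype.card K +
      (Finset.univ.filter fun p : K × K =>
        p.1 ^ 2 + p.1 * p.2 + p.2 ^ 2 + p.1 + p.2 = 0).card := by
    have hu : (Finset.univ.filter fun p : K × K => p.1 ^ 3 + p.1 ^ 2 = p.2 ^ 3 + p.2 ^ 2) =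
        (Finset.univ.image fun x : K => (x, x)) ∪ (Finset.univ.filter fun p : K × K =>
        p.1 ^ 2 + p.1 * p.2 + p.2 ^ 2 + p.1 + p.2 = 0) := by
      ext ⟨x, y⟩
      simp only [Finset.mem_union, Finset.mem_image, Finset.mem_filter, Finset.mem_univ, true_and,
        Prod.mk.injEq]
      have key : x ^ 3 + x ^ 2 - (y ^ 3 + y ^ 2) =
        (x - y) * (x ^ 2 + x * y + y ^ 2 + x + y) := by ring
      rw [← sub_eq_zero, key, mul_eq_zero, sub_eq_zero]
      constructor
      · rintro (h | h)
        · left; exact ⟨x, rfl, h⟩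
        · right; exact h
      · rintro (⟨z, h, h'⟩ | h)
        · left; rw [← h, h']
        · right; exact h
    have hi : (Finset.univ.image fun x : K => (x, x)) ∩ (Finset.univ.filter fun p : K × K =>
        p.1 ^ 2 + p.1 * p.2 + p.2 ^ 2 + p.1 + p.2 = 0) = {(0, 0)} := by
      ext ⟨x, y⟩
      simp only [Finset.mem_inter, Finset.mem_image, Finset.mem_filter, Finset.mem_univ, true_and,
        Prod.mk.injEq, Finset.mem_singleton]
      constructor
      · rintro ⟨⟨z, rfl, rfl⟩, h⟩
        have : z ^ 2 = 0 := by linear_combination h - h2 * (z ^ 2 + z)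
        have := pow_eq_zero_iff (two_ne_zero) |>.mp this
        exact ⟨this, this⟩
      · rintro ⟨rfl, rfl⟩
        exact ⟨⟨0, rfl, rfl⟩, by ring⟩
    have := Finset.card_union_add_card_inter (Finset.univ.image fun x : K => (x, x))
      (Finset.univ.filter fun p : K × K => p.1 ^ 2 + p.1 * p.2 + p.2 ^ 2 + p.1 + p.2 = 0)
    rw [← hu, hi, Finset.card_singleton, Finset.card_image_of_injective _
      (fun x y h => (Prod.mk.inj h).1), Finset.card_univ] at this
    exact this
  -- pointwise
  have pw : ∀ a : K, (c a - 1) * (c a - 3) =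
      (if ∀ x : K, x ^ 3 + x ^ 2 ≠ a then 3 else 0) - (if a = 0 then 1 else 0) := by
    intro a
    by_cases ha : a = 0
    · subst ha
      have : (Finset.univ.filter fun x : K => x ^ 3 + x ^ 2 = 0) = {0, 1} := by
        ext x
        simp only [Finset.mem_filter, Finset.mem_univ, true_and, Finset.mem_insert,
          Finset.mem_singleton]
        constructor
        · intro h
          have : x ^ 2 * (x + 1) = 0 := by linear_combination h
          rcases mul_eq_zero.mp this with h | h
          · left; exact pow_eq_zero_iff (two_ne_zero) |>.mp h
          · right; linear_combination h - h2
        · rintro (rfl | rfl)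
          · ring
          · linear_combination h2
      have hc0 : c 0 = 2 := by
        simp only [hc, this]
        rw [Finset.card_pair zero_ne_one]; rfl
      have hn : ¬ ∀ x : K, x ^ 3 + x ^ 2 ≠ 0 := by
        push Not
        exact ⟨0, by ring⟩
      rw [hc0, if_neg hn, if_pos rfl]
      norm_num
    · rw [if_neg ha]
      by_cases hn : ∀ x : K, x ^ 3 + x ^ 2 ≠ a
      · have hc0 : c a = 0 := by
          simp only [hc, Nat.cast_eq_zero, Finset.card_eq_zero, Finset.filter_eq_empty_iff]
          intro x _; exact hn x
        rw [if_pos hn, hc0]; norm_num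
      · rw [if_neg hn]
        push Not at hn
        obtain ⟨x, hx⟩ := hn
        by_cases hy : ∃ y, y ≠ x ∧ y ^ 3 + y ^ 2 = a
        · obtain ⟨y, hyx, hy⟩ := hy
          have hcon : x ^ 2 + x * y + y ^ 2 + x + y = 0 := by
            have : (y - x) * (x ^ 2 + x * y + y ^ 2 + x + y) = 0 := by
              linear_combination hy - hx
            exact (mul_eq_zero.mp this).resolve_left (sub_ne_zero.mpr hyx)
          have hset : (Finset.univ.filter fun z : K => z ^ 3 + z ^ 2 = a) = {x, y, 1 + x + y} := by
            ext z
            simp only [Finset.mem_filter, Finset.mem_univ, true_and, Finset.mem_insert,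
              Finset.mem_singleton]
            have key : z ^ 3 + z ^ 2 - a = (z - x) * ((z - y) * (z - (1 + x + y))) := by
              linear_combination hx + (z - x) * hcon +
                h2 * (z - x) * (z * (1 + x + y) - y * (1 + x + y))
            rw [← sub_eq_zero, key, mul_eq_zero, mul_eq_zero, sub_eq_zero, sub_eq_zero,
              sub_eq_zero]
          have hc3 : c a = 3 := by
            simp only [hc, hset]
            rw [Finset.card_eq_three.mpr ⟨x, y, 1 + x + y, hyx.symm, ?_, ?_, rfl⟩]
            · rfl
            · intro h
              have : y = 1 := by linear_combination -h - h2
              apply ha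
              rw [← hy, this]
              linear_combination h2
            · intro h
              have : x = 1 := by linear_combination -h - h2
              apply ha
              rw [← hx, this]
              linear_combination h2
          rw [hc3]; norm_num
        · push Not at hy
          have hset : (Finset.univ.filter fun z : K => z ^ 3 + z ^ 2 = a) = {x} := by
            ext z
            simp only [Finset.mem_filter, Finset.mem_univ, true_and, Finset.mem_singleton]
            constructor
            · intro h
              by_contra hne
              exact hy z hne h
            · rintro rfl; exact hx
          have hc1 : c a = 1 := by
            simp only [hc, hset, Finset.card_singleton, Nat.cast_one]
          rw [hc1]; norm_num
  have hs : ∑ a, (c a - 1) * (c a - 3) = ∑ a : K,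
      ((if ∀ x : K, x ^ 3 + x ^ 2 ≠ a then (3 : ℤ) else 0) - (if a = 0 then 1 else 0)) :=
    Finset.sum_congr rfl fun a _ => pw a
  have hl : ∑ a, (c a - 1) * (c a - 3) = ∑ a, c a ^ 2 - 4 * ∑ a, c a + 3 * Fintype.card K := by
    have : ∀ a, (c a - 1) * (c a - 3) = c a ^ 2 - 4 * c a + 3 := fun a => by ring
    simp only [this, Finset.sum_add_distrib, Finset.sum_sub_distrib, ← Finset.mul_sum,
      Finset.sum_const, Finset.card_univ]
    simp [mul_comm]
  rw [hl, m1, m2, Finset.sum_sub_distrib, ← Finset.sum_filter, Finset.sum_const,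
    Finset.sum_ite_eq' Finset.univ (0 : K), if_pos (Finset.mem_univ _), nsmul_eq_mul] at hs
  have m4 := card_pairs (K := K)
  zify at m3 m4 ⊢
  linarith

open scoped IntermediateField in
theorem no_root_iff {F L : Type*} [Field F] [Finite F] [Field L] [Finite L] [Algebra F L]
    (a : L) :
    (∀ x : L, x ^ 3 + x ^ 2 ≠ a) ↔
      Irreducible ((minpoly F a).comp (X ^ 3 + X ^ 2)) ∧
        ¬ 3 * (minpoly F a).natDegree ∣ Module.finrank F L := by
  have hai : IsIntegral F a := Algebra.IsIntegral.isIntegral a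
  have hgm : (X ^ 3 + X ^ 2 : F[X]).Monic := by monicity!
  have hgd : (X ^ 3 + X ^ 2 : F[X]).natDegree = 3 := by compute_degree!
  have hdeg : ((minpoly F a).comp (X ^ 3 + X ^ 2)).natDegree = 3 * (minpoly F a).natDegree := by
    rw [natDegree_comp, hgd, mul_comm]
  constructor
  · intro h
    have hirr : Irreducible ((minpoly F a).comp (X ^ 3 + X ^ 2)) := by
      refine irreducible_comp (minpoly.monic hai) hgm (minpoly.irreducible hai) ?_
      intro E _ _ x hx
      have hxi : IsIntegral F x := by
        by_contra hni
        have := minpoly.ne_zero hai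
        rw [← hx, minpoly.eq_zero hni] at this
        exact this rfl
      have hmap : (X ^ 3 + X ^ 2 : F[X]).map (algebraMap F F⟮x⟯)
          - C (IntermediateField.AdjoinSimple.gen F x) =
          X ^ 3 + X ^ 2 - C (IntermediateField.AdjoinSimple.gen F x) := by simp
      rw [hmap]
      have hd : (X ^ 3 + X ^ 2 - C (IntermediateField.AdjoinSimple.gen F x)).natDegree = 3 := by
        compute_degree!
      refine irreducible_of_degree_le_three_of_not_isRoot (by rw [hd]; simp) ?_
      intro y hy
      have hy' : y ^ 3 + y ^ 2 = IntermediateField.AdjoinSimple.gen F x := by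
        have : y ^ 3 + y ^ 2 - IntermediateField.AdjoinSimple.gen F x = 0 := by
          simpa [IsRoot] using hy
        exact sub_eq_zero.mp this
      let pb := IntermediateField.adjoin.powerBasis hxi
      have hpg : pb.gen = IntermediateField.AdjoinSimple.gen F x :=
        IntermediateField.adjoin.powerBasis_gen hxi
      have hroot : aeval a (minpoly F pb.gen) = 0 := by
        rw [hpg, IntermediateField.minpoly_gen, hx]
        exact minpoly.aeval F a
      have hl := pb.lift_gen a hroot
      rw [hpg] at hl
      apply h (pb.lift a hroot y)
      rw [← map_pow, ← map_pow, ← map_add, hy', hl]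
    refine ⟨hirr, fun hdvd => ?_⟩
    have := Fact.mk hirr
    have hne := hirr.ne_zero
    have : FiniteDimensional F (AdjoinRoot ((minpoly F a).comp (X ^ 3 + X ^ 2))) :=
      (AdjoinRoot.powerBasis hne).finite
    have hfr : Module.finrank F (AdjoinRoot ((minpoly F a).comp (X ^ 3 + X ^ 2))) =
        3 * (minpoly F a).natDegree := by
      rw [(AdjoinRoot.powerBasis hne).finrank, AdjoinRoot.powerBasis_dim, hdeg]
    obtain ⟨φ⟩ := FiniteField.nonempty_algHom_of_finrank_dvd (F := F)
      (K := AdjoinRoot ((minpoly F a).comp (X ^ 3 + X ^ 2))) (L := L) (hfr ▸ hdvd)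
    set b : L := φ (AdjoinRoot.root _) with hb
    have hb0 : aeval b ((minpoly F a).comp (X ^ 3 + X ^ 2)) = 0 := by
      rw [hb, aeval_algHom_apply, AdjoinRoot.aeval_eq, AdjoinRoot.mk_self, map_zero]
    have hb1 : aeval (b ^ 3 + b ^ 2) (minpoly F a) = 0 := by
      rw [aeval_comp] at hb0
      simpa using hb0
    obtain ⟨σ, hσ⟩ := minpoly.exists_algEquiv_of_root (K := F) (L := L) (x := b ^ 3 + b ^ 2) (y := a)
      (Algebra.IsAlgebraic.isAlgebraic _) hb1
    apply h (σ b)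
    rw [← hσ, map_add σ, map_pow σ, map_pow σ]
  · rintro ⟨hirr, hnd⟩ b hb
    apply hnd
    have hb0 : aeval b ((minpoly F a).comp (X ^ 3 + X ^ 2)) = 0 := by
      rw [aeval_comp]
      simp [hb]
    have : minpoly F b = (minpoly F a).comp (X ^ 3 + X ^ 2) :=
      (minpoly.eq_of_irreducible_of_monic hirr hb0
        ((minpoly.monic hai).comp hgm (by rw [hgd]; norm_num))).symm
    rw [← hdeg, ← this]
    exact minpoly.degree_dvd (Algebra.IsIntegral.isIntegral b)

theorem card_minpoly_mem {F L : Type*} [Field F] [Finite F] [Field L] [Fintype L] [Algebra F L]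
    (S : Set F[X]) (d : ℕ) (hd : d ∣ Module.finrank F L)
    (hS : ∀ f ∈ S, f.Monic ∧ Irreducible f ∧ f.natDegree = d) :
    Nat.card {a : L | minpoly F a ∈ S} = d * S.ncard := by
  classical
  set A : Finset L := Finset.univ.filter fun a => minpoly F a ∈ S with hA
  have hcard : Nat.card {a : L | minpoly F a ∈ S} = A.card := by
    rw [Nat.card_eq_fintype_card, hA]
    simp [Fintype.card_subtype]
  have himg : ((A.image (minpoly F) : Finset F[X]) : Set F[X]) = S := by
    ext f
    simp only [Finset.coe_image, Set.mem_image, hA, Finset.coe_filter, Finset.mem_univ, true_and,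
      Set.mem_ofPred_eq]
    constructor
    · rintro ⟨a, ha, rfl⟩; exact ha
    · intro hf
      obtain ⟨hm, hirr, hdg⟩ := hS f hf
      have := Fact.mk hirr
      have hne := hirr.ne_zero
      have : FiniteDimensional F (AdjoinRoot f) := (AdjoinRoot.powerBasis hne).finite
      have hfr : Module.finrank F (AdjoinRoot f) = d := by
        rw [(AdjoinRoot.powerBasis hne).finrank, AdjoinRoot.powerBasis_dim, hdg]
      obtain ⟨φ⟩ := FiniteField.nonempty_algHom_of_finrank_dvd (F := F)
        (K := AdjoinRoot f) (L := L) (hfr ▸ hd)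
      have h0 : aeval (φ (AdjoinRoot.root f)) f = 0 := by
        rw [aeval_algHom_apply, AdjoinRoot.aeval_eq, AdjoinRoot.mk_self, map_zero]
      have he := minpoly.eq_of_irreducible_of_monic hirr h0 hm
      exact ⟨_, he ▸ hf, he.symm⟩
  rw [hcard, ← himg, Set.ncard_coe_finset, Finset.card_eq_sum_card_image (minpoly F) A,
    Finset.sum_const_nat (m := d), mul_comm]
  intro f hf
  have hfS : f ∈ S := by rw [← himg]; exact_mod_cast hf
  obtain ⟨hm, hirr, hdg⟩ := hS f hfS
  obtain ⟨a0, _, ha0⟩ := Finset.mem_image.mp hf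
  have hfib : (A.filter fun a => minpoly F a = f) = (f.rootSet L).toFinset := by
    ext a
    rw [Set.mem_toFinset, mem_rootSet_of_ne hirr.ne_zero]
    simp only [hA, Finset.mem_filter, Finset.mem_univ, true_and]
    constructor
    · rintro ⟨_, rfl⟩; exact minpoly.aeval F a
    · intro h
      have he := minpoly.eq_of_irreducible_of_monic hirr h hm
      exact ⟨he ▸ hfS, he.symm⟩
  rw [hfib, Set.toFinset_card, card_rootSet_eq_natDegree (PerfectField.separable_of_irreducible hirr),
    hdg]
  rw [← ha0]
  exact Normal.splits inferInstance a0

theorem three_mul_card_no_root {K : Type*} [Field K] [Fintype K] [DecidableEq K] [CharP K 2]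
    (q k m : ℕ) (hK : Fintype.card K = q ^ (3 ^ k * m)) (ε : ℚ)
    (hε : (q % 3 = 1 ∧ ε = 1) ∨ (q % 3 = 2 ∧ ε = -1)) :
    3 * ((Finset.univ.filter fun a : K => ∀ x : K, x ^ 3 + x ^ 2 ≠ a).card : ℚ) =
      ((q : ℚ) ^ 3 ^ k) ^ m - ε ^ m := by
  have h := card_not_image (K := K)
  obtain ⟨h1, h2⟩ := card_cube_roots (K := K)
  have hKQ : ((q : ℚ) ^ 3 ^ k) ^ m = (Fintype.card K : ℚ) := by
    rw [hK, pow_mul]; push_cast; rfl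
  rw [hKQ]
  have case1 : Fintype.card K % 3 = 1 → ε ^ m = 1 →
      3 * ((Finset.univ.filter fun a : K => ∀ x : K, x ^ 3 + x ^ 2 ≠ a).card : ℚ) =
      (Fintype.card K : ℚ) - ε ^ m := by
    intro a b
    rw [h1 a] at h
    rw [b]
    have h' := congrArg (Nat.cast : ℕ → ℚ) h
    push_cast at h'
    linarith
  have case2 : Fintype.card K % 3 = 2 → ε ^ m = -1 →
      3 * ((Finset.univ.filter fun a : K => ∀ x : K, x ^ 3 + x ^ 2 ≠ a).card : ℚ) =
      (Fintype.card K : ℚ) - ε ^ m := by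
    intro a b
    rw [h2 a] at h
    rw [b]
    have h' := congrArg (Nat.cast : ℕ → ℚ) h
    push_cast at h'
    linarith
  rcases hε with ⟨hq, rfl⟩ | ⟨hq, rfl⟩
  · apply case1 _ (one_pow m)
    simp [hK, Nat.pow_mod, hq]
  · have hodd : Odd (3 ^ k) := Odd.pow (by decide)
    rcases Nat.even_or_odd m with hm | hm
    · apply case1 _ hm.neg_one_pow
      obtain ⟨j, hj⟩ := hm.mul_left (3 ^ k)
      rw [hK, hj, ← two_mul, pow_mul, Nat.pow_mod, Nat.pow_mod q, hq]
      norm_num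
    · apply case2 _ hm.neg_one_pow
      obtain ⟨j, hj⟩ := hodd.mul hm
      rw [hK, hj, pow_succ, pow_mul, Nat.mul_mod, Nat.pow_mod, Nat.pow_mod q, hq]
      norm_num

theorem sum_card {F : Type*} [Field F] [Fintype F] [CharP F 2] (k m : ℕ)
    (hm : ¬ 3 ∣ m) (ε : ℚ)
    (hε : (Fintype.card F % 3 = 1 ∧ ε = 1) ∨ (Fintype.card F % 3 = 2 ∧ ε = -1)) :
    ∑ e ∈ m.divisors, (((3 ^ k * e : ℕ) : ℚ) *
      ((IrredSet (X ^ 3 + X ^ 2 : F[X]) 1 (3 ^ k * e)).ncard : ℚ)) =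
      (((Fintype.card F : ℚ) ^ 3 ^ k) ^ m - ε ^ m) / 3 := by
  classical
  have hm0 : m ≠ 0 := by rintro rfl; simp at hm
  have h3k : 0 < 3 ^ k := by positivity
  have : NeZero (3 ^ k * m) := ⟨by positivity⟩
  let L := FiniteField.Extension F 2 (3 ^ k * m)
  let _ : Fintype L := Fintype.ofFinite L
  have : CharP L 2 := charP_of_injective_algebraMap (algebraMap F L).injective 2
  have hfr : Module.finrank F L = 3 ^ k * m := FiniteField.finrank_extension F 2 _
  have hcL : Fintype.card L = Fintype.card F ^ (3 ^ k * m) := by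
    rw [← Nat.card_eq_fintype_card, ← Nat.card_eq_fintype_card]
    exact FiniteField.natCard_extension F 2 _
  have hT := three_mul_card_no_root (K := L) (Fintype.card F) k m hcL ε hε
  rw [← hT, mul_div_cancel_left₀ _ (by norm_num : (3 : ℚ) ≠ 0)]
  have key : ∀ a : L, (∀ x : L, x ^ 3 + x ^ 2 ≠ a) →
      ∃ e, e ∣ m ∧ (minpoly F a).natDegree = 3 ^ k * e := by
    intro a ha
    obtain ⟨_, hnd⟩ := (no_root_iff (F := F) a).mp ha
    have hd : (minpoly F a).natDegree ∣ Module.finrank F L :=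
      minpoly.degree_dvd (Algebra.IsIntegral.isIntegral a)
    rw [hfr] at hd hnd
    obtain ⟨c, hc⟩ := hd
    have h3c : ¬ 3 ∣ c := by
      rintro ⟨c', rfl⟩
      exact hnd ⟨c', hc.trans (by ring)⟩
    have hcop : Nat.Coprime (3 ^ k) c :=
      Nat.Coprime.pow_left k ((Nat.Prime.coprime_iff_not_dvd Nat.prime_three).mpr h3c)
    have : 3 ^ k ∣ (minpoly F a).natDegree :=
      hcop.dvd_of_dvd_mul_right (hc ▸ dvd_mul_right _ _)
    obtain ⟨e, he⟩ := this
    refine ⟨e, ⟨c, ?_⟩, he⟩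
    rw [he, mul_assoc] at hc
    exact Nat.eq_of_mul_eq_mul_left h3k hc
  rw [Finset.card_eq_sum_card_fiberwise (t := m.divisors)
    (f := fun a : L => (minpoly F a).natDegree / 3 ^ k)]
  · push_cast
    refine Finset.sum_congr rfl fun e he => ?_
    have hem : e ∣ m := Nat.dvd_of_mem_divisors he
    have hc := card_minpoly_mem (F := F) (L := L) (IrredSet (X ^ 3 + X ^ 2 : F[X]) 1 (3 ^ k * e))
      (3 ^ k * e) ((mul_dvd_mul_left _ hem).trans hfr.symm.dvd) (fun f hf => ⟨hf.1, hf.2.1, hf.2.2.1⟩)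
    have hc' := congrArg (Nat.cast : ℕ → ℚ) hc
    push_cast at hc'
    rw [← hc']
    congr 1
    rw [Nat.card_eq_fintype_card, Fintype.card_subtype]
    congr 1
    ext a
    have hai : IsIntegral F a := Algebra.IsIntegral.isIntegral a
    simp only [Finset.mem_filter, Finset.mem_univ, true_and, IrredSet, Set.mem_ofPred_eq,
      ratTransform_eq_comp]
    constructor
    · rintro ⟨_, hirr, hdg, hcomp⟩
      rw [hdg, Nat.mul_div_cancel_left _ h3k]
      refine ⟨(no_root_iff (F := F) a).mpr ⟨hcomp, ?_⟩, rfl⟩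
      rw [hdg, hfr]
      intro hdvd
      apply hm
      have : 3 ^ k * (3 * e) ∣ 3 ^ k * m := by
        rw [show 3 ^ k * (3 * e) = 3 * (3 ^ k * e) by ring]; exact hdvd
      exact (dvd_mul_right 3 e).trans (Nat.dvd_of_mul_dvd_mul_left h3k this)
    · rintro ⟨ha, hde⟩
      obtain ⟨e', _, he'⟩ := key a ha
      rw [he', Nat.mul_div_cancel_left _ h3k] at hde
      subst hde
      exact ⟨minpoly.monic hai, minpoly.irreducible hai, he',
        ((no_root_iff (F := F) a).mp ha).1⟩
  · intro a ha
    simp only [Finset.coe_filter, Finset.mem_univ, true_and, Set.mem_ofPred_eq] at ha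
    obtain ⟨e, hem, he⟩ := key a ha
    simp only [he, Nat.mul_div_cancel_left _ h3k, Finset.mem_coe, Nat.mem_divisors]
    exact ⟨hem, hm0⟩

/-- Theorem 16: over `F_q` of characteristic two,
`|𝓘(x³+x², 1, n, q)| = (1/(3n₃)) (I(n/n₃, q^{n₃}) − I(n/n₃, ε))`, where `ε = 1` if
`q ≡ 1 (mod 3)` and `ε = −1` if `q ≡ −1 (mod 3)`. -/
theorem stmt16 {F : Type*} [Field F] [Fintype F] [CharP F 2] (q : ℕ)
    (hq : Fintype.card F = q) (n : ℕ) (hn : 1 < n) :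
    ∀ ε : ℚ, ((q % 3 = 1 ∧ ε = 1) ∨ (q % 3 = 2 ∧ ε = -1)) →
      ((IrredSet (X ^ 3 + X ^ 2 : F[X]) 1 n).ncard : ℚ) =
        (1 / (3 * (nThree n : ℚ))) *
          (Ifun (n / nThree n) ((q : ℚ) ^ nThree n) - Ifun (n / nThree n) ε) := by
  intro ε hε
  subst hq
  have hn0 : n ≠ 0 := by omega
  set k := n.factorization 3 with hk
  have h3 : nThree n = 3 ^ k := rfl
  set m := n / 3 ^ k with hmdef
  have hnm : 3 ^ k * m = n := Nat.ordProj_mul_ordCompl_eq_self n 3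
  have hm3 : ¬ 3 ∣ m := Nat.not_dvd_ordCompl Nat.prime_three hn0
  have hm0 : 0 < m := Nat.pos_of_ne_zero (by rintro h; rw [h] at hm3; simp at hm3)
  have hmob := (ArithmeticFunction.sum_eq_iff_sum_mul_moebius_eq_on (R := ℚ)
    (f := fun e => ((3 ^ k * e : ℕ) : ℚ) *
      ((IrredSet (X ^ 3 + X ^ 2 : F[X]) 1 (3 ^ k * e)).ncard : ℚ))
    (g := fun m => (((Fintype.card F : ℚ) ^ 3 ^ k) ^ m - ε ^ m) / 3)
    {m | ¬ 3 ∣ m} (fun a b hab hb ha => hb (ha.trans hab))).mp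
    (fun m _ hm => sum_card k m hm ε hε) m hm0 hm3
  rw [Nat.sum_divisorsAntidiagonal
    (f := fun a b => ((ArithmeticFunction.moebius a : ℤ) : ℚ) *
      ((((Fintype.card F : ℚ) ^ 3 ^ k) ^ b - ε ^ b) / 3))] at hmob
  simp only [hnm] at hmob
  have hsplit : ∑ i ∈ m.divisors, ((ArithmeticFunction.moebius i : ℤ) : ℚ) *
      ((((Fintype.card F : ℚ) ^ 3 ^ k) ^ (m / i) - ε ^ (m / i)) / 3) =
      (∑ i ∈ m.divisors, ((ArithmeticFunction.moebius i : ℤ) : ℚ) *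
        ((Fintype.card F : ℚ) ^ 3 ^ k) ^ (m / i) -
      ∑ i ∈ m.divisors, ((ArithmeticFunction.moebius i : ℤ) : ℚ) * ε ^ (m / i)) / 3 := by
    rw [← Finset.sum_sub_distrib, Finset.sum_div]
    refine Finset.sum_congr rfl fun i _ => ?_
    ring
  rw [hsplit] at hmob
  rw [h3, ← hmdef, Ifun, Ifun, ← mul_sub]
  push_cast
  have hmQ : (m : ℚ) ≠ 0 := by exact_mod_cast hm0.ne'
  have hnQ : (n : ℚ) = 3 ^ k * m := by rw [← hnm]; push_cast; rfl
  rw [hnQ] at hmob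
  field_simp
  linarith
end

section
/- Let F_q be a finite field of characteristic two and let R(x) = g(x)/h(x) with either g(x) = x^3 + c, h(x) = x for some nonzero c ∈ F_q, or g(x) = x^3 + c, h(x) = x + c for some c ∈ F_q \ F_2. Then there exists a constant C, depending only on g, h and q, such that for every integer n > 1, | |𝓘(g, h, n, q)| − q^n/(3n) | ≤ C · q^{n/2}/n. -/
open Polynomial

section Stepanov
open WeierstrassCurve.Affine

variable {K : Type*} [Field K] (W : WeierstrassCurve.Affine K)

/-- pole order at infinity on the coordinate ring -/
noncomputable def ordInf (f : W.CoordinateRing) : WithBot ℕ := (Algebra.norm K[X] f).degree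

lemma ordInf_smul_basis (p q : K[X]) :
    ordInf W (p • (1 : W.CoordinateRing) + q • CoordinateRing.mk W X) =
      max (2 • p.degree) (2 • q.degree + 3) :=
  CoordinateRing.degree_norm_smul_basis p q

lemma ordInf_mul (f g : W.CoordinateRing) : ordInf W (f * g) = ordInf W f + ordInf W g := by
  simp [ordInf, degree_mul]

lemma ordInf_pow (f : W.CoordinateRing) (n : ℕ) : ordInf W (f ^ n) = n • ordInf W f := by
  simp [ordInf, degree_pow]

lemma ordInf_eq_bot {f : W.CoordinateRing} : ordInf W f = ⊥ ↔ f = 0 := by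
  have : Module.Finite K[X] W.CoordinateRing := .of_basis (CoordinateRing.basis W)
  rw [ordInf, degree_eq_bot, Algebra.norm_eq_zero_iff]

lemma ordInf_zero : ordInf W 0 = ⊥ := (ordInf_eq_bot W).2 rfl

lemma ordInf_one : ordInf W 1 = 0 := by simp [ordInf]

lemma ordInf_add_le (f g : W.CoordinateRing) :
    ordInf W (f + g) ≤ max (ordInf W f) (ordInf W g) := by
  obtain ⟨p, q, rfl⟩ := CoordinateRing.exists_smul_basis_eq f
  obtain ⟨p', q', rfl⟩ := CoordinateRing.exists_smul_basis_eq g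
  have : (p • (1 : W.CoordinateRing) + q • CoordinateRing.mk W X) +
    (p' • (1 : W.CoordinateRing) + q' • CoordinateRing.mk W X) =
    (p + p') • (1 : W.CoordinateRing) + (q + q') • CoordinateRing.mk W X := by
    rw [add_smul, add_smul]; abel
  rw [this, ordInf_smul_basis, ordInf_smul_basis, ordInf_smul_basis]
  have h1 := degree_add_le p p'
  have h2 := degree_add_le q q'
  apply max_le
  · rcases le_max_iff.1 h1 with h | h
    · exact (nsmul_le_nsmul_right h 2).trans (by simp)
    · exact (nsmul_le_nsmul_right h 2).trans (by simp)
  · rcases le_max_iff.1 h2 with h | h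
    · exact (add_le_add_left (nsmul_le_nsmul_right h 2) 3).trans (by simp)
    · exact (add_le_add_left (nsmul_le_nsmul_right h 2) 3).trans (by simp)

lemma ordInf_neg (f : W.CoordinateRing) : ordInf W (-f) = ordInf W f := by
  rw [← neg_one_mul, ordInf_mul]
  obtain h : ordInf W (-1) = 0 := by
    have : (-1 : W.CoordinateRing) = (-1 : K[X]) • (1 : W.CoordinateRing) + (0 : K[X]) • CoordinateRing.mk W X := by
      simp
    rw [this, ordInf_smul_basis]
    simp
  rw [h, zero_add]

lemma ordInf_sum_lt {ι : Type*} (t : Finset ι) (f : ι → W.CoordinateRing) (b : WithBot ℕ)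
    (hb : ⊥ < b) (h : ∀ i ∈ t, ordInf W (f i) < b) : ordInf W (∑ i ∈ t, f i) < b := by
  classical
  induction t using Finset.induction_on with
  | empty => simpa [ordInf_zero] using hb
  | insert a t ha ih =>
    rw [Finset.sum_insert ha]
    refine (ordInf_add_le W _ _).trans_lt (max_lt (h _ (by simp)) (ih fun i hi => h _ (by simp [hi])))

lemma ordInf_sum_le {ι : Type*} (t : Finset ι) (f : ι → W.CoordinateRing) (b : WithBot ℕ)
    (h : ∀ i ∈ t, ordInf W (f i) ≤ b) : ordInf W (∑ i ∈ t, f i) ≤ b := by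
  classical
  induction t using Finset.induction_on with
  | empty => simp [ordInf_zero]
  | insert a t ha ih =>
    rw [Finset.sum_insert ha]
    refine (ordInf_add_le W _ _).trans (max_le (h _ (by simp)) (ih fun i hi => h _ (by simp [hi])))

lemma sum_ne_zero_of_ordInf {ι : Type*} (t : Finset ι) (f : ι → W.CoordinateRing)
    (hinj : ∀ i ∈ t, ∀ j ∈ t, f i ≠ 0 → f j ≠ 0 → ordInf W (f i) = ordInf W (f j) → i = j)
    (hex : ∃ i ∈ t, f i ≠ 0) : ∑ i ∈ t, f i ≠ 0 := by
  classical
  obtain ⟨i1, hi1, hi1'⟩ := hex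
  obtain ⟨i, hi, hmax⟩ := Finset.exists_max_image t (fun i => ordInf W (f i)) ⟨i1, hi1⟩
  have hfi : f i ≠ 0 := by
    intro h0
    have := hmax i1 hi1
    rw [h0, ordInf_zero, le_bot_iff, ordInf_eq_bot] at this
    exact hi1' this
  have hlt : ordInf W (∑ j ∈ t.erase i, f j) < ordInf W (f i) := by
    have hb : ⊥ < ordInf W (f i) := bot_lt_iff_ne_bot.2 fun h => hfi ((ordInf_eq_bot W).1 h)
    apply ordInf_sum_lt W _ _ _ hb
    intro j hj
    rw [Finset.mem_erase] at hj
    by_cases hj0 : f j = 0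
    · rwa [hj0, ordInf_zero]
    · refine lt_of_le_of_ne (hmax j hj.2) fun h => hj.1 (hinj j hj.2 i hi hj0 hfi h)
  intro h0
  rw [← Finset.add_sum_erase t f hi] at h0
  rw [← neg_eq_of_add_eq_zero_right h0, ordInf_neg] at hlt
  exact lt_irrefl _ hlt

/-- elements of pole order `n + 2` -/
noncomputable def eB (n : ℕ) : W.CoordinateRing :=
  if Even n then (X ^ (n / 2 + 1) : K[X]) • (1 : W.CoordinateRing) + (0 : K[X]) • CoordinateRing.mk W X
  else (0 : K[X]) • (1 : W.CoordinateRing) + (X ^ (n / 2) : K[X]) • CoordinateRing.mk W X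

lemma ordInf_eB (n : ℕ) : ordInf W (eB W n) = ((n + 2 : ℕ) : WithBot ℕ) := by
  unfold eB
  split_ifs with h
  · rw [ordInf_smul_basis]
    obtain ⟨k, rfl⟩ := h
    have : (k + k) / 2 = k := by omega
    rw [this, degree_X_pow, degree_zero]
    simp only [nsmul_eq_mul, Nat.cast_ofNat]
    have : (2 : WithBot ℕ) * ⊥ + 3 = ⊥ := rfl
    rw [this, max_bot_right]
    norm_cast
    omega
  · rw [ordInf_smul_basis]
    have h2 : n = 2 * (n / 2) + 1 := by rcases Nat.not_even_iff_odd.1 h with ⟨k, rfl⟩; omega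
    rw [degree_X_pow, degree_zero]
    simp only [nsmul_eq_mul, Nat.cast_ofNat]
    have : (2 : WithBot ℕ) * ⊥ = ⊥ := rfl
    rw [this, max_bot_left]
    norm_cast
    omega

/-- `K`-linear map from pairs of bounded degree polynomials. -/
noncomputable def pairMap (m₁ m₂ : ℕ) :
    (degreeLT K m₁ × degreeLT K m₂) →ₗ[K] W.CoordinateRing where
  toFun x := (x.1 : K[X]) • (1 : W.CoordinateRing) + (x.2 : K[X]) • CoordinateRing.mk W X
  map_add' x y := by simp [add_smul]; abel
  map_smul' c x := by simp [smul_add]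

lemma mem_range_pairMap {f : W.CoordinateRing} {n : ℕ} (h : ordInf W f ≤ n) :
    f ∈ LinearMap.range (pairMap W (n / 2 + 1) ((n + 1) / 2)) := by
  obtain ⟨p, q, rfl⟩ := CoordinateRing.exists_smul_basis_eq f
  rw [ordInf_smul_basis, max_le_iff] at h
  refine ⟨⟨⟨p, ?_⟩, ⟨q, ?_⟩⟩, rfl⟩
  · rw [mem_degreeLT]
    by_cases hp : p = 0
    · simp [hp]
    rw [degree_eq_natDegree hp] at h ⊢
    have := h.1
    simp only [nsmul_eq_mul] at this
    norm_cast at this ⊢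
    omega
  · rw [mem_degreeLT]
    by_cases hp : q = 0
    · simp [hp]
    rw [degree_eq_natDegree hp] at h ⊢
    have := h.2
    simp only [nsmul_eq_mul] at this
    norm_cast at this ⊢
    omega

lemma finrank_range_pairMap (n : ℕ) :
    Module.finrank K (LinearMap.range (pairMap W (n / 2 + 1) ((n + 1) / 2))) ≤ n + 1 := by
  have := (LinearMap.finrank_range_le (pairMap W (n / 2 + 1) ((n + 1) / 2)))
  refine this.trans ?_
  rw [Module.finrank_prod, (degreeLTEquiv K _).finrank_eq, (degreeLTEquiv K _).finrank_eq]
  simp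
  omega

/-- evaluation at a point -/
lemma exists_eval (x y : K) (h : W.Equation x y) :
    ∃ φ : W.CoordinateRing →ₐ[K] K, φ (CoordinateRing.mk W (C X)) = x ∧
      φ (CoordinateRing.mk W X) = y := by
  let φ : W.CoordinateRing →+* K := AdjoinRoot.lift (evalRingHom x) y
    (by rw [eval₂_evalRingHom]; exact h)
  refine ⟨⟨φ, ?_⟩, ?_, ?_⟩
  · intro r
    have : algebraMap K W.CoordinateRing r = AdjoinRoot.of W.polynomial (C r) := rfl
    change φ _ = r
    rw [this]
    simp [φ]
  · change φ (AdjoinRoot.of W.polynomial X) = x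
    simp [φ]
  · change φ (AdjoinRoot.root W.polynomial) = y
    simp [φ]

lemma card_zeros_le [Finite K] (G : W.CoordinateRing) (hG : G ≠ 0)
    (D : ℕ) (hD : ordInf W G ≤ D)
    (hz : ∀ φ : W.CoordinateRing →ₐ[K] K, φ G = 0) :
    Nat.card {P : K × K // W.Equation P.1 P.2} ≤ D := by
  choose ev hev1 hev2 using exists_eval W
  have hfin : Module.finrank K (W.CoordinateRing ⧸ Ideal.span ({G} : Set W.CoordinateRing)) =
    (Algebra.norm K[X] G).natDegree :=
    finrank_quotient_span_eq_natDegree_norm (CoordinateRing.basis W) hG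
  have hfd : FiniteDimensional K (W.CoordinateRing ⧸ Ideal.span ({G} : Set W.CoordinateRing)) := by
    have h := Ideal.span_singleton_eq_bot.not.2 hG
    exact Module.Finite.equiv
      (Ideal.quotientEquivDirectSum K (CoordinateRing.basis W) h).symm
  have h1 := card_algHom_le_finrank K
    (W.CoordinateRing ⧸ Ideal.span ({G} : Set W.CoordinateRing)) K
  have h2 : (Algebra.norm K[X] G).natDegree ≤ D := natDegree_le_of_degree_le hD
  refine le_trans ?_ (h1.trans (hfin.le.trans h2))
  let f : {P : K × K // W.Equation P.1 P.2} →
      ((W.CoordinateRing ⧸ Ideal.span ({G} : Set W.CoordinateRing)) →ₐ[K] K) :=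
    fun P => Ideal.Quotient.liftₐ _ (ev P.1.1 P.1.2 P.2) (by
      intro a ha
      obtain ⟨b, rfl⟩ := Ideal.mem_span_singleton.1 ha
      rw [map_mul, hz, zero_mul])
  have hf : ∀ P a, f P (Ideal.Quotient.mk _ a) = ev P.1.1 P.1.2 P.2 a := fun P a => rfl
  apply Nat.card_le_card_of_injective f
  intro P P' h
  apply Subtype.ext
  apply Prod.ext
  · rw [← hev1 _ _ P.2, ← hev1 _ _ P'.2, ← hf, ← hf, h]
  · rw [← hev2 _ _ P.2, ← hev2 _ _ P'.2, ← hf, ← hf, h]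

theorem stepanov [Fintype K] [CharP K 2] (i j : ℕ) (hQ : Fintype.card K = 2 ^ i * 2 ^ j)
    (hi : 16 ≤ 2 ^ i) (hij : 2 ^ i ≤ 2 ^ j) :
    Nat.card {P : K × K // W.Equation P.1 P.2} ≤ 2 ^ i * 2 ^ j + 2 ^ i + 4 * 2 ^ j := by
  classical
  have : CharP W.CoordinateRing 2 :=
    charP_of_injective_algebraMap (algebraMap K W.CoordinateRing).injective 2
  have hpow : ∀ (ι : Type) (t : Finset ι) (f : ι → W.CoordinateRing),
    (∑ a ∈ t, f a) ^ (2 ^ i) = ∑ a ∈ t, f a ^ (2 ^ i) := fun ι t f => sum_pow_char_pow 2 i t f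
  set s := 2 ^ i with hs
  set s' := 2 ^ j with hs'
  set k := s + 3 with hk
  set l := s - 2 with hl
  set n := s * (l + 1) + (k + 1) with hn
  let w : Fin k × Fin l → LinearMap.range (pairMap W (n / 2 + 1) ((n + 1) / 2)) := fun x =>
    ⟨eB W x.1 * eB W x.2 ^ s, mem_range_pairMap W (by
      rw [ordInf_mul, ordInf_pow, ordInf_eB, ordInf_eB, nsmul_eq_mul]
      have h1 := x.1.2
      have h2 := x.2.2
      norm_cast
      have : s * ((x.2 : ℕ) + 2) ≤ s * (l + 1) := Nat.mul_le_mul_left _ (by omega)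
      omega)⟩
  have hw : ¬ LinearIndependent K w := by
    intro hli
    have h1 := hli.fintype_card_le_finrank
    have h2 := finrank_range_pairMap W n
    simp only [Fintype.card_prod, Fintype.card_fin] at h1
    have h3 := h1.trans h2
    obtain ⟨r, hr⟩ : ∃ r, s = r + 2 := ⟨s - 2, by omega⟩
    have : l = r := by omega
    rw [hn, hk, this, hr] at h3
    nlinarith
  rw [Fintype.not_linearIndependent_iff] at hw
  obtain ⟨β, hβ, ⟨i₀, j₀⟩, hne⟩ := hw
  have hβ' : ∑ x : Fin k, ∑ y : Fin l, β (x, y) • (eB W x * eB W y ^ s) = 0 := by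
    have := congrArg Subtype.val hβ
    rw [← Fintype.sum_prod_type']
    simpa [w] using this
  let α : Fin k → Fin l → K := fun x y => β (x, y) ^ s'
  have hα : ∀ x y, α x y ^ s = β (x, y) := by
    intro x y
    simp only [α]
    rw [← pow_mul, mul_comm, ← hQ, FiniteField.pow_card]
  let a : Fin k → W.CoordinateRing := fun x => ∑ y : Fin l, α x y • eB W y
  have hsm : ∀ (c : K) (f : W.CoordinateRing), c ≠ 0 → ordInf W (c • f) = ordInf W f := by
    intro c f hc
    have h1 : ∀ c : K, ordInf W (algebraMap K _ c) ≤ 0 := by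
      intro c
      have : algebraMap K W.CoordinateRing c =
        (C c : K[X]) • (1 : W.CoordinateRing) + (0 : K[X]) • CoordinateRing.mk W X := by
        rw [zero_smul, add_zero, ← Algebra.algebraMap_eq_smul_one]; rfl
      rw [this, ordInf_smul_basis]
      apply max_le
      · have := degree_C_le (a := c)
        simpa using (nsmul_le_nsmul_right this 2)
      · simp
    have h2 : ∀ (c : K) (f), ordInf W (c • f) ≤ ordInf W f := by
      intro c f
      rw [Algebra.smul_def, ordInf_mul]
      simpa using add_le_add_left (h1 c) (ordInf W f)
    refine le_antisymm (h2 c f) ?_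
    conv_lhs => rw [← inv_smul_smul₀ hc f]
    exact h2 _ _
  have ha_le : ∀ x, ordInf W (a x) ≤ ((l + 1 : ℕ) : WithBot ℕ) := by
    intro x
    apply ordInf_sum_le
    intro y _
    by_cases h0 : α x y = 0
    · rw [h0, zero_smul, ordInf_zero]; exact bot_le
    · rw [hsm _ _ h0, ordInf_eB]
      have := y.2
      norm_cast
      omega
  have heB0 : ∀ n, eB W n ≠ 0 := by
    intro n h
    have := ordInf_eB W n
    rw [h, ordInf_zero] at this
    exact absurd this (WithBot.bot_ne_coe)
  have ha_ne : a i₀ ≠ 0 := by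
    apply sum_ne_zero_of_ordInf
    · intro y _ y' _ hy hy' h
      have h1 : α i₀ y ≠ 0 := fun h => hy (by rw [h, zero_smul])
      have h2 : α i₀ y' ≠ 0 := fun h => hy' (by rw [h, zero_smul])
      rw [hsm _ _ h1, hsm _ _ h2, ordInf_eB, ordInf_eB] at h
      norm_cast at h
      exact Fin.ext (by omega)
    · refine ⟨j₀, Finset.mem_univ _, smul_ne_zero ?_ (heB0 _)⟩
      exact pow_ne_zero _ hne
  let G : W.CoordinateRing := ∑ x : Fin k, a x * eB W x ^ s'
  have hG : G ≠ 0 := by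
    apply sum_ne_zero_of_ordInf
    · intro x _ x' _ hx hx' h
      have h1 : a x ≠ 0 := fun h => hx (by rw [h, zero_mul])
      have h2 : a x' ≠ 0 := fun h => hx' (by rw [h, zero_mul])
      rw [ordInf_mul, ordInf_mul, ordInf_pow, ordInf_pow, ordInf_eB, ordInf_eB] at h
      have b1 := ha_le x
      have b2 := ha_le x'
      rw [ne_eq, ← ordInf_eq_bot W] at h1 h2
      obtain ⟨u, hu⟩ : ∃ u : ℕ, (Nat.cast u : WithBot ℕ) = ordInf W (a x) := WithBot.ne_bot_iff_exists.1 h1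
      obtain ⟨u', hu'⟩ : ∃ u : ℕ, (Nat.cast u : WithBot ℕ) = ordInf W (a x') := WithBot.ne_bot_iff_exists.1 h2
      rw [← hu] at h b1
      rw [← hu'] at h b2
      simp only [nsmul_eq_mul] at h
      have b1' : u ≤ l + 1 := by exact_mod_cast b1
      have b2' : u' ≤ l + 1 := by exact_mod_cast b2
      have h' : u + s' * ((x : ℕ) + 2) = u' + s' * ((x' : ℕ) + 2) := by exact_mod_cast h
      have c1 : u < s' := by omega
      have c2 : u' < s' := by omega
      have := congrArg (· / s') h'
      simp only [Nat.add_mul_div_left _ _ (show 0 < s' by omega), Nat.div_eq_of_lt c1,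
        Nat.div_eq_of_lt c2] at this
      exact Fin.ext (by omega)
    · exact ⟨i₀, Finset.mem_univ _, mul_ne_zero ha_ne (pow_ne_zero _ (heB0 _))⟩
  have hGD : ordInf W G ≤ ((s * s' + s + 4 * s' : ℕ) : WithBot ℕ) := by
    apply ordInf_sum_le
    intro x _
    rw [ordInf_mul, ordInf_pow, ordInf_eB]
    refine (add_le_add_left (ha_le x) _).trans ?_
    simp only [nsmul_eq_mul]
    have := x.2
    norm_cast
    have h3 : s' * ((x : ℕ) + 2) ≤ s' * (s + 4) := Nat.mul_le_mul_left _ (by omega)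
    have h4 : s' * (s + 4) = s * s' + 4 * s' := by ring
    omega
  refine card_zeros_le W G hG _ hGD ?_
  intro φ
  have hs0 : s ≠ 0 := by omega
  refine eq_zero_of_pow_eq_zero (n := s) ?_
  rw [← map_pow]
  have : G ^ s = ∑ x : Fin k, ∑ y : Fin l, β (x, y) • (eB W x ^ (s * s') * eB W y ^ s) := by
    simp only [G]
    have := sum_pow_char_pow 2 i Finset.univ (fun x : Fin k => a x * eB W x ^ s')
    rw [← hs] at this
    rw [this]
    refine Finset.sum_congr rfl fun x _ => ?_
    have h2 := sum_pow_char_pow 2 i Finset.univ (fun y : Fin l => α x y • eB W y)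
    rw [← hs] at h2
    rw [mul_pow, h2, Finset.sum_mul]
    refine Finset.sum_congr rfl fun y _ => ?_
    rw [_root_.smul_pow, hα, smul_mul_assoc, ← pow_mul, mul_comm s' s, mul_comm (eB W y ^ s)]
  have h0 := congrArg φ hβ'
  rw [map_zero] at h0
  rw [this, ← h0, map_sum, map_sum]
  refine Finset.sum_congr rfl fun x _ => ?_
  rw [map_sum, map_sum]
  refine Finset.sum_congr rfl fun y _ => ?_
  rw [map_smul, map_smul, map_mul, map_mul, map_pow φ (eB W x), ← hQ, FiniteField.pow_card]

end Stepanov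


section Count

theorem stepanov_real {K : Type*} [Field K] [Fintype K] [CharP K 2] (W : WeierstrassCurve.Affine K) :
    (Nat.card {P : K × K // W.Equation P.1 P.2} : ℝ) ≤
      Fintype.card K + 2000 * √(Fintype.card K) := by
  obtain ⟨m, -, hm⟩ := FiniteField.card K 2
  have hm2 : Fintype.card K = 2 ^ ((m : ℕ) / 2) * 2 ^ ((m : ℕ) - m / 2) := by
    rw [hm, ← pow_add]; congr 1; omega
  have hQ0 : (0 : ℝ) ≤ Fintype.card K := by positivity
  have hsq := Real.sq_sqrt hQ0
  have hsq0 := Real.sqrt_nonneg (Fintype.card K : ℝ)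
  by_cases h : 4 ≤ (m : ℕ) / 2
  · have h1 := stepanov W ((m : ℕ) / 2) ((m : ℕ) - m / 2) hm2
      (by calc 16 = 2 ^ 4 := by norm_num
          _ ≤ _ := Nat.pow_le_pow_right (by norm_num) h)
      (Nat.pow_le_pow_right (by norm_num) (by omega))
    have h2 : 2 ^ ((m : ℕ) - m / 2) ≤ 2 * 2 ^ ((m : ℕ) / 2) := by
      rw [← pow_succ']
      exact Nat.pow_le_pow_right (by norm_num) (by omega)
    have h3 : (2 : ℝ) ^ ((m : ℕ) / 2) ≤ √(Fintype.card K) := by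
      apply Real.le_sqrt_of_sq_le
      rw [hm, ← pow_mul]
      push_cast
      exact pow_le_pow_right₀ (by norm_num) (by omega)
    rw [← hm2] at h1
    have h1' : (Nat.card {P : K × K // W.Equation P.1 P.2} : ℝ) ≤
      Fintype.card K + 2 ^ ((m : ℕ) / 2) + 4 * 2 ^ ((m : ℕ) - m / 2) := by exact_mod_cast h1
    have h2' : (2 : ℝ) ^ ((m : ℕ) - m / 2) ≤ 2 * 2 ^ ((m : ℕ) / 2) := by exact_mod_cast h2
    linarith
  · have h1 : Nat.card {P : K × K // W.Equation P.1 P.2} ≤ Fintype.card K * Fintype.card K := by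
      rw [← Fintype.card_prod, ← Nat.card_eq_fintype_card]
      exact Nat.card_le_card_of_injective _ Subtype.val_injective
    have h2 : Fintype.card K ≤ 128 := by
      rw [hm]
      calc 2 ^ (m : ℕ) ≤ 2 ^ 7 := Nat.pow_le_pow_right (by norm_num) (by omega)
        _ = 128 := by norm_num
    have h1' : (Nat.card {P : K × K // W.Equation P.1 P.2} : ℝ) ≤ Fintype.card K * Fintype.card K := by
      exact_mod_cast h1
    have h2' : (Fintype.card K : ℝ) ≤ 128 := by exact_mod_cast h2
    have h3 : √(Fintype.card K : ℝ) ≤ 12 := by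
      rw [Real.sqrt_le_left (by norm_num)]; linarith
    set t := √(Fintype.card K : ℝ)
    rw [← hsq] at h2' h1' ⊢
    have h5 : t ^ 2 * t ≤ 128 * 12 := by nlinarith
    have h6 : t ^ 2 * t ^ 2 ≤ 128 * 12 * t := by nlinarith
    nlinarith

open Classical in
lemma fiber_two {K : Type*} [Field K] [Fintype K] [CharP K 2] (e : K) (he : ∀ t : K, t ^ 2 + t ≠ e)
    (A B : K) :
    (Finset.univ.filter fun y : K => y ^ 2 + B * y = A).card +
      (Finset.univ.filter fun y : K => y ^ 2 + B * y = A + e * B ^ 2).card = 2 := by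
  have h2 : (2 : K) = 0 := CharP.cast_eq_zero K 2
  have hsqinj : ∀ x y : K, x ^ 2 = y ^ 2 → x = y := by
    intro x y h
    have : (x - y) ^ 2 = 0 := by linear_combination h - (x - y) * y * h2
    exact sub_eq_zero.1 (eq_zero_of_pow_eq_zero this)
  by_cases hB : B = 0
  · subst hB
    have hsq : ∀ A : K, (Finset.univ.filter fun y : K => y ^ 2 = A).card = 1 := by
      intro A
      rw [Finset.card_eq_one]
      obtain ⟨y, hy⟩ := FiniteField.isSquare_of_char_two (ringChar.eq K 2) A
      refine ⟨y, ?_⟩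
      ext z
      simp only [Finset.mem_filter, Finset.mem_univ, true_and, Finset.mem_singleton]
      constructor
      · intro h; exact hsqinj _ _ (by rw [h, hy, sq])
      · rintro rfl; rw [hy, sq]
    simp [hsq]
  · have hfib : ∀ A y₀ : K, y₀ ^ 2 + B * y₀ = A →
        (Finset.univ.filter fun y : K => y ^ 2 + B * y = A).card = 2 := by
      intro A y₀ h
      rw [Finset.card_eq_two]
      refine ⟨y₀, y₀ + B, by simpa using hB, ?_⟩
      ext z
      simp only [Finset.mem_filter, Finset.mem_univ, true_and, Finset.mem_singleton,
        Finset.mem_insert]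
      constructor
      · intro hz
        have : (z - y₀) * (z - (y₀ + B)) = 0 := by
          linear_combination hz - h + (- z * y₀ + y₀ ^ 2 + B * y₀ - B * z) * h2
        rcases mul_eq_zero.1 this with h | h
        · left; exact sub_eq_zero.1 h
        · right; exact sub_eq_zero.1 h
      · rintro (rfl | rfl)
        · exact h
        · linear_combination h + (B * y₀ + B ^ 2) * h2
    have hemp : ∀ A : K, (¬ ∃ y, y ^ 2 + B * y = A) →
        (Finset.univ.filter fun y : K => y ^ 2 + B * y = A).card = 0 := by
      intro A h
      rw [Finset.card_eq_zero, Finset.filter_eq_empty_iff]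
      intro y _ hy
      exact h ⟨y, hy⟩
    let φ : K →+ K :=
      { toFun := fun y => y ^ 2 + B * y
        map_zero' := by simp
        map_add' := fun x y => by linear_combination x * y * h2 }
    have hφ : ∀ y, φ y = y ^ 2 + B * y := fun y => rfl
    have hker : Nat.card φ.ker = 2 := by
      have := hfib 0 0 (by simp)
      rw [← this, ← Fintype.card_subtype, ← Nat.card_eq_fintype_card]
      rfl
    have hidx : φ.range.index = 2 := by
      have h1 := φ.ker.card_mul_index
      have h3 := φ.range.card_mul_index
      rw [AddSubgroup.index_ker, hker] at h1
      rw [← h1, mul_comm] at h3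
      exact Nat.eq_of_mul_eq_mul_right Nat.card_pos h3
    have heB : e * B ^ 2 ∉ φ.range := by
      rintro ⟨y, hy⟩
      rw [hφ] at hy
      apply he (y / B)
      field_simp
      linear_combination hy
    have hiff := AddSubgroup.add_mem_iff_of_index_two hidx (a := A) (b := e * B ^ 2)
    by_cases hA : A ∈ φ.range
    · have hA2 : A + e * B ^ 2 ∉ φ.range := by tauto
      obtain ⟨y, hy⟩ := hA
      rw [hfib A y hy, hemp]
      rintro ⟨z, hz⟩
      exact hA2 ⟨z, hz⟩
    · have hA2 : A + e * B ^ 2 ∈ φ.range := by tauto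
      obtain ⟨y, hy⟩ := hA2
      rw [hfib _ y hy, hemp]
      rintro ⟨z, hz⟩
      exact hA ⟨z, hz⟩

open Classical in
lemma card_curve {K : Type*} [Field K] [Fintype K] [CharP K 2] (a d : K) :
    |((Finset.univ.filter fun P : K × K => P.2 ^ 2 + (a * P.1 + d) * P.2 = P.1 ^ 3).card : ℝ)
      - Fintype.card K| ≤ 2000 * √(Fintype.card K) := by
  have h2 : (2 : K) = 0 := CharP.cast_eq_zero K 2
  obtain ⟨e, he⟩ : ∃ e : K, ∀ t : K, t ^ 2 + t ≠ e := by
    by_contra! hcon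
    have hinj := Finite.injective_iff_surjective.2 (fun e => hcon e : Function.Surjective
      (fun t : K => t ^ 2 + t))
    have : (0 : K) = 1 := hinj (by simp only; linear_combination -h2)
    exact zero_ne_one this
  have hcard : ∀ A B : K → K, (Finset.univ.filter fun P : K × K => P.2 ^ 2 + B P.1 * P.2 = A P.1).card
      = ∑ x : K, (Finset.univ.filter fun y : K => y ^ 2 + B x * y = A x).card := by
    intro A B
    simp only [Finset.card_filter]
    rw [Fintype.sum_prod_type]
  have hsum := hcard (fun x => x ^ 3) (fun x => a * x + d)
  have hsum' := hcard (fun x => x ^ 3 + e * (a * x + d) ^ 2) (fun x => a * x + d)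
  have htot : (Finset.univ.filter fun P : K × K => P.2 ^ 2 + (a * P.1 + d) * P.2 = P.1 ^ 3).card +
      (Finset.univ.filter fun P : K × K => P.2 ^ 2 + (a * P.1 + d) * P.2 =
        P.1 ^ 3 + e * (a * P.1 + d) ^ 2).card = 2 * Fintype.card K := by
    rw [hsum, hsum', ← Finset.sum_add_distrib]
    simp only [fiber_two e he]
    simp [mul_comm]
  have hW := stepanov_real (⟨a, 0, d, 0, 0⟩ : WeierstrassCurve.Affine K)
  have hW' := stepanov_real (⟨a, e * a ^ 2, d, 0, e * d ^ 2⟩ : WeierstrassCurve.Affine K)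
  have e1 : Nat.card {P : K × K // WeierstrassCurve.Affine.Equation
      (⟨a, 0, d, 0, 0⟩ : WeierstrassCurve.Affine K) P.1 P.2} =
      (Finset.univ.filter fun P : K × K => P.2 ^ 2 + (a * P.1 + d) * P.2 = P.1 ^ 3).card := by
    rw [Nat.card_eq_fintype_card, Fintype.card_subtype]
    congr 1
    ext P
    simp only [WeierstrassCurve.Affine.equation_iff, Finset.mem_filter, Finset.mem_univ, true_and]
    constructor <;> intro h <;> linear_combination h
  have e2 : Nat.card {P : K × K // WeierstrassCurve.Affine.Equation
      (⟨a, e * a ^ 2, d, 0, e * d ^ 2⟩ : WeierstrassCurve.Affine K) P.1 P.2} =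
      (Finset.univ.filter fun P : K × K => P.2 ^ 2 + (a * P.1 + d) * P.2 =
        P.1 ^ 3 + e * (a * P.1 + d) ^ 2).card := by
    rw [Nat.card_eq_fintype_card, Fintype.card_subtype]
    congr 1
    ext P
    simp only [WeierstrassCurve.Affine.equation_iff, Finset.mem_filter, Finset.mem_univ, true_and]
    constructor <;> intro h
    · linear_combination h - e * a * d * P.1 * h2
    · linear_combination h + e * a * d * P.1 * h2
  rw [e1] at hW
  rw [e2] at hW'
  have htot' : ((Finset.univ.filter fun P : K × K => P.2 ^ 2 + (a * P.1 + d) * P.2 = P.1 ^ 3).card : ℝ) +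
      (Finset.univ.filter fun P : K × K => P.2 ^ 2 + (a * P.1 + d) * P.2 =
        P.1 ^ 3 + e * (a * P.1 + d) ^ 2).card = 2 * Fintype.card K := by exact_mod_cast htot
  rw [abs_le]
  constructor <;> linarith

open Classical in
lemma card_T {K : Type*} [Field K] [Fintype K] [CharP K 2] (a d : K) (hd : d ≠ 0) :
    (Finset.univ.filter fun P : K × K => P.1 * P.2 * (P.1 + P.2 + a) = d).card + 2 =
    (Finset.univ.filter fun P : K × K => P.2 ^ 2 + (a * P.1 + d) * P.2 = P.1 ^ 3).card := by
  have h2 : (2 : K) = 0 := CharP.cast_eq_zero K 2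
  rw [← Finset.card_filter_add_card_filter_not (s := Finset.univ.filter fun P : K × K =>
    P.2 ^ 2 + (a * P.1 + d) * P.2 = P.1 ^ 3) (fun P => P.1 ≠ 0)]
  congr 1
  · refine Finset.card_bij' (fun P _ => (d / P.1, d * P.2 / P.1)) (fun P _ => (d / P.1, P.2 / P.1))
      ?_ ?_ ?_ ?_
    · rintro ⟨u, v⟩ h
      simp only [Finset.mem_filter, Finset.mem_univ, true_and] at h ⊢
      have hu : u ≠ 0 := by rintro rfl; apply hd; rw [← h]; ring
      refine ⟨?_, div_ne_zero hd hu⟩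
      field_simp
      linear_combination h
    · rintro ⟨x, y⟩ h
      simp only [Finset.mem_filter, Finset.mem_univ, true_and] at h ⊢
      obtain ⟨h, hx⟩ := h
      field_simp
      linear_combination h
    · rintro ⟨u, v⟩ h
      simp only [Finset.mem_filter, Finset.mem_univ, true_and] at h ⊢
      have hu : u ≠ 0 := by rintro rfl; apply hd; rw [← h]; ring
      ext <;> simp <;> field_simp
    · rintro ⟨x, y⟩ h
      simp only [Finset.mem_filter, Finset.mem_univ, true_and] at h ⊢
      obtain ⟨h, hx⟩ := h
      ext <;> simp <;> field_simp
  · symm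
    rw [Finset.card_eq_two]
    refine ⟨(0, 0), (0, d), by simp [hd.symm], ?_⟩
    ext ⟨x, y⟩
    simp only [Finset.mem_filter, Finset.mem_univ, true_and, Finset.mem_insert,
      Finset.mem_singleton, Prod.mk.injEq, not_not]
    constructor
    · rintro ⟨h, rfl⟩
      have : y * (y + d) = 0 := by linear_combination h
      rcases mul_eq_zero.1 this with h | h
      · left; exact ⟨rfl, h⟩
      · right; refine ⟨rfl, ?_⟩; linear_combination h - d * h2
    · rintro (⟨rfl, rfl⟩ | ⟨rfl, rfl⟩)
      · simp
      · refine ⟨?_, rfl⟩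
        linear_combination y ^ 2 * h2

open Classical in
lemma count_noroot {K : Type*} [Field K] [Fintype K] [CharP K 2] (a d : K) (hd : d ≠ 0) :
    |3 * ((Finset.univ.filter fun α : K => ∀ u : K, u ^ 3 + a * u ^ 2 + α * u + d ≠ 0).card : ℝ)
      - Fintype.card K| ≤ 2010 * √(Fintype.card K) := by
  have h2 : (2 : K) = 0 := CharP.cast_eq_zero K 2
  set R : K → K := fun u => u ^ 2 + a * u + d / u with hR
  set U : Finset K := Finset.univ.filter (· ≠ 0) with hU
  set fib : K → Finset K := fun α => U.filter (fun u => R u = α) with hfibdef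
  have hmemU : ∀ u, u ∈ U ↔ u ≠ 0 := by simp [hU]
  have hmemF : ∀ α u, u ∈ fib α ↔ u ≠ 0 ∧ R u = α := by simp [hfibdef, hU]
  -- the key identity
  have hkey : ∀ u v : K, u ≠ 0 → v ≠ 0 → u ≠ v → (R u = R v ↔ u * v * (u + v + a) = d) := by
    intro u v hu hv huv
    have huv' : u - v ≠ 0 := sub_ne_zero.2 huv
    simp only [hR]
    constructor
    · intro h
      field_simp at h
      apply mul_left_cancel₀ huv'
      linear_combination h
    · intro h
      field_simp
      linear_combination (u - v) * h
  have hT0 : ∀ u v : K, u * v * (u + v + a) = d → u ≠ 0 ∧ v ≠ 0 ∧ u + v + a ≠ 0 := by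
    intro u v h
    refine ⟨?_, ?_, ?_⟩ <;> intro h0 <;> apply hd <;> rw [← h, h0] <;> ring
  have hthird : ∀ α u v, u ∈ fib α → v ∈ fib α → u ≠ v → u + v + a ∈ fib α := by
    intro α u v hu hv huv
    rw [hmemF] at hu hv
    have h := (hkey u v hu.1 hv.1 huv).1 (hu.2.trans hv.2.symm)
    have h0 := hT0 u v h
    by_cases hw : u + v + a = u
    · rw [hw, hmemF]; exact hu
    rw [hmemF]
    refine ⟨h0.2.2, ?_⟩
    rw [← hu.2]
    rw [hkey _ _ h0.2.2 hu.1 hw]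
    linear_combination h + (u + v + a) * u * (u + a) * h2
  have hsub : ∀ α u v, u ∈ fib α → v ∈ fib α → u ≠ v → fib α ⊆ {u, v, u + v + a} := by
    intro α u v hu hv huv z hz
    by_cases hzu : z = u
    · simp [hzu]
    rw [hmemF] at hu hv hz
    have h := (hkey u v hu.1 hv.1 huv).1 (hu.2.trans hv.2.symm)
    have h' := (hkey u z hu.1 hz.1 (Ne.symm hzu)).1 (hu.2.trans hz.2.symm)
    have : u * ((z - v) * (z - (u + v + a))) = 0 := by
      linear_combination h' - h - u * (z - v) * (u + a + v) * h2
    simp only [mul_eq_zero, hu.1, false_or, sub_eq_zero] at this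
    simp only [Finset.mem_insert, Finset.mem_singleton]
    tauto
  have hle3 : ∀ α, (fib α).card ≤ 3 := by
    intro α
    by_cases h1 : (fib α).card ≤ 1
    · omega
    · obtain ⟨u, hu, v, hv, huv⟩ := Finset.one_lt_card.1 (not_le.1 h1)
      exact (Finset.card_le_card (hsub α u v hu hv huv)).trans Finset.card_le_three
  have htwo : ∀ α, (fib α).card = 2 → α = R a := by
    intro α h
    obtain ⟨u, v, huv, hset⟩ := Finset.card_eq_two.1 h
    have hu : u ∈ fib α := by simp [hset]
    have hv : v ∈ fib α := by simp [hset]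
    have hw := hthird α u v hu hv huv
    rw [hset, Finset.mem_insert, Finset.mem_singleton] at hw
    rcases hw with hw | hw
    · have : v = a := by linear_combination hw - a * h2
      rw [← this]; exact ((hmemF _ _).1 hv).2.symm
    · have : u = a := by linear_combination hw - a * h2
      rw [← this]; exact ((hmemF _ _).1 hu).2.symm
  have hUcard : U.card + 1 = Fintype.card K := by
    rw [hU, Finset.filter_ne', Finset.card_erase_of_mem (Finset.mem_univ _), Finset.card_univ]
    have : 0 < Fintype.card K := Fintype.card_pos
    omega
  have hsum1 : ∑ α, (fib α).card = U.card :=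
    (Finset.card_eq_sum_card_fiberwise (f := R) (s := U) (t := Finset.univ) (by simp)).symm
  set T := Finset.univ.filter fun P : K × K => P.1 * P.2 * (P.1 + P.2 + a) = d with hTdef
  set Pr := (U ×ˢ U).filter (fun P => R P.1 = R P.2) with hPr
  have hsum2 : ∑ α, (fib α).card ^ 2 = Pr.card := by
    rw [Finset.card_eq_sum_card_fiberwise (f := fun P : K × K => R P.1) (s := Pr)
      (t := Finset.univ) (by simp)]
    refine Finset.sum_congr rfl fun α _ => ?_
    rw [sq, ← Finset.card_product]
    congr 1
    ext ⟨u, v⟩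
    simp only [hPr, Finset.mem_product, hmemF, Finset.mem_filter, hmemU]
    constructor
    · rintro ⟨⟨h1, h3⟩, h4, h5⟩
      exact ⟨⟨⟨h1, h4⟩, h3.trans h5.symm⟩, h3⟩
    · rintro ⟨⟨⟨h1, h4⟩, h5⟩, h3⟩
      exact ⟨⟨h1, h3⟩, h4, h5.symm.trans h3⟩
  have hPrc : Pr.card = U.card + (T.filter (fun P => ¬ P.1 = P.2)).card := by
    rw [← Finset.card_filter_add_card_filter_not (s := Pr) (fun P => P.1 = P.2)]
    congr 1
    · symm
      refine Finset.card_bij' (fun u _ => (u, u)) (fun P _ => P.1) ?_ ?_ ?_ ?_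
      · intro u hu; simp [hPr, hu]
      · rintro ⟨u, v⟩ h
        simp only [hPr, Finset.mem_filter, Finset.mem_product] at h
        exact h.1.1.1
      · intros; rfl
      · rintro ⟨u, v⟩ h
        simp only [Finset.mem_filter] at h
        ext
        · rfl
        · exact h.2
    · congr 1
      ext ⟨u, v⟩
      simp only [hPr, hTdef, Finset.mem_product, Finset.mem_filter, hmemU, Finset.mem_univ,
        true_and]
      constructor
      · rintro ⟨⟨⟨hu, hv⟩, h⟩, huv⟩
        exact ⟨(hkey u v hu hv huv).1 h, huv⟩
      · rintro ⟨h, huv⟩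
        have h0 := hT0 u v h
        exact ⟨⟨⟨h0.1, h0.2.1⟩, (hkey u v h0.1 h0.2.1 huv).2 h⟩, huv⟩
  have hdiag : (T.filter (fun P => P.1 = P.2)).card ≤ 1 := by
    rw [Finset.card_le_one]
    rintro ⟨u, v⟩ h ⟨u', v'⟩ h'
    simp only [hTdef, Finset.mem_filter, Finset.mem_univ, true_and] at h h'
    obtain ⟨h, rfl⟩ := h
    obtain ⟨h', rfl⟩ := h'
    have ha : a ≠ 0 := by
      rintro rfl
      apply hd
      rw [← h]
      linear_combination u ^ 3 * h2
    have : a * (u - u') ^ 2 = 0 := by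
      linear_combination h - h' + (-u ^ 3 + u' ^ 3 - a * u * u' + a * u' ^ 2) * h2
    have := eq_zero_of_pow_eq_zero ((mul_eq_zero.1 this).resolve_left ha)
    rw [sub_eq_zero.1 this]
  have hTsplit := Finset.card_filter_add_card_filter_not (s := T) (fun P : K × K => P.1 = P.2)
  have hN0 : (Finset.univ.filter fun α : K => ∀ u : K, u ^ 3 + a * u ^ 2 + α * u + d ≠ 0) =
      Finset.univ.filter fun α : K => (fib α).card = 0 := by
    ext α
    simp only [Finset.mem_filter, Finset.mem_univ, true_and, Finset.card_eq_zero]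
    rw [Finset.eq_empty_iff_forall_notMem]
    refine forall_congr' fun u => not_congr ?_
    rw [hmemF]
    simp only [hR]
    constructor
    · intro h
      have hu : u ≠ 0 := by rintro rfl; apply hd; rw [← h]; ring
      refine ⟨hu, ?_⟩
      field_simp
      linear_combination h - u * α * h2
    · rintro ⟨hu, h⟩
      field_simp at h
      linear_combination h + u * α * h2
  set N2 := (Finset.univ.filter fun α : K => (fib α).card = 2).card with hN2def
  have hN2 : N2 ≤ 1 := by
    rw [hN2def, Finset.card_le_one]
    intro x hx y hy
    simp only [Finset.mem_filter, Finset.mem_univ, true_and] at hx hy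
    rw [htwo x hx, htwo y hy]
  have hpt : ∀ α, 3 * (if (fib α).card = 0 then 1 else 0) + 4 * (fib α).card =
      3 + (fib α).card ^ 2 + (if (fib α).card = 2 then 1 else 0) := by
    intro α
    have := hle3 α
    interval_cases (fib α).card <;> simp
  have htotal := Finset.sum_congr (s₁ := (Finset.univ : Finset K)) rfl (fun α _ => hpt α)
  rw [Finset.sum_add_distrib, Finset.sum_add_distrib, Finset.sum_add_distrib, ← Finset.mul_sum,
    ← Finset.mul_sum, hsum1, hsum2, ← Finset.card_filter, ← Finset.card_filter, ← hN0,
    ← hN2def, hPrc] at htotal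
  simp only [Finset.sum_const, Finset.card_univ, smul_eq_mul] at htotal
  have hTc := card_T a d hd
  rw [← hTdef] at hTc
  have hC := card_curve a d
  rw [← hTc] at hC
  have hQ1 : (1 : ℝ) ≤ √(Fintype.card K) := by
    rw [Real.one_le_sqrt]
    exact_mod_cast (Fintype.card_pos : 0 < Fintype.card K)
  set N0 := (Finset.univ.filter fun α : K => ∀ u : K, u ^ 3 + a * u ^ 2 + α * u + d ≠ 0).card
  have hub : 3 * N0 ≤ T.card + 4 := by omega
  have hlb : T.card ≤ 3 * N0 + 1 := by omega
  have hub' : 3 * (N0 : ℝ) ≤ T.card + 4 := by exact_mod_cast hub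
  have hlb' : (T.card : ℝ) ≤ 3 * N0 + 1 := by exact_mod_cast hlb
  push_cast at hC
  rw [abs_le] at hC ⊢
  constructor <;> linarith [hC.1, hC.2]

end Count


section FieldTheory

lemma ratTransform_monic {F : Type*} [Field F] (g h f : F[X]) (hg : g.Monic) (hg3 : g.natDegree = 3)
    (hh1 : h.natDegree = 1) (hf : f.Monic) :
    (ratTransform g h f).Monic ∧ (ratTransform g h f).natDegree = 3 * f.natDegree := by
  unfold ratTransform
  rw [Finset.sum_range_succ, hf.coeff_natDegree]
  simp only [map_one, one_mul, Nat.sub_self, pow_zero, mul_one]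
  have hgn : (g ^ f.natDegree).Monic := hg.pow _
  have hgd : (g ^ f.natDegree).natDegree = 3 * f.natDegree := by
    rw [hg.natDegree_pow, hg3, mul_comm]
  have hlt : (∑ x ∈ Finset.range f.natDegree, C (f.coeff x) * g ^ x * h ^ (f.natDegree - x)).degree
      < (g ^ f.natDegree).degree := by
    rw [degree_eq_natDegree hgn.ne_zero, hgd]
    refine (degree_sum_le _ _).trans_lt ?_
    rw [Finset.sup_lt_iff (WithBot.bot_lt_coe _)]
    intro i hi
    rw [Finset.mem_range] at hi
    refine degree_le_natDegree.trans_lt ?_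
    have h1 : (C (f.coeff i) * g ^ i * h ^ (f.natDegree - i)).natDegree ≤
        3 * i + (f.natDegree - i) := by
      refine natDegree_mul_le.trans (add_le_add ?_ ?_)
      · refine (natDegree_C_mul_le _ _).trans ?_
        rw [hg.natDegree_pow, hg3, mul_comm]
      · refine natDegree_pow_le.trans ?_
        rw [hh1, mul_one]
    have : (C (f.coeff i) * g ^ i * h ^ (f.natDegree - i)).natDegree < 3 * f.natDegree := by omega
    exact_mod_cast this
  refine ⟨?_, ?_⟩
  · rw [add_comm]; exact hgn.add_of_left hlt
  · rw [natDegree_add_eq_right_of_degree_lt hlt, hgd]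

lemma aeval_ratTransform {F L : Type*} [Field F] [Field L] [Algebra F L] (g h f : F[X]) (β : L)
    (hβ : aeval β h ≠ 0) :
    aeval β (ratTransform g h f) = (aeval β h) ^ f.natDegree * aeval (aeval β g / aeval β h) f := by
  unfold ratTransform
  rw [map_sum, aeval_eq_sum_range (p := f), Finset.mul_sum]
  refine Finset.sum_congr rfl fun i hi => ?_
  rw [Finset.mem_range] at hi
  simp only [map_mul, map_pow, aeval_C, Algebra.smul_def]
  obtain ⟨k, hk⟩ : ∃ k, f.natDegree = i + k := ⟨f.natDegree - i, by omega⟩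
  rw [hk, Nat.add_sub_cancel_left, pow_add, div_pow]
  field_simp

lemma aeval_ratTransform_zero {F L : Type*} [Field F] [Field L] [Algebra F L] (g h f : F[X]) (β : L)
    (hf : f.Monic) (hβ : aeval β h = 0) :
    aeval β (ratTransform g h f) = (aeval β g) ^ f.natDegree := by
  unfold ratTransform
  rw [Finset.sum_range_succ, hf.coeff_natDegree, map_add, map_sum, Finset.sum_eq_zero]
  · simp
  · intro i hi
    rw [Finset.mem_range] at hi
    rw [map_mul, map_pow, hβ, zero_pow (by omega), mul_zero]

lemma exists_algHom_of_root {F K L : Type*} [Field F] [Field K] [Algebra F K] [FiniteDimensional F K]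
    [Field L] [Algebra F L] (α : K) (hα : (minpoly F α).natDegree = Module.finrank F K) (γ : L)
    (hγ : aeval γ (minpoly F α) = 0) : ∃ φ : K →ₐ[F] L, φ α = γ := by
  have hintg : IsIntegral F α := Algebra.IsIntegral.isIntegral α
  have : Fact (Irreducible (minpoly F α)) := ⟨minpoly.irreducible hintg⟩
  let ψ : AdjoinRoot (minpoly F α) →ₐ[F] K := AdjoinRoot.liftAlgHom _ (Algebra.ofId F K) α
    (by exact minpoly.aeval F α)
  have hinj : Function.Injective ψ.toLinearMap := ψ.toRingHom.injective
  have hfd : FiniteDimensional F (AdjoinRoot (minpoly F α)) :=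
    (AdjoinRoot.powerBasis (minpoly.ne_zero hintg)).finite
  have hfr : Module.finrank F (AdjoinRoot (minpoly F α)) = Module.finrank F K := by
    rw [(AdjoinRoot.powerBasis (minpoly.ne_zero hintg)).finrank, AdjoinRoot.powerBasis_dim, hα]
  have hsurj : Function.Surjective ψ.toLinearMap :=
    (LinearMap.injective_iff_surjective_of_finrank_eq_finrank hfr).1 hinj
  let e := AlgEquiv.ofBijective ψ ⟨hinj, hsurj⟩
  let χ : AdjoinRoot (minpoly F α) →ₐ[F] L := AdjoinRoot.liftAlgHom _ (Algebra.ofId F L) γ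
    (by exact hγ)
  refine ⟨χ.comp e.symm.toAlgHom, ?_⟩
  have : e (AdjoinRoot.root _) = α := by
    refine (AlgEquiv.ofBijective_apply _ _ _).trans ?_
    exact AdjoinRoot.liftAlgHom_root _ _ _ _
  have hs : e.symm α = AdjoinRoot.root _ := (AlgEquiv.symm_apply_eq e).2 this.symm
  change χ (e.symm α) = γ
  rw [hs]
  exact AdjoinRoot.liftAlgHom_root _ _ _ _

lemma irreducible_ratTransform_iff {F K : Type*} [Field F] [Field K] [Algebra F K]
    [FiniteDimensional F K] (g h : F[X]) (hg : g.Monic) (hg3 : g.natDegree = 3)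
    (hh1 : h.natDegree = 1) (hcop : IsCoprime g h)
    (α : K) (hα : (minpoly F α).natDegree = Module.finrank F K) :
    Irreducible (ratTransform g h (minpoly F α)) ↔
      ∀ β : K, aeval β g ≠ α * aeval β h := by
  have hintg : IsIntegral F α := Algebra.IsIntegral.isIntegral α
  have hfm := minpoly.monic hintg
  obtain ⟨hRm, hRd⟩ := ratTransform_monic g h (minpoly F α) hg hg3 hh1 hfm
  have hnpos : 0 < Module.finrank F K := Module.finrank_pos
  rw [hα] at hRd
  constructor
  · intro hirr β hβ
    have hh0 : aeval β h ≠ 0 := by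
      intro h0
      rw [h0, mul_zero] at hβ
      obtain ⟨u, v, huv⟩ := hcop
      have := congrArg (aeval β) huv
      simp [hβ, h0] at this
    have h0 : aeval β (ratTransform g h (minpoly F α)) = 0 := by
      rw [aeval_ratTransform _ _ _ _ hh0, hβ, mul_div_cancel_right₀ _ hh0, minpoly.aeval, mul_zero]
    have h1 := minpoly.eq_of_irreducible_of_monic hirr h0 hRm
    have h2 := minpoly.natDegree_le (A := F) β
    rw [← h1, hRd] at h2
    omega
  · intro hno
    have hnu : ¬ IsUnit (ratTransform g h (minpoly F α)) := by
      intro hu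
      have := natDegree_eq_zero_of_isUnit hu
      omega
    obtain ⟨P, hP, hPdvd⟩ := WfDvdMonoid.exists_irreducible_factor hnu hRm.ne_zero
    have : Fact (Irreducible P) := ⟨hP⟩
    let L := AdjoinRoot P
    let β : L := AdjoinRoot.root P
    have hβP : aeval β P = 0 := by
      have := AdjoinRoot.eval₂_root P
      exact this
    have hβR : aeval β (ratTransform g h (minpoly F α)) = 0 := by
      obtain ⟨S, hS⟩ := hPdvd
      rw [hS, map_mul, hβP, zero_mul]
    have hh0 : aeval β h ≠ 0 := by
      intro h0
      rw [aeval_ratTransform_zero _ _ _ _ hfm h0] at hβR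
      have hg0 := eq_zero_of_pow_eq_zero hβR
      obtain ⟨u, v, huv⟩ := hcop
      have := congrArg (aeval β) huv
      simp [hg0, h0] at this
    rw [aeval_ratTransform _ _ _ _ hh0] at hβR
    have hγ := (mul_eq_zero.1 hβR).resolve_left (pow_ne_zero _ hh0)
    obtain ⟨φ, hφ⟩ := exists_algHom_of_root α hα _ hγ
    letI : Algebra K L := φ.toRingHom.toAlgebra
    have htow : IsScalarTower F K L := IsScalarTower.of_algebraMap_eq fun x => (φ.commutes x).symm
    have hfdL : FiniteDimensional F L := (AdjoinRoot.powerBasis hP.ne_zero).finite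
    have hfdKL : FiniteDimensional K L := FiniteDimensional.right F K L
    have hLd : Module.finrank F L = P.natDegree := by
      rw [(AdjoinRoot.powerBasis hP.ne_zero).finrank, AdjoinRoot.powerBasis_dim]
    have hmul := Module.finrank_mul_finrank F K L
    set p : K[X] := g.map (algebraMap F K) - C α * h.map (algebraMap F K) with hp
    have hgm : (g.map (algebraMap F K)).Monic := hg.map _
    have hlt : (C α * h.map (algebraMap F K)).degree < (g.map (algebraMap F K)).degree := by
      rw [degree_eq_natDegree hgm.ne_zero, natDegree_map, hg3]
      refine degree_le_natDegree.trans_lt ?_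
      have : (C α * h.map (algebraMap F K)).natDegree ≤ 1 := by
        refine (natDegree_C_mul_le _ _).trans ?_
        rw [natDegree_map, hh1]
      have : (C α * h.map (algebraMap F K)).natDegree < 3 := by omega
      exact_mod_cast this
    have hpm : p.Monic := hgm.sub_of_left hlt
    have hpd : p.natDegree = 3 := by
      rw [hp, natDegree_eq_of_degree_eq (degree_sub_eq_left_of_degree_lt hlt), natDegree_map, hg3]
    have hpirr : Irreducible p := by
      rw [irreducible_iff_roots_eq_zero_of_degree_le_three (by omega) (by omega)]
      rw [Multiset.eq_zero_iff_forall_notMem]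
      intro b hb
      have hb := (mem_roots'.1 hb).2
      apply hno b
      rw [IsRoot, hp, eval_sub, eval_mul, eval_C, eval_map_algebraMap, eval_map_algebraMap,
        sub_eq_zero] at hb
      exact hb
    have hpβ : aeval β p = 0 := by
      rw [hp, map_sub, map_mul, aeval_C, aeval_map_algebraMap, aeval_map_algebraMap]
      have : algebraMap K L α = aeval β g / aeval β h := hφ
      rw [this, div_mul_cancel₀ _ hh0, sub_self]
    have h1 := minpoly.eq_of_irreducible_of_monic hpirr hpβ hpm
    have h2 := minpoly.natDegree_le (A := K) β
    rw [← h1, hpd] at h2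
    have h3 : 3 * Module.finrank F K ≤ P.natDegree := by
      rw [← hLd, ← hmul, mul_comm]
      exact Nat.mul_le_mul_left _ h2
    have hassoc : Associated P (ratTransform g h (minpoly F α)) :=
      associated_of_dvd_of_natDegree_le hPdvd hRm.ne_zero (by rw [hRd]; exact h3)
    exact hassoc.irreducible hP

open Classical in
lemma card_IrredSet {F K : Type*} [Field F] [Fintype F] [Field K] [Fintype K] [Algebra F K]
    (g h : F[X]) (hg : g.Monic) (hg3 : g.natDegree = 3)
    (hh1 : h.natDegree = 1) (hcop : IsCoprime g h) (n : ℕ) (hn : Module.finrank F K = n) :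
    n * (IrredSet g h n).ncard = (Finset.univ.filter fun α : K =>
      (minpoly F α).natDegree = n ∧ ∀ β : K, aeval β g ≠ α * aeval β h).card := by
  set A := Finset.univ.filter fun α : K =>
      (minpoly F α).natDegree = n ∧ ∀ β : K, aeval β g ≠ α * aeval β h with hA
  have hmin : ∀ (f : F[X]) (α : K), f.Monic → Irreducible f → aeval α f = 0 → minpoly F α = f :=
    fun f α hm hi h0 => (minpoly.eq_of_irreducible_of_monic hi h0 hm).symm
  have hroot : ∀ f : F[X], Irreducible f → f.natDegree = n → ∃ α : K, aeval α f = 0 := by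
    intro f hi hd
    have : Fact (Irreducible f) := ⟨hi⟩
    have hfd : FiniteDimensional F (AdjoinRoot f) := (AdjoinRoot.powerBasis hi.ne_zero).finite
    have hfin : Finite (AdjoinRoot f) := Module.finite_of_finite F
    obtain ⟨φ⟩ := FiniteField.nonempty_algHom_of_finrank_dvd (F := F) (K := AdjoinRoot f) (L := K)
      (by rw [(AdjoinRoot.powerBasis hi.ne_zero).finrank, AdjoinRoot.powerBasis_dim, hd, hn])
    refine ⟨φ (AdjoinRoot.root f), ?_⟩
    rw [aeval_algHom_apply]
    have : aeval (AdjoinRoot.root f) f = 0 := AdjoinRoot.eval₂_root f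
    rw [this, map_zero]
  have himg : IrredSet g h n = ↑(A.image (minpoly F)) := by
    ext f
    simp only [IrredSet, Set.mem_setOf_eq, Finset.coe_image, Set.mem_image, Finset.mem_coe]
    constructor
    · rintro ⟨hm, hi, hd, hR⟩
      obtain ⟨α, h0⟩ := hroot f hi hd
      have hmp := hmin f α hm hi h0
      refine ⟨α, ?_, hmp⟩
      rw [hA, Finset.mem_filter]
      refine ⟨Finset.mem_univ _, by rw [hmp, hd], ?_⟩
      rw [← irreducible_ratTransform_iff g h hg hg3 hh1 hcop α (by rw [hmp, hd, hn]), hmp]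
      exact hR
    · rintro ⟨α, hα, rfl⟩
      rw [hA, Finset.mem_filter] at hα
      have hintg : IsIntegral F α := Algebra.IsIntegral.isIntegral α
      refine ⟨minpoly.monic hintg, minpoly.irreducible hintg, hα.2.1, ?_⟩
      rw [irreducible_ratTransform_iff g h hg hg3 hh1 hcop α (by rw [hα.2.1, hn])]
      exact hα.2.2
  rw [himg, Set.ncard_coe_finset, Finset.card_eq_sum_card_image (minpoly F) A, mul_comm]
  rw [Finset.sum_const_nat]
  intro f hf
  have hf' : f ∈ IrredSet g h n := by rw [himg]; exact hf
  obtain ⟨hm, hi, hd, hR⟩ := hf'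
  have hsep : f.Separable := PerfectField.separable_of_irreducible hi
  obtain ⟨α, h0⟩ := hroot f hi hd
  have hspl : (f.map (algebraMap F K)).Splits := by
    rw [← hmin f α hm hi h0]
    exact Normal.splits (inferInstance : Normal F K) α
  have hc := card_rootSet_eq_natDegree hsep hspl
  rw [hd] at hc
  rw [← hc, ← Set.toFinset_card]
  congr 1
  ext x
  rw [Set.mem_toFinset, mem_rootSet, Finset.mem_filter]
  constructor
  · rintro ⟨-, rfl⟩
    exact ⟨hi.ne_zero, minpoly.aeval F x⟩
  · rintro ⟨-, hx⟩
    have hmp := hmin f x hm hi hx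
    refine ⟨?_, hmp⟩
    rw [hA, Finset.mem_filter]
    refine ⟨Finset.mem_univ _, by rw [hmp, hd], ?_⟩
    rw [← irreducible_ratTransform_iff g h hg hg3 hh1 hcop x (by rw [hmp, hd, hn]), hmp]
    exact hR

open Classical in
lemma card_lowdeg {F K : Type*} [Field F] [Fintype F] [Field K] [Fintype K] [Algebra F K]
    (n : ℕ) (hn : Module.finrank F K = n) :
    (Finset.univ.filter fun α : K => (minpoly F α).natDegree ≠ n).card ≤
      2 * Fintype.card F ^ (n / 2) := by
  have hnpos : 0 < n := by rw [← hn]; exact Module.finrank_pos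
  set q := Fintype.card F with hq
  have hq1 : 1 < q := Fintype.one_lt_card
  have hpol : ∀ d, 0 < d → (X ^ q ^ d - X : K[X]) ≠ 0 ∧ (X ^ q ^ d - X : K[X]).natDegree = q ^ d :=
    fun d hd => ⟨FiniteField.X_pow_card_pow_sub_X_ne_zero K hd.ne' hq1,
      FiniteField.X_pow_card_pow_sub_X_natDegree_eq K hd.ne' hq1⟩
  have hsub : (Finset.univ.filter fun α : K => (minpoly F α).natDegree ≠ n) ⊆
      (Finset.Icc 1 (n / 2)).biUnion fun d => (X ^ q ^ d - X : K[X]).roots.toFinset := by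
    intro α hα
    simp only [Finset.mem_filter, Finset.mem_univ, true_and] at hα
    have hintg : IsIntegral F α := Algebra.IsIntegral.isIntegral α
    have hirr := minpoly.irreducible hintg
    have hpos := hirr.natDegree_pos
    have hdvd : (minpoly F α).natDegree ∣ n := by
      rw [← hn]; exact minpoly.degree_dvd hintg
    obtain ⟨k, hk⟩ := hdvd
    rw [Finset.mem_biUnion]
    refine ⟨(minpoly F α).natDegree, ?_, ?_⟩
    · rw [Finset.mem_Icc]
      refine ⟨hpos, ?_⟩
      have hk2 : 2 ≤ k := by
        rcases k with _ | _ | k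
        · omega
        · exfalso; apply hα; rw [hk]; ring
        · omega
      rw [Nat.le_div_iff_mul_le (by norm_num)]
      calc _ ≤ (minpoly F α).natDegree * k := Nat.mul_le_mul_left _ hk2
        _ = n := hk.symm
    · rw [Multiset.mem_toFinset, mem_roots (hpol _ hpos).1]
      have h1 := (hirr.natDegree_dvd_iff_dvd_X_pow_card_pow_sub_X
        (n := (minpoly F α).natDegree)).1 dvd_rfl
      obtain ⟨S, hS⟩ := h1
      have h2 := congrArg (aeval α) hS
      rw [map_mul, minpoly.aeval, zero_mul, Nat.card_eq_fintype_card, ← hq] at h2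
      simpa using h2
  refine (Finset.card_le_card hsub).trans (Finset.card_biUnion_le.trans ?_)
  have h1 : ∀ d ∈ Finset.Icc 1 (n / 2), (X ^ q ^ d - X : K[X]).roots.toFinset.card ≤ q ^ d := by
    intro d hd
    rw [Finset.mem_Icc] at hd
    refine (Multiset.toFinset_card_le _).trans ((card_roots' _).trans ?_)
    rw [(hpol d hd.1).2]
  refine (Finset.sum_le_sum h1).trans ?_
  generalize n / 2 = m
  clear_value q
  induction m with
  | zero => simp
  | succ m ih =>
    rw [Finset.sum_Icc_succ_top (by omega)]
    have : 2 * q ^ m ≤ q ^ (m + 1) := by rw [pow_succ']; exact Nat.mul_le_mul_right _ hq1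
    omega

end FieldTheory

/-- Theorem 17: over `F_q` of characteristic two, for `R(x) = (x³+c)/x` with `c ≠ 0`, or
`R(x) = (x³+c)/(x+c)` with `c ∈ F_q \ F_2`, we have
`|𝓘(g,h,n,q)| = q^n/(3n) + O(q^{n/2}/n)`. -/
theorem stmt17 {F : Type*} [Field F] [Fintype F] [CharP F 2] (q : ℕ)
    (hq : Fintype.card F = q) (g h : F[X])
    (hcase : (∃ c : F, c ≠ 0 ∧ g = X ^ 3 + C c ∧ h = X) ∨
             (∃ c : F, c ≠ 0 ∧ c ≠ 1 ∧ g = X ^ 3 + C c ∧ h = X + C c)) :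
    ∃ Cst : ℝ, ∀ n : ℕ, 1 < n →
      |((IrredSet g h n).ncard : ℝ) - (q : ℝ) ^ n / (3 * n)| ≤
        Cst * (q : ℝ) ^ ((n : ℝ) / 2) / n := by
  classical
  have h2 : (2 : F) = 0 := CharP.cast_eq_zero F 2
  obtain ⟨a, c, hd, rfl, rfl⟩ : ∃ a c : F, a ^ 3 + c ≠ 0 ∧ g = X ^ 3 + C c ∧ h = X + C a := by
    rcases hcase with ⟨c, hc, hg, hh⟩ | ⟨c, hc, hc1, hg, hh⟩
    · exact ⟨0, c, by simpa using hc, hg, by simpa using hh⟩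
    · refine ⟨c, c, ?_, hg, hh⟩
      have : c ^ 3 + c = c * (c - 1) ^ 2 := by linear_combination c ^ 2 * h2
      rw [this]
      exact mul_ne_zero hc (pow_ne_zero _ (sub_ne_zero.2 hc1))
  have hgm : (X ^ 3 + C c : F[X]).Monic := monic_X_pow_add_C c (by norm_num)
  have hg3 : (X ^ 3 + C c : F[X]).natDegree = 3 := natDegree_X_pow_add_C
  have hh1 : (X + C a : F[X]).natDegree = 1 := natDegree_X_add_C a
  have hcop : IsCoprime (X ^ 3 + C c : F[X]) (X + C a) := by
    refine ⟨C (a ^ 3 + c)⁻¹, - C (a ^ 3 + c)⁻¹ * (X ^ 2 - C a * X + C a ^ 2), ?_⟩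
    have h1 : (C (a ^ 3 + c)⁻¹ : F[X]) * (C a ^ 3 + C c) = 1 := by
      rw [← C_pow, ← C_add, ← C_mul, inv_mul_cancel₀ hd, C_1]
    have h2' : (2 : F[X]) = 0 := by
      have := CharP.cast_eq_zero F[X] 2
      exact_mod_cast this
    linear_combination h1 - C (a ^ 3 + c)⁻¹ * C a ^ 3 * h2'
  refine ⟨1000, fun n hn => ?_⟩
  have hNZ : NeZero n := ⟨by omega⟩
  have hF2 : Fact (Nat.Prime 2) := ⟨Nat.prime_two⟩
  let K := FiniteField.Extension F 2 n
  letI : Fintype K := Fintype.ofFinite K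
  have hfr : Module.finrank F K = n := FiniteField.finrank_extension F 2 n
  have hchK : CharP K 2 := charP_of_injective_algebraMap (algebraMap F K).injective 2
  have hK2 : (2 : K) = 0 := CharP.cast_eq_zero K 2
  have hcardK : Fintype.card K = q ^ n := by
    rw [← hq, ← Nat.card_eq_fintype_card, ← Nat.card_eq_fintype_card]
    exact FiniteField.natCard_extension F 2 n
  have hI := card_IrredSet (K := K) (X ^ 3 + C c : F[X]) (X + C a) hgm hg3 hh1 hcop n hfr
  have hlow := card_lowdeg (F := F) (K := K) n hfr
  set a' := algebraMap F K a with ha'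
  set c' := algebraMap F K c with hc'
  have hd' : a' ^ 3 + c' ≠ 0 := by
    rw [ha', hc', ← map_pow, ← map_add]
    exact (_root_.map_ne_zero _).2 hd
  have hcount := count_noroot a' (a' ^ 3 + c') hd'
  have hN : (Finset.univ.filter fun α : K =>
      ∀ u : K, u ^ 3 + a' * u ^ 2 + α * u + (a' ^ 3 + c') ≠ 0).card =
      (Finset.univ.filter fun α : K => ∀ β : K, aeval β (X ^ 3 + C c : F[X]) ≠
        α * aeval β (X + C a : F[X])).card := by
    refine Finset.card_bij' (fun α _ => α - a' ^ 2) (fun α _ => α + a' ^ 2) ?_ ?_ ?_ ?_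
    · intro α hα
      simp only [Finset.mem_filter, Finset.mem_univ, true_and] at hα ⊢
      intro β hβ
      simp only [map_add, map_pow, aeval_X, aeval_C, ← ha', ← hc'] at hβ
      apply hα (β + a')
      linear_combination hβ + (2 * β ^ 2 * a' + 2 * β * a' ^ 2 + a' ^ 3 - a' ^ 2 * (β + a') + α * (β + a') + β * a' ^ 2 + a' ^ 3) * hK2
    · intro α hα
      simp only [Finset.mem_filter, Finset.mem_univ, true_and] at hα ⊢
      intro u hu
      apply hα (u - a')
      simp only [map_add, map_pow, aeval_X, aeval_C, ← ha', ← hc']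
      linear_combination hu - (2 * u ^ 2 * a' - u * a' ^ 2 + a' ^ 3 + α * u) * hK2
    · intro α _; ring
    · intro α _; ring
  rw [hN] at hcount
  set B := Finset.univ.filter fun α : K => ∀ β : K, aeval β (X ^ 3 + C c : F[X]) ≠
        α * aeval β (X + C a : F[X]) with hB
  set A := Finset.univ.filter fun α : K => (minpoly F α).natDegree = n ∧
      ∀ β : K, aeval β (X ^ 3 + C c : F[X]) ≠ α * aeval β (X + C a : F[X]) with hA
  set D := Finset.univ.filter fun α : K => (minpoly F α).natDegree ≠ n with hD
  have hAB : A.card ≤ B.card := by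
    apply Finset.card_le_card
    intro α hα
    simp only [hA, hB, Finset.mem_filter, Finset.mem_univ, true_and] at hα ⊢
    exact hα.2
  have hBA : B.card ≤ A.card + D.card := by
    refine (Finset.card_le_card ?_).trans (Finset.card_union_le A D)
    intro α hα
    simp only [hA, hB, hD, Finset.mem_union, Finset.mem_filter, Finset.mem_univ, true_and] at hα ⊢
    tauto
  have hq1 : 1 ≤ q := by rw [← hq]; exact Fintype.card_pos
  have hq1' : (1 : ℝ) ≤ q := by exact_mod_cast hq1
  have hsqrt : √((q : ℝ) ^ n) = (q : ℝ) ^ ((n : ℝ) / 2) := by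
    rw [Real.sqrt_eq_rpow, ← Real.rpow_natCast, ← Real.rpow_mul (by linarith)]
    congr 1; ring
  have hpow : (q : ℝ) ^ (n / 2) ≤ (q : ℝ) ^ ((n : ℝ) / 2) := by
    rw [← hsqrt]
    apply Real.le_sqrt_of_sq_le
    rw [← pow_mul]
    exact pow_le_pow_right₀ hq1' (by omega)
  rw [hcardK] at hcount
  push_cast at hcount
  rw [hsqrt] at hcount
  set S := (q : ℝ) ^ ((n : ℝ) / 2) with hS
  rw [hq] at hlow
  have hlow' : (D.card : ℝ) ≤ 2 * (q : ℝ) ^ (n / 2) := by exact_mod_cast hlow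
  have hAB' : (A.card : ℝ) ≤ B.card := by exact_mod_cast hAB
  have hBA' : (B.card : ℝ) ≤ A.card + D.card := by exact_mod_cast hBA
  have hI' : (n : ℝ) * ((IrredSet (X ^ 3 + C c : F[X]) (X + C a) n).ncard : ℝ) = A.card := by
    exact_mod_cast hI
  have hn0 : (0 : ℝ) < n := by exact_mod_cast (by omega : 0 < n)
  have hS0 : 0 ≤ S := by positivity
  have hrew : ((IrredSet (X ^ 3 + C c : F[X]) (X + C a) n).ncard : ℝ) - (q : ℝ) ^ n / (3 * n) =
      (3 * (A.card : ℝ) - (q : ℝ) ^ n) / (3 * n) := by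
    rw [← hI']; field_simp
  rw [hrew, abs_div, abs_of_pos (show (0 : ℝ) < 3 * n by positivity), div_le_div_iff₀ (by positivity) hn0]
  have hfin : |3 * (A.card : ℝ) - (q : ℝ) ^ n| ≤ 3000 * S := by
    rw [abs_le] at hcount ⊢
    constructor <;> linarith [hcount.1, hcount.2]
  nlinarith
end

section
/- Let q be a prime power not divisible by 3 and let m > 1 be an integer. Then the sum of |𝓘(x^3, h, m, q)| over all polynomials h(x) ∈ F_q[x] of degree at most 2 with h(0) = 1 equals (q/(3m)) ∑_{d ∣ m, 3 ∤ d} μ(d) (q + ε^{m/d}) (q^{m/d} − ε^{m/d}), where ε = 1 if q ≡ 1 (mod 3) and ε = −1 if q ≡ −1 (mod 3), and μ is the Möbius function. -/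
open Polynomial

set_option linter.unusedSimpArgs false
set_option linter.unusedSectionVars false

lemma ncard_pow_eq {Ω : Type*} [Field Ω] [IsAlgClosed Ω] (n : ℕ) (hn : (n : Ω) ≠ 0) (c : Ω)
    (hc : c ≠ 0) : {u : Ω | u ^ n = c}.ncard = n := by
  have hn0 : n ≠ 0 := by rintro rfl; simp at hn
  have hsep : (X ^ n - C c : Polynomial Ω).Separable := separable_X_pow_sub_C c hn hc
  have h := card_rootSet_eq_natDegree (K := Ω) hsep (IsAlgClosed.splits _)
  have hset : {u : Ω | u ^ n = c} = (X ^ n - C c : Polynomial Ω).rootSet Ω := by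
    ext u
    simp [mem_rootSet, X_pow_sub_C_ne_zero (Nat.pos_of_ne_zero hn0), sub_eq_zero]
  rw [hset, ← Nat.card_coe_set_eq, Nat.card_eq_fintype_card, h, natDegree_X_pow_sub_C]

/-- elements generating a cubic extension of the fixed field of `σ` with given cubic. -/
def Bset {Ω : Type*} [Field Ω] (σ : Ω →+* Ω) (b : Ω) : Set Ω :=
  {y | σ (σ (σ y)) = y ∧ σ y ≠ y ∧ σ (y ^ 3 + b * y) = y ^ 3 + b * y}

section
variable {Ω : Type*} [Field Ω] (σ : Ω →+* Ω) (b ω : Ω)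

lemma Bset_rel (hb : σ b = b) (y : Ω) (hy : y ∈ Bset σ b) :
    y + σ y + σ (σ y) = 0 ∧ y ^ 2 + y * σ y + σ y ^ 2 = -b := by
  obtain ⟨h3, hne, hP⟩ := hy
  simp only [map_add, map_mul, map_pow, hb] at hP
  have hP2 := congrArg σ hP
  simp only [map_add, map_mul, map_pow, hb] at hP2
  have hne2 : σ (σ y) ≠ σ y := fun h => hne (σ.injective h)
  have hne3 : y ≠ σ (σ y) := fun h => by
    apply hne2; rw [← h]; nth_rewrite 2 [h]; exact h3.symm
  have e1 : y ^ 2 + y * σ y + σ y ^ 2 + b = 0 := by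
    have : (σ y - y) * (y ^ 2 + y * σ y + σ y ^ 2 + b) = 0 := by linear_combination hP
    exact (mul_eq_zero.1 this).resolve_left (sub_ne_zero.2 hne)
  have e2 : σ y ^ 2 + σ y * σ (σ y) + σ (σ y) ^ 2 + b = 0 := by
    have : (σ (σ y) - σ y) * (σ y ^ 2 + σ y * σ (σ y) + σ (σ y) ^ 2 + b) = 0 := by
      linear_combination hP2
    exact (mul_eq_zero.1 this).resolve_left (sub_ne_zero.2 hne2)
  constructor
  · have : (y - σ (σ y)) * (y + σ y + σ (σ y)) = 0 := by linear_combination e1 - e2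
    exact (mul_eq_zero.1 this).resolve_left (sub_ne_zero.2 hne3)
  · linear_combination e1

variable [IsAlgClosed Ω]

lemma Bset_split_ncard (h3 : (3 : Ω) ≠ 0) (hω : ω ^ 2 + ω + 1 = 0) (hb : σ b = b)
    (hb0 : b ≠ 0) (hωσ : σ ω = ω) :
    (Bset σ b).ncard = {u : Ω | u ≠ 0 ∧ σ u = ω ^ 2 * u}.ncard := by
  have hω3 : ω ^ 3 = 1 := by linear_combination (ω - 1) * hω
  have hω0 : ω ≠ 0 := by rintro rfl; simp at hω
  have hω1 : ω ≠ 1 := by rintro rfl; apply h3; linear_combination hω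
  symm
  apply Set.ncard_congr (fun u _ => (u + -3 * b / u) / 3)
  · rintro u ⟨hu, hσu⟩
    obtain ⟨v, hv⟩ : ∃ v, v = -3 * b / u := ⟨_, rfl⟩
    rw [← hv]
    have huv : u * v = -3 * b := by rw [hv]; field_simp
    have hv0 : v ≠ 0 := by rintro rfl; simp [h3, hb0] at huv
    have hσv : σ v = ω * v := by
      have h := congrArg σ huv
      simp only [map_mul, map_neg, map_ofNat, hb, hσu] at h
      have : (ω ^ 2 * u) * (σ v - ω * v) = 0 := by linear_combination h - huv - u * v * hω3
      exact sub_eq_zero.1 ((mul_eq_zero.1 this).resolve_left (by positivity))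
    refine ⟨?_, ?_, ?_⟩
    · simp only [map_add, map_mul, map_div₀, map_ofNat, map_pow, hσu, hσv, hωσ]
      congr 1
      linear_combination (u * (ω ^ 3 + 1) + v) * hω3
    · intro h
      simp only [map_add, map_mul, map_div₀, map_ofNat, map_pow, hσu, hσv, hωσ] at h
      field_simp at h
      have h1 : (ω - 1) * (v - ω ^ 2 * u) = 0 := by
        linear_combination h - u * hω3
      have h2 := (mul_eq_zero.1 h1).resolve_left (sub_ne_zero.2 hω1)
      have h4 := congrArg σ h2
      simp only [map_sub, map_zero, map_mul, map_pow, hσu, hσv, hωσ] at h4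
      have : ω ^ 3 * u * (ω - 1) = 0 := by linear_combination ω * h2 - h4
      simp [hω0, hu, sub_eq_zero, hω1] at this
    · have key : ((u + v) / 3) ^ 3 + b * ((u + v) / 3) = (u ^ 3 + v ^ 3) / 27 := by
        have : b = - (u * v) / 3 := by rw [huv]; field_simp
        rw [this, show (27 : Ω) = 3 ^ 3 by norm_num]; field_simp; ring
      rw [key]
      simp only [map_add, map_mul, map_div₀, map_ofNat, map_pow, hσu, hσv]
      congr 1
      linear_combination (u ^ 3 * (ω ^ 3 + 1) + v ^ 3) * hω3
  · rintro u u' ⟨hu, hσu⟩ ⟨hu', hσu'⟩ h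
    have aux : ∀ u : Ω, u ≠ 0 → σ u = ω ^ 2 * u →
        u = (u + -3 * b / u) / 3 + ω * σ ((u + -3 * b / u) / 3)
          + ω ^ 2 * σ (σ ((u + -3 * b / u) / 3)) := by
      intro u hu hσu
      obtain ⟨v, hv⟩ : ∃ v, v = -3 * b / u := ⟨_, rfl⟩
      rw [← hv]
      have huv : u * v = -3 * b := by rw [hv]; field_simp
      have hσv : σ v = ω * v := by
        have h := congrArg σ huv
        simp only [map_mul, map_neg, map_ofNat, hb, hσu] at h
        have : (ω ^ 2 * u) * (σ v - ω * v) = 0 := by linear_combination h - huv - u * v * hω3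
        exact sub_eq_zero.1 ((mul_eq_zero.1 this).resolve_left (by positivity))
      simp only [map_add, map_mul, map_div₀, map_ofNat, map_pow, hσu, hσv, hωσ]
      field_simp
      linear_combination (-u - u * (ω ^ 3 + 1) - ω * v) * hω3 - v * hω
    rw [aux u hu hσu, aux u' hu' hσu', h]
  · intro y hy
    obtain ⟨e1, e2⟩ := Bset_rel σ b hb y hy
    obtain ⟨h3y, hne, hP⟩ := hy
    have huv : (y + ω * σ y + ω ^ 2 * σ (σ y)) * (y + ω ^ 2 * σ y + ω * σ (σ y)) = -3 * b := by
      have : σ (σ y) = - y - σ y := by linear_combination e1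
      rw [this]
      linear_combination 3 * e2 + ((ω - 2) * y ^ 2 + (-ω ^ 2 + 3 * ω - 3) * (y * σ y + σ y ^ 2)) * hω
    have hu : y + ω * σ y + ω ^ 2 * σ (σ y) ≠ 0 := by
      intro h; rw [h] at huv; simp [h3, hb0] at huv
    refine ⟨y + ω * σ y + ω ^ 2 * σ (σ y), ⟨hu, ?_⟩, ?_⟩
    · simp only [map_add, map_mul, map_pow, hωσ, h3y]
      linear_combination (-σ y - ω * σ (σ y)) * hω3
    · rw [← huv]
      field_simp
      linear_combination (σ y + σ (σ y)) * hω - e1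

lemma Bset_nonsplit_ncard (h3 : (3 : Ω) ≠ 0) (hω : ω ^ 2 + ω + 1 = 0) (hb : σ b = b)
    (hb0 : b ≠ 0) (hωσ : σ ω = ω ^ 2) :
    (Bset σ b).ncard = {u : Ω | u * σ u = -3 * b * ω}.ncard := by
  have hω3 : ω ^ 3 = 1 := by linear_combination (ω - 1) * hω
  have hω0 : ω ≠ 0 := by rintro rfl; simp at hω
  have hω1 : ω ≠ 1 := by rintro rfl; apply h3; linear_combination hω
  have prep : ∀ u : Ω, u * σ u = -3 * b * ω → u ≠ 0 ∧ u * (ω ^ 2 * σ u) = -3 * b ∧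
      σ (σ u) = u * ω ∧ -3 * b / u = ω ^ 2 * σ u := by
    intro u h
    have hu : u ≠ 0 := by rintro rfl; simp [h3, hb0, hω0] at h
    have huv : u * (ω ^ 2 * σ u) = -3 * b := by linear_combination ω ^ 2 * h - 3 * b * hω3
    have hs : σ u ≠ 0 := by simpa using hu
    refine ⟨hu, huv, ?_, ?_⟩
    · have h' := congrArg σ h
      simp only [map_mul, map_neg, map_ofNat, hb, hωσ] at h'
      have : σ u * (σ (σ u) - u * ω) = 0 := by linear_combination h' - ω * h
      exact sub_eq_zero.1 ((mul_eq_zero.1 this).resolve_left hs)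
    · rw [← huv]; field_simp
  symm
  apply Set.ncard_congr (fun u _ => (u + -3 * b / u) / 3)
  · rintro u hu'
    obtain ⟨hu, huv, hss, hdiv⟩ := prep u hu'
    rw [hdiv]
    have hy : σ ((u + ω ^ 2 * σ u) / 3) = (σ u + ω ^ 2 * u) / 3 := by
      simp only [map_add, map_mul, map_div₀, map_ofNat, map_pow, hss, hωσ]
      congr 1
      linear_combination (ω ^ 2 * u) * hω3
    refine ⟨?_, ?_, ?_⟩
    · rw [hy]
      simp only [map_add, map_mul, map_div₀, map_ofNat, map_pow, hss, hωσ]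
      congr 1
      linear_combination (u + u * ω ^ 3 * (ω ^ 3 + 1)) * hω3
    · intro h
      rw [hy] at h
      field_simp at h
      have h1 : (ω - 1) * ((ω + 1) * (u - σ u)) = 0 := by linear_combination h
      have h2 := (mul_eq_zero.1 h1).resolve_left (sub_ne_zero.2 hω1)
      have h4 : σ u = u := by linear_combination ω * h2 + (σ u - u) * hω
      rw [h4, h4] at hss
      have : u * (ω - 1) = 0 := by linear_combination -hss
      simp [hu, sub_eq_zero, hω1] at this
    · have key : ((u + ω ^ 2 * σ u) / 3) ^ 3 + b * ((u + ω ^ 2 * σ u) / 3)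
          = (u ^ 3 + (ω ^ 3) ^ 2 * σ u ^ 3) / 27 := by
        have : b = - (u * (ω ^ 2 * σ u)) / 3 := by rw [huv]; field_simp
        rw [this, show (27 : Ω) = 3 ^ 3 by norm_num]; field_simp; ring
      rw [key, hω3]
      simp only [map_add, map_mul, map_div₀, map_ofNat, map_pow, map_one, hss]
      congr 1
      linear_combination (u ^ 3) * hω3
  · rintro u u' hu1 hu2 h
    have aux : ∀ u : Ω, u * σ u = -3 * b * ω →
        u = (u + -3 * b / u) / 3 + ω * σ ((u + -3 * b / u) / 3)
          + ω ^ 2 * σ (σ ((u + -3 * b / u) / 3)) := by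
      intro u hu'
      obtain ⟨hu, huv, hss, hdiv⟩ := prep u hu'
      rw [hdiv]
      simp only [map_add, map_mul, map_div₀, map_ofNat, map_pow, hss, hωσ]
      field_simp
      linear_combination (-u * (ω ^ 3 + 2) - σ u * (ω ^ 9 + ω ^ 6 + ω ^ 3 + 1)) * hω3 - σ u * hω
    rw [aux u hu1, aux u' hu2, h]
  · intro y hy
    obtain ⟨e1, e2⟩ := Bset_rel σ b hb y hy
    obtain ⟨h3y, hne, hP⟩ := hy
    have huv : (y + ω * σ y + ω ^ 2 * σ (σ y)) * (y + ω ^ 2 * σ y + ω * σ (σ y)) = -3 * b := by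
      have : σ (σ y) = - y - σ y := by linear_combination e1
      rw [this]
      linear_combination 3 * e2 + ((ω - 2) * y ^ 2 + (-ω ^ 2 + 3 * ω - 3) * (y * σ y + σ y ^ 2)) * hω
    have hu : y + ω * σ y + ω ^ 2 * σ (σ y) ≠ 0 := by
      intro h; rw [h] at huv; simp [h3, hb0] at huv
    refine ⟨y + ω * σ y + ω ^ 2 * σ (σ y), ?_, ?_⟩
    · simp only [map_add, map_mul, map_pow, hωσ, h3y, Set.mem_ofPred_eq]
      have : σ y + ω ^ 2 * σ (σ y) + (ω ^ 2) ^ 2 * y = ω * (y + ω ^ 2 * σ y + ω * σ (σ y)) := by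
        linear_combination (-σ y + ω * y) * hω3
      rw [this]
      linear_combination ω * huv
    · rw [← huv]
      field_simp
      linear_combination (σ y + σ (σ y)) * hω - e1

lemma Bset_split (h3 : (3 : Ω) ≠ 0) (hω : ω ^ 2 + ω + 1 = 0) (Q : ℕ) (hQ2 : 1 < Q) (hQ : (Q : Ω) = 0) (hσ : ∀ x, σ x = x ^ Q) (hb : σ b = b)
    (hb0 : b ≠ 0) (hωσ : σ ω = ω) : ((Bset σ b).ncard : ℚ) = Q - 1 := by
  have hω0 : ω ≠ 0 := by rintro rfl; simp at hω
  rw [Bset_split_ncard σ b ω h3 hω hb hb0 hωσ]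
  have : {u : Ω | u ≠ 0 ∧ σ u = ω ^ 2 * u} = {u : Ω | u ^ (Q - 1) = ω ^ 2} := by
    ext u
    simp only [Set.mem_ofPred_eq, hσ]
    obtain ⟨n, rfl⟩ : ∃ n, Q = n + 2 := ⟨Q - 2, by omega⟩
    simp only [show n + 2 - 1 = n + 1 by omega]
    constructor
    · rintro ⟨hu, h⟩
      apply mul_right_cancel₀ hu
      rw [← h]; ring
    · intro h
      refine ⟨?_, ?_⟩
      · rintro rfl; simp at h; exact pow_ne_zero 2 hω0 h.symm
      · rw [← h]; ring
  rw [this, ncard_pow_eq _ _ _ (by simpa using hω0)]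
  · push_cast [hQ2.le]; rfl
  · push_cast [hQ2.le, hQ]; simp

lemma Bset_nonsplit (h3 : (3 : Ω) ≠ 0) (hω : ω ^ 2 + ω + 1 = 0) (Q : ℕ) (hQ2 : 1 < Q) (hQ : (Q : Ω) = 0) (hσ : ∀ x, σ x = x ^ Q) (hb : σ b = b)
    (hb0 : b ≠ 0) (hωσ : σ ω = ω ^ 2) : ((Bset σ b).ncard : ℚ) = Q + 1 := by
  have hω0 : ω ≠ 0 := by rintro rfl; simp at hω
  rw [Bset_nonsplit_ncard σ b ω h3 hω hb hb0 hωσ]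
  have : {u : Ω | u * σ u = -3 * b * ω} = {u : Ω | u ^ (Q + 1) = -3 * b * ω} := by
    ext u
    simp only [Set.mem_ofPred_eq, hσ, pow_succ']
  rw [this, ncard_pow_eq _ _ _ (by simp [h3, hb0, hω0])]
  · push_cast; rfl
  · push_cast [hQ]; simp

lemma Bset_zero_cases (hω : ω ^ 2 + ω + 1 = 0) (y : Ω) (hy : y ∈ Bset σ 0) :
    y ≠ 0 ∧ (σ y = ω * y ∨ σ y = ω ^ 2 * y) := by
  obtain ⟨e1, e2⟩ := Bset_rel σ 0 (map_zero σ) y hy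
  obtain ⟨h3y, hne, hP⟩ := hy
  refine ⟨?_, ?_⟩
  · rintro rfl; simp at hne
  · have : (σ y - ω * y) * (σ y - ω ^ 2 * y) = 0 := by
      linear_combination e2 + ((ω - 1) * y ^ 2 - y * σ y) * hω
    simpa [sub_eq_zero] using this

lemma Bset_zero_nonsplit (h3 : (3 : Ω) ≠ 0) (hω : ω ^ 2 + ω + 1 = 0)
    (hωσ : σ ω = ω ^ 2) : (Bset σ 0).ncard = 0 := by
  have hω3 : ω ^ 3 = 1 := by linear_combination (ω - 1) * hω
  have hω1 : ω ≠ 1 := by rintro rfl; apply h3; linear_combination hω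
  have : Bset σ 0 = ∅ := by
    rw [Set.eq_empty_iff_forall_notMem]
    intro y hy
    obtain ⟨hy0, h⟩ := Bset_zero_cases σ ω hω y hy
    obtain ⟨h3y, hne, hP⟩ := hy
    apply hne
    have : σ (σ y) = y := by
      rcases h with h | h
      · rw [h, map_mul, h, hωσ]; linear_combination y * hω3
      · rw [h, map_mul, h, map_pow, hωσ]; linear_combination y * (ω ^ 3 + 1) * hω3
    rwa [this] at h3y
  rw [this, Set.ncard_empty]

lemma Bset_zero_split (h3 : (3 : Ω) ≠ 0) (hω : ω ^ 2 + ω + 1 = 0) (Q : ℕ) (hQ2 : 1 < Q) (hQ : (Q : Ω) = 0) (hσ : ∀ x, σ x = x ^ Q)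
    (hωσ : σ ω = ω) : ((Bset σ 0).ncard : ℚ) = 2 * (Q - 1) := by
  have hω3 : ω ^ 3 = 1 := by linear_combination (ω - 1) * hω
  have hω0 : ω ≠ 0 := by rintro rfl; simp at hω
  have hω1 : ω ≠ 1 := by rintro rfl; apply h3; linear_combination hω
  have hω2 : ω ^ 2 ≠ 1 := by
    intro h; apply hω1; linear_combination hω3 - ω * h
  have key : ∀ c y : Ω, c ≠ 0 → (y ^ (Q - 1) = c ↔ y ≠ 0 ∧ σ y = c * y) := by
    intro c u hc
    obtain ⟨n, rfl⟩ : ∃ n, Q = n + 2 := ⟨Q - 2, by omega⟩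
    simp only [hσ, show n + 2 - 1 = n + 1 by omega]
    constructor
    · intro h
      refine ⟨?_, ?_⟩
      · rintro rfl; simp at h; exact hc h.symm
      · rw [← h]; ring
    · rintro ⟨hu, h⟩
      apply mul_right_cancel₀ hu
      rw [← h]; ring
  have mem : ∀ c y : Ω, c ≠ 1 → c ^ 3 = 1 → σ c = c → y ≠ 0 → σ y = c * y → y ∈ Bset σ 0 := by
    intro c y hc1 hc3 hcσ hy0 h
    refine ⟨?_, ?_, ?_⟩
    · simp only [h, map_mul, hcσ]; linear_combination y * hc3
    · rw [h]; simpa [hy0] using hc1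
    · simp only [h, map_mul, map_pow, map_add, map_zero]; linear_combination y ^ 3 * hc3
  have hset : Bset σ 0 = {u : Ω | u ^ (Q - 1) = ω} ∪ {u : Ω | u ^ (Q - 1) = ω ^ 2} := by
    ext y
    simp only [Set.mem_union, Set.mem_ofPred_eq, key ω y hω0, key (ω ^ 2) y (pow_ne_zero 2 hω0)]
    constructor
    · intro hy
      obtain ⟨h1, h2⟩ := Bset_zero_cases σ ω hω y hy
      tauto
    · rintro (⟨h1, h2⟩ | ⟨h1, h2⟩)
      · exact mem ω y hω1 hω3 hωσ h1 h2
      · exact mem (ω ^ 2) y hω2 (by linear_combination (ω ^ 3 + 1) * hω3) (by simp [hωσ]) h1 h2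
  have hQ' : ((Q - 1 : ℕ) : Ω) ≠ 0 := by push_cast [hQ2.le, hQ]; simp
  have c1 := ncard_pow_eq (Q - 1) hQ' ω hω0
  have c2 := ncard_pow_eq (Q - 1) hQ' (ω ^ 2) (pow_ne_zero 2 hω0)
  rw [hset, Set.ncard_union_eq ?_ (Set.finite_of_ncard_ne_zero (by rw [c1]; omega))
    (Set.finite_of_ncard_ne_zero (by rw [c2]; omega)), c1, c2]
  · push_cast [hQ2.le]; ring
  · rw [Set.disjoint_left]
    intro y h1 h2
    simp only [Set.mem_ofPred_eq] at h1 h2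
    rw [h1] at h2
    apply hω1
    apply mul_left_cancel₀ hω0
    rw [mul_one, ← sq, ← h2]

end

section
variable (F : Type*) {Ω : Type*} [Field F] [Fintype F] [Field Ω] [Algebra F Ω]
  [Algebra.IsAlgebraic F Ω]

/-- degree of an element over `F` -/
noncomputable def dg (y : Ω) : ℕ := (minpoly F y).natDegree

lemma dg_pos (y : Ω) : 0 < dg F y := minpoly.natDegree_pos (Algebra.IsIntegral.isIntegral y)

lemma dg_dvd_iff (y : Ω) (k : ℕ) : dg F y ∣ k ↔ y ^ (Fintype.card F ^ k) = y := by
  have hi : Irreducible (minpoly F y) := minpoly.irreducible (Algebra.IsIntegral.isIntegral y)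
  rw [dg, hi.natDegree_dvd_iff_dvd_X_pow_card_pow_sub_X, minpoly.dvd_iff, Nat.card_eq_fintype_card]
  simp [sub_eq_zero]

/-- iterated Frobenius -/
noncomputable def frk (Ω : Type*) [Field Ω] [Algebra F Ω] (k : ℕ) : Ω →ₐ[F] Ω :=
  (FiniteField.frobeniusAlgHom F Ω) ^ k

lemma frk_apply (k : ℕ) (x : Ω) : frk F Ω k x = x ^ (Fintype.card F ^ k) := by
  simp only [frk, AlgHom.coe_pow, FiniteField.coe_frobeniusAlgHom, pow_iterate]

lemma dg_dvd_iff' (y : Ω) (k : ℕ) : dg F y ∣ k ↔ frk F Ω k y = y := by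
  rw [dg_dvd_iff, frk_apply]

lemma dg_dvd_dg (y z : Ω) (h : ∀ k, frk F Ω k y = y → frk F Ω k z = z) : dg F z ∣ dg F y := by
  rw [dg_dvd_iff']
  apply h
  rw [← dg_dvd_iff']

lemma dg_eq_dg (y z : Ω) (h : ∀ k, frk F Ω k y = y ↔ frk F Ω k z = z) : dg F z = dg F y :=
  Nat.dvd_antisymm (dg_dvd_dg F y z fun k => (h k).1) (dg_dvd_dg F z y fun k => (h k).2)

lemma dg_inv (y : Ω) : dg F y⁻¹ = dg F y := by
  apply dg_eq_dg
  intro k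
  rw [map_inv₀, inv_inj]

lemma dg_add (y : Ω) (a : F) : dg F (y + algebraMap F Ω a) = dg F y := by
  apply dg_eq_dg
  intro k
  rw [map_add, AlgHom.commutes, add_left_inj]

lemma finite_dg (n : ℕ) (hn : 0 < n) : {y : Ω | dg F y ∣ n}.Finite := by
  have hq : 1 < Fintype.card F := Fintype.one_lt_card
  have h0 : (X ^ (Fintype.card F ^ n) - X : Polynomial Ω) ≠ 0 :=
    FiniteField.X_pow_card_pow_sub_X_ne_zero Ω hn.ne' hq
  apply (rootSet_finite (X ^ (Fintype.card F ^ n) - X : Polynomial Ω) Ω).subset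
  intro y hy
  rw [Set.mem_ofPred_eq, dg_dvd_iff] at hy
  rw [mem_rootSet]
  exact ⟨h0, by simp [hy]⟩

/-- the cubic -/
def cub (a b : F) (y : Ω) : Ω := y ^ 3 + algebraMap F Ω a * y ^ 2 + algebraMap F Ω b * y

lemma frk_cub (a b : F) (y : Ω) (k : ℕ) : frk F Ω k (cub F a b y) = cub F a b (frk F Ω k y) := by
  simp [cub]

/-- elements of degree `3k` whose cubic value has degree `k` -/
def Aset (Ω : Type*) [Field Ω] [Algebra F Ω] (a b : F) (k : ℕ) : Set Ω :=
  {y | dg F y = 3 * k ∧ dg F (cub F a b y) = k}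

lemma dg_cub_dvd (a b : F) (y : Ω) : dg F (cub F a b y) ∣ dg F y := by
  apply dg_dvd_dg
  intro k h
  rw [frk_cub, h]

lemma dg_le_cub (a b : F) (y : Ω) : dg F y ≤ 3 * dg F (cub F a b y) := by
  have hd : (X ^ 3 + C a * X ^ 2 + C b * X : F[X]).natDegree = 3 := by compute_degree!
  have h0 : minpoly F (cub F a b y) ≠ 0 := minpoly.ne_zero (Algebra.IsIntegral.isIntegral _)
  have hne : (minpoly F (cub F a b y)).comp (X ^ 3 + C a * X ^ 2 + C b * X) ≠ 0 := by
    intro h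
    have := congrArg natDegree h
    rw [natDegree_comp, hd, natDegree_zero] at this
    have := dg_pos F (cub F a b y)
    unfold dg at this
    omega
  have hr : aeval y ((minpoly F (cub F a b y)).comp (X ^ 3 + C a * X ^ 2 + C b * X)) = 0 := by
    rw [aeval_comp]
    have e : aeval y (X ^ 3 + C a * X ^ 2 + C b * X : F[X]) = cub F a b y := by simp [cub]
    rw [e]
    exact minpoly.aeval F (cub F a b y)
  have h := natDegree_le_of_dvd (minpoly.dvd F y hr) hne
  rw [natDegree_comp, hd] at h
  unfold dg
  omega

lemma Bset_eq (b : F) (k : ℕ) :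
    Bset (frk F Ω k : Ω →+* Ω) (algebraMap F Ω b) =
      {y | dg F y ∣ 3 * k ∧ ¬ dg F y ∣ k ∧ dg F (cub F 0 b y) ∣ k} := by
  ext y
  have h1 : (frk F Ω k) (frk F Ω k (frk F Ω k y)) = frk F Ω (3 * k) y := by
    simp only [frk_apply, ← pow_mul]
    congr 1
    ring
  have h2 : cub F 0 b y = y ^ 3 + algebraMap F Ω b * y := by simp [cub]
  simp only [Bset, Set.mem_ofPred_eq, dg_dvd_iff', RingHom.coe_coe, h1, h2]

lemma arith1 (d e k : ℕ) (hd : 0 < d) (hde : d ∣ e) (he : 0 < e) (hle : e ≤ 3 * d) (hdk : d ∣ k) :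
    (e ∣ 3 * k ∧ ¬ e ∣ k) ↔ (e = 3 * d ∧ ¬ 3 ∣ k / d) := by
  obtain ⟨j, rfl⟩ := hde
  obtain ⟨l, rfl⟩ := hdk
  rw [Nat.mul_div_cancel_left _ hd, show 3 * (d * l) = d * (3 * l) by ring,
    Nat.mul_dvd_mul_iff_left hd, Nat.mul_dvd_mul_iff_left hd]
  have hj : j ≤ 3 := by nlinarith
  have hj0 : 0 < j := Nat.pos_of_mul_pos_left he
  have : d * j = 3 * d ↔ j = 3 := by
    rw [mul_comm 3 d]; exact Nat.mul_right_inj hd.ne'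
  rw [this]
  interval_cases j <;> omega

lemma Bset_ncard (b : F) (k : ℕ) (hk : 0 < k) :
    (Bset (frk F Ω k : Ω →+* Ω) (algebraMap F Ω b)).ncard =
      ∑ d ∈ k.divisors.filter (fun d => ¬ 3 ∣ k / d), (Aset F Ω 0 b d).ncard := by
  classical
  rw [Bset_eq F b k]
  have hfin : {y : Ω | dg F y ∣ 3 * k ∧ ¬ dg F y ∣ k ∧ dg F (cub F 0 b y) ∣ k}.Finite :=
    (finite_dg F (3 * k) (by omega)).subset fun y hy => hy.1
  have key : ∀ y : Ω, dg F (cub F 0 b y) ∣ k → ((dg F y ∣ 3 * k ∧ ¬ dg F y ∣ k) ↔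
      (dg F y = 3 * dg F (cub F 0 b y) ∧ ¬ 3 ∣ k / dg F (cub F 0 b y))) := fun y hy =>
    arith1 _ _ _ (dg_pos F _) (dg_cub_dvd F 0 b y) (dg_pos F _) (dg_le_cub F 0 b y) hy
  rw [Set.ncard_eq_toFinset_card _ hfin,
    Finset.card_eq_sum_card_fiberwise (f := fun y => dg F (cub F 0 b y))
      (t := k.divisors.filter (fun d => ¬ 3 ∣ k / d))]
  · apply Finset.sum_congr rfl
    intro d hd
    rw [Finset.mem_filter, Nat.mem_divisors] at hd
    rw [← Set.ncard_coe_finset]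
    congr 1
    ext y
    simp only [Finset.coe_filter, Set.Finite.mem_toFinset, Set.mem_ofPred_eq, Aset]
    constructor
    · rintro ⟨⟨h1, h2, h3⟩, rfl⟩
      exact ⟨((key y h3).1 ⟨h1, h2⟩).1, rfl⟩
    · rintro ⟨h1, rfl⟩
      have := (key y hd.1.1).2 ⟨h1, hd.2⟩
      exact ⟨⟨this.1, this.2, hd.1.1⟩, rfl⟩
  · intro y hy
    simp only [Set.Finite.coe_toFinset, Set.mem_ofPred_eq] at hy
    simp only [Finset.coe_filter, Set.mem_ofPred_eq, Nat.mem_divisors]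
    exact ⟨⟨hy.2.2, hk.ne'⟩, ((key y hy.2.2).1 ⟨hy.1, hy.2.1⟩).2⟩

lemma Aset_shift (h3 : (3 : F) ≠ 0) (a b : F) (k : ℕ) :
    (Aset F Ω a b k).ncard = (Aset F Ω 0 (b - a ^ 2 / 3) k).ncard := by
  have h3' : (3 : Ω) ≠ 0 := by
    rw [← map_ofNat (algebraMap F Ω) 3]
    exact (_root_.map_ne_zero (algebraMap F Ω)).2 h3
  have key : ∀ y : Ω, cub F a b (y + algebraMap F Ω (-a / 3)) =
      cub F 0 (b - a ^ 2 / 3) y + algebraMap F Ω (2 * a ^ 3 / 27 - a * b / 3) := by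
    intro y
    simp only [cub, map_sub, map_div₀, map_mul, map_pow, map_ofNat, map_neg, map_zero]
    rw [show (27 : Ω) = 3 ^ 3 by norm_num]
    field_simp
    ring
  symm
  apply Set.ncard_congr (fun y _ => y + algebraMap F Ω (-a / 3))
  · rintro y ⟨h1, h2⟩
    exact ⟨by rw [dg_add, h1], by rw [key, dg_add, h2]⟩
  · intro y z _ _ h
    exact add_right_cancel h
  · rintro y ⟨h1, h2⟩
    have hy : (y - algebraMap F Ω (-a / 3)) + algebraMap F Ω (-a / 3) = y := by ring
    refine ⟨y - algebraMap F Ω (-a / 3), ⟨?_, ?_⟩, hy⟩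
    · rw [← dg_add F _ (-a / 3), hy, h1]
    · rw [← dg_add F _ (2 * a ^ 3 / 27 - a * b / 3), ← key, hy, h2]

end

lemma sum_Bset (F : Type*) {Ω : Type*} [Field F] [Fintype F] [Field Ω] [Algebra F Ω]
    [Algebra.IsAlgebraic F Ω] [IsAlgClosed Ω] (q : ℕ) (hq : Fintype.card F = q) (hq3 : ¬ 3 ∣ q) (ε : ℚ)
    (hε : (q % 3 = 1 ∧ ε = 1) ∨ (q % 3 = 2 ∧ ε = -1)) (k : ℕ) (hk : 0 < k) :
    ∑ b : F, ((Bset (frk F Ω k : Ω →+* Ω) (algebraMap F Ω b)).ncard : ℚ) =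
      (q + ε ^ k) * (q ^ k - ε ^ k) := by
  classical
  have hq1 : 1 < q := hq ▸ Fintype.one_lt_card
  have hQ2 : 1 < q ^ k := Nat.one_lt_pow hk.ne' hq1
  have hqF : (q : F) = 0 := by rw [← hq]; exact FiniteField.cast_card_eq_zero F
  have hqΩ : (q : Ω) = 0 := by
    have := congrArg (algebraMap F Ω) hqF
    simpa using this
  have hQ : ((q ^ k : ℕ) : Ω) = 0 := by push_cast; rw [hqΩ, zero_pow hk.ne']
  have h3 : (3 : Ω) ≠ 0 := by
    intro h
    have hc : IsCoprime (3 : ℤ) (q : ℤ) := by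
      apply (Nat.isCoprime_iff_coprime (m := 3)).2
      exact (Nat.Prime.coprime_iff_not_dvd Nat.prime_three).2 hq3
    obtain ⟨u, v, huv⟩ := hc
    have := congrArg (Int.cast : ℤ → Ω) huv
    push_cast at this
    rw [h, hqΩ] at this
    simp at this
  obtain ⟨ω, hω⟩ : ∃ ω : Ω, ω ^ 2 + ω + 1 = 0 := by
    have hd : (X ^ 2 + X + 1 : Polynomial Ω).degree = 2 := by compute_degree!
    obtain ⟨ω, h⟩ := IsAlgClosed.exists_root (X ^ 2 + X + 1 : Polynomial Ω) (by rw [hd]; decide)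
    exact ⟨ω, by simpa [IsRoot] using h⟩
  have hω3 : ω ^ 3 = 1 := by linear_combination (ω - 1) * hω
  have hσ : ∀ x, (frk F Ω k : Ω →+* Ω) x = x ^ (q ^ k) := by
    intro x; rw [RingHom.coe_coe, frk_apply, hq]
  have hb : ∀ b : F, (frk F Ω k : Ω →+* Ω) (algebraMap F Ω b) = algebraMap F Ω b := by
    intro b; rw [RingHom.coe_coe, AlgHom.commutes]
  have hcase : (q ^ k % 3 = 1 ∧ ε ^ k = 1) ∨ (q ^ k % 3 = 2 ∧ ε ^ k = -1) := by
    rcases hε with ⟨h, rfl⟩ | ⟨h, rfl⟩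
    · left; simp [Nat.pow_mod, h]
    · rcases Nat.even_or_odd k with he | he
      · left
        obtain ⟨l, rfl⟩ := he
        refine ⟨?_, by simp⟩
        rw [← two_mul, pow_mul, Nat.pow_mod, Nat.pow_mod q, h]
        simp
      · right
        refine ⟨?_, he.neg_one_pow⟩
        obtain ⟨l, rfl⟩ := he
        rw [pow_succ, pow_mul, Nat.mul_mod, Nat.pow_mod, Nat.pow_mod q, h]
        simp
  have hωQ : ω ^ (q ^ k) = ω ^ (q ^ k % 3) := by
    conv_lhs => rw [← Nat.div_add_mod (q ^ k) 3, pow_add, pow_mul, hω3, one_pow, one_mul]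
  rw [← Finset.add_sum_erase _ _ (Finset.mem_univ (0 : F)), map_zero]
  have hcard : ((Finset.univ.erase (0 : F)).card : ℚ) = q - 1 := by
    rw [Finset.card_erase_of_mem (Finset.mem_univ _), Finset.card_univ, hq]
    push_cast [hq1.le]; rfl
  rcases hcase with ⟨hm, he⟩ | ⟨hm, he⟩
  · have hωσ : (frk F Ω k : Ω →+* Ω) ω = ω := by rw [hσ, hωQ, hm, pow_one]
    rw [Bset_zero_split _ ω h3 hω (q ^ k) hQ2 hQ hσ hωσ,
      Finset.sum_congr rfl (fun b hb' => Bset_split _ _ ω h3 hω (q ^ k) hQ2 hQ hσ (hb b)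
        ((_root_.map_ne_zero _).2 (Finset.ne_of_mem_erase hb')) hωσ),
      Finset.sum_const, nsmul_eq_mul, hcard, he]
    push_cast; ring
  · have hωσ : (frk F Ω k : Ω →+* Ω) ω = ω ^ 2 := by rw [hσ, hωQ, hm]
    rw [Bset_zero_nonsplit _ ω h3 hω hωσ,
      Finset.sum_congr rfl (fun b hb' => Bset_nonsplit _ _ ω h3 hω (q ^ k) hQ2 hQ hσ (hb b)
        ((_root_.map_ne_zero _).2 (Finset.ne_of_mem_erase hb')) hωσ),
      Finset.sum_const, nsmul_eq_mul, hcard, he]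
    push_cast; ring

lemma chi_inversion (A B : ℕ → ℚ)
    (h : ∀ k, 0 < k → B k = ∑ d ∈ k.divisors.filter (fun d => ¬ 3 ∣ k / d), A d)
    (m : ℕ) (hm : 0 < m) :
    A m = ∑ d ∈ m.divisors.filter (fun d => ¬ 3 ∣ d),
      ((ArithmeticFunction.moebius d : ℤ) : ℚ) * B (m / d) := by
  classical
  let Z : ArithmeticFunction ℚ := ⟨fun n => if 3 ∣ n then 0 else 1, by simp⟩
  let M : ArithmeticFunction ℚ :=
    ⟨fun n => if 3 ∣ n then 0 else ((ArithmeticFunction.moebius n : ℤ) : ℚ), by simp⟩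
  let A' : ArithmeticFunction ℚ := ⟨fun n => if n = 0 then 0 else A n, by simp⟩
  let B' : ArithmeticFunction ℚ := ⟨fun n => if n = 0 then 0 else B n, by simp⟩
  have hMZ : M * Z = 1 := by
    have hz := ArithmeticFunction.coe_moebius_mul_coe_zeta (R := ℚ)
    ext n
    have hz' := congrArg (fun f : ArithmeticFunction ℚ => f n) hz
    rw [ArithmeticFunction.mul_apply] at hz' ⊢
    by_cases hn : 3 ∣ n
    · rw [ArithmeticFunction.one_apply_ne (by omega)]
      apply Finset.sum_eq_zero
      rintro ⟨x, y⟩ hxy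
      rw [Nat.mem_divisorsAntidiagonal] at hxy
      have : 3 ∣ x ∨ 3 ∣ y := (Nat.Prime.dvd_mul Nat.prime_three).1 (by rw [hxy.1]; exact hn)
      rcases this with h | h <;> simp [M, Z, h]
    · rw [← hz']
      apply Finset.sum_congr rfl
      rintro ⟨x, y⟩ hxy
      rw [Nat.mem_divisorsAntidiagonal] at hxy
      have hx : ¬ 3 ∣ x := fun h => hn (hxy.1 ▸ h.mul_right y)
      have hy : ¬ 3 ∣ y := fun h => hn (hxy.1 ▸ h.mul_left x)
      have hy0 : y ≠ 0 := by rintro rfl; simp at hy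
      simp [M, Z, hx, hy, hy0]
  have hB : B' = Z * A' := by
    ext n
    rcases Nat.eq_zero_or_pos n with rfl | hn
    · simp
    rw [ArithmeticFunction.mul_apply]
    have : B' n = B n := by simp [B', hn.ne']
    rw [this, h n hn, Finset.sum_filter,
      Nat.sum_divisorsAntidiagonal' (f := fun x y => Z x * A' y)]
    apply Finset.sum_congr rfl
    intro d hd
    have hd0 : d ≠ 0 := (Nat.pos_of_mem_divisors hd).ne'
    by_cases h3 : 3 ∣ n / d <;> simp [Z, A', h3, hd0]
  have hA : A' = M * B' := by rw [hB, ← mul_assoc, hMZ, one_mul]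
  have hAm := congrArg (fun f : ArithmeticFunction ℚ => f m) hA
  rw [ArithmeticFunction.mul_apply, Nat.sum_divisorsAntidiagonal (f := fun x y => M x * B' y)]
    at hAm
  have : A' m = A m := by simp [A', hm.ne']
  rw [← this, hAm, Finset.sum_filter]
  apply Finset.sum_congr rfl
  intro d hd
  have hd0 : m / d ≠ 0 :=
    (Nat.div_pos (Nat.divisor_le hd) (Nat.pos_of_mem_divisors hd)).ne'
  by_cases h3 : 3 ∣ d <;> simp [M, B', h3, hd0]

section
variable (F : Type*) {Ω : Type*} [Field F] [Fintype F] [Field Ω] [Algebra F Ω]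
  [Algebra.IsAlgebraic F Ω]

lemma aeval_rat (g h f : F[X]) (γ : Ω) : aeval γ (ratTransform g h f) =
    ∑ i ∈ Finset.range (f.natDegree + 1),
      algebraMap F Ω (f.coeff i) * (aeval γ g) ^ i * (aeval γ h) ^ (f.natDegree - i) := by
  simp [ratTransform]

lemma aeval_rat_ne (g h f : F[X]) (γ : Ω) (hh : aeval γ h ≠ 0) : aeval γ (ratTransform g h f) =
    (aeval γ h) ^ f.natDegree * aeval (aeval γ g / aeval γ h) f := by
  rw [aeval_rat, aeval_eq_sum_range (p := f), Finset.mul_sum]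
  apply Finset.sum_congr rfl
  intro i hi
  have hi' : i ≤ f.natDegree := by simpa [Nat.lt_succ_iff] using hi
  obtain ⟨j, hj⟩ := Nat.exists_eq_add_of_le hi'
  rw [Algebra.smul_def, hj, Nat.add_sub_cancel_left, pow_add, div_pow]
  field_simp

lemma aeval_rat_zero (g h f : F[X]) (hf : f.Monic) (γ : Ω) (hh : aeval γ h = 0) :
    aeval γ (ratTransform g h f) = (aeval γ g) ^ f.natDegree := by
  rw [aeval_rat, Finset.sum_range_succ, Finset.sum_eq_zero]
  · simp [hf.coeff_natDegree]
  · intro i hi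
    rw [Finset.mem_range] at hi
    rw [hh, zero_pow (by omega), mul_zero]

lemma rat_monic (h f : F[X]) (hf : f.Monic) (hh : h.natDegree ≤ 2) :
    (ratTransform (X ^ 3) h f).Monic ∧
      (ratTransform (X ^ 3) h f).natDegree = 3 * f.natDegree := by
  have e : ratTransform (X ^ 3) h f = X ^ (3 * f.natDegree) +
      ∑ i ∈ Finset.range f.natDegree, C (f.coeff i) * (X ^ 3) ^ i * h ^ (f.natDegree - i) := by
    rw [ratTransform, Finset.sum_range_succ, add_comm]
    simp [hf.coeff_natDegree, pow_mul]
  have hlt : (∑ i ∈ Finset.range f.natDegree,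
      C (f.coeff i) * (X ^ 3) ^ i * h ^ (f.natDegree - i)).degree < ((3 * f.natDegree : ℕ) : WithBot ℕ) := by
    refine lt_of_le_of_lt (degree_sum_le _ _) ?_
    rw [Finset.sup_lt_iff (WithBot.bot_lt_coe _)]
    intro i hi
    rw [Finset.mem_range] at hi
    refine lt_of_le_of_lt degree_le_natDegree ?_
    rw [Nat.cast_lt]
    have h1 : (C (f.coeff i) * (X ^ 3 : F[X]) ^ i).natDegree ≤ 3 * i := by
      rw [← pow_mul]; exact natDegree_C_mul_X_pow_le _ _
    have h2 : (h ^ (f.natDegree - i)).natDegree ≤ (f.natDegree - i) * 2 :=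
      natDegree_pow_le.trans (Nat.mul_le_mul_left _ hh)
    have := natDegree_mul_le (p := C (f.coeff i) * (X ^ 3 : F[X]) ^ i) (q := h ^ (f.natDegree - i))
    omega
  rw [e]
  refine ⟨monic_X_pow_add hlt, ?_⟩
  rw [natDegree_add_eq_left_of_degree_lt (by rwa [degree_X_pow]), natDegree_X_pow]

lemma dg_zero : dg F (0 : Ω) = 1 := by simp [dg]

lemma Irred_ncard [IsAlgClosed Ω] (a b : F) (m : ℕ) (hm : 1 < m) :
    (Aset F Ω a b m).ncard =
      (3 * m) * (IrredSet (X ^ 3 : F[X]) (C b * X ^ 2 + C a * X + 1) m).ncard := by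
  classical
  obtain ⟨h, hh⟩ : ∃ h : F[X], h = C b * X ^ 2 + C a * X + 1 := ⟨_, rfl⟩
  rw [← hh]
  have hdeg : h.natDegree ≤ 2 := by rw [hh]; compute_degree
  have hev : ∀ y : Ω, y ≠ 0 → aeval y⁻¹ h = y⁻¹ ^ 3 * cub F a b y := by
    intro y hy
    rw [hh]
    simp [cub]
    field_simp
    ring
  have hev' : ∀ y : Ω, y ≠ 0 → cub F a b y ≠ 0 →
      aeval y⁻¹ (X ^ 3 : F[X]) / aeval y⁻¹ h = (cub F a b y)⁻¹ := by
    intro y hy hc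
    rw [hev y hy]
    simp only [map_pow, aeval_X]
    field_simp
  have hfin : (Aset F Ω a b m).Finite :=
    (finite_dg F (3 * m) (by omega)).subset fun y hy => hy.1.dvd
  have hne : ∀ y : Ω, y ∈ Aset F Ω a b m → y ≠ 0 ∧ cub F a b y ≠ 0 := by
    rintro y ⟨h1, h2⟩
    constructor
    · rintro rfl; rw [dg_zero] at h1; omega
    · intro h0; rw [h0, dg_zero] at h2; omega
  have hev2 : ∀ y ∈ Aset F Ω a b m, aeval y⁻¹ h ≠ 0 := by
    intro y hy
    obtain ⟨hy0, hc⟩ := hne y hy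
    rw [hev y hy0]
    exact mul_ne_zero (pow_ne_zero _ (inv_ne_zero hy0)) hc
  have hroot : ∀ y ∈ Aset F Ω a b m,
      aeval y⁻¹ (ratTransform (X ^ 3) h (minpoly F (cub F a b y)⁻¹)) = 0 := by
    intro y hy
    obtain ⟨hy0, hc⟩ := hne y hy
    rw [aeval_rat_ne F _ _ _ _ (hev2 y hy), hev' y hy0 hc, minpoly.aeval, mul_zero]
  have hmaps : ∀ y ∈ Aset F Ω a b m,
      minpoly F (cub F a b y)⁻¹ ∈ IrredSet (X ^ 3 : F[X]) h m := by
    intro y hy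
    have hInt : IsIntegral F (cub F a b y)⁻¹ := Algebra.IsIntegral.isIntegral _
    have hInt' : IsIntegral F y⁻¹ := Algebra.IsIntegral.isIntegral _
    have hd : (minpoly F (cub F a b y)⁻¹).natDegree = m := by
      have := dg_inv F (cub F a b y)
      rw [hy.2] at this
      exact this
    have hd' : (minpoly F y⁻¹).natDegree = 3 * m := by
      have := dg_inv F y
      rw [hy.1] at this
      exact this
    refine ⟨minpoly.monic hInt, minpoly.irreducible hInt, hd, ?_⟩
    obtain ⟨r1, r2⟩ := rat_monic F h _ (minpoly.monic hInt) hdeg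
    have := eq_of_monic_of_dvd_of_natDegree_le (minpoly.monic hInt') r1
      (minpoly.dvd F _ (hroot y hy)) (by rw [r2, hd, hd'])
    rw [this]
    exact minpoly.irreducible hInt'
  have hfib : ∀ f ∈ IrredSet (X ^ 3 : F[X]) h m,
      {y | y ∈ Aset F Ω a b m ∧ minpoly F (cub F a b y)⁻¹ = f}.ncard = 3 * m := by
    rintro f ⟨f1, f2, f3, f4⟩
    obtain ⟨r1, r2⟩ := rat_monic F h f f1 hdeg
    have hc := card_rootSet_eq_natDegree (K := Ω) (PerfectField.separable_of_irreducible f4)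
      (IsAlgClosed.splits _)
    rw [r2, f3] at hc
    rw [← hc, ← Nat.card_eq_fintype_card, Nat.card_coe_set_eq]
    apply Set.ncard_congr (fun y _ => y⁻¹)
    · rintro y ⟨hy, rfl⟩
      rw [mem_rootSet]
      exact ⟨r1.ne_zero, hroot y hy⟩
    · intro y z _ _ hyz
      exact inv_injective hyz
    · intro γ hγ
      rw [mem_rootSet] at hγ
      have hmin := minpoly.eq_of_irreducible_of_monic f4 hγ.2 r1
      have hdγ : dg F γ = 3 * m := by rw [dg, ← hmin, r2, f3]
      have hγ0 : γ ≠ 0 := by rintro rfl; rw [dg_zero] at hdγ; omega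
      have hy0 := inv_ne_zero hγ0
      have hc0 : cub F a b γ⁻¹ ≠ 0 := by
        intro h0
        have h1 := hev γ⁻¹ hy0
        rw [h0, mul_zero, inv_inv] at h1
        have h2 := aeval_rat_zero F (X ^ 3) h f f1 γ h1
        rw [hγ.2] at h2
        simp only [map_pow, aeval_X] at h2
        exact pow_ne_zero _ (pow_ne_zero _ hγ0) h2.symm
      have hh0 : aeval γ h ≠ 0 := by
        have h1 := hev γ⁻¹ hy0
        rw [inv_inv] at h1
        rw [h1]
        exact mul_ne_zero (pow_ne_zero _ hγ0) hc0
      have hf0 : aeval (cub F a b γ⁻¹)⁻¹ f = 0 := by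
        have h1 := aeval_rat_ne F (X ^ 3) h f γ hh0
        have h2 := hev' γ⁻¹ hy0 hc0
        rw [inv_inv] at h2
        rw [hγ.2, h2] at h1
        exact (mul_eq_zero.1 h1.symm).resolve_left (pow_ne_zero _ hh0)
      have hmf := minpoly.eq_of_irreducible_of_monic f2 hf0 f1
      refine ⟨γ⁻¹, ⟨⟨?_, ?_⟩, hmf.symm⟩, inv_inv γ⟩
      · rw [dg_inv, hdγ]
      · rw [← dg_inv, dg, ← hmf, f3]
  have hIfin : (IrredSet (X ^ 3 : F[X]) h m).Finite := by
    apply (hfin.image (fun y => minpoly F (cub F a b y)⁻¹)).subset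
    intro f hf
    have h1 := hfib f hf
    obtain ⟨y, hy1, hy2⟩ := Set.nonempty_of_ncard_ne_zero (by rw [h1]; omega)
    exact ⟨y, hy1, hy2⟩
  rw [Set.ncard_eq_toFinset_card _ hfin, Set.ncard_eq_toFinset_card _ hIfin,
    Finset.card_eq_sum_card_fiberwise (f := fun y => minpoly F (cub F a b y)⁻¹)
      (t := hIfin.toFinset)]
  · rw [Finset.sum_const_nat (m := 3 * m), mul_comm]
    intro f hf
    rw [Set.Finite.mem_toFinset] at hf
    rw [← hfib f hf, ← Set.ncard_coe_finset]
    congr 1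
    ext y
    simp
  · intro y hy
    simp only [Set.Finite.coe_toFinset] at hy ⊢
    exact hmaps y hy

end

/-- Theorem 18: for `3 ∤ q` and `m > 1`, the sum of `|𝓘(x³, h, m, q)|` over all
`h(x) = 1 + ax + bx²` (i.e. all `h` of degree at most `2` with `h(0) = 1`) equals
`(q/(3m)) ∑_{d ∣ m, 3 ∤ d} μ(d)(q + ε^{m/d})(q^{m/d} − ε^{m/d})`, where `ε = 1` if
`q ≡ 1 (mod 3)` and `ε = −1` if `q ≡ −1 (mod 3)`. -/
theorem stmt18 {F : Type*} [Field F] [Fintype F] (q : ℕ) (hq : Fintype.card F = q)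
    (hq3 : ¬ 3 ∣ q) (m : ℕ) (hm : 1 < m) :
    ∀ ε : ℚ, ((q % 3 = 1 ∧ ε = 1) ∨ (q % 3 = 2 ∧ ε = -1)) →
      (∑ p : F × F,
          ((IrredSet (X ^ 3 : F[X]) (C p.2 * X ^ 2 + C p.1 * X + 1) m).ncard : ℚ)) =
        ((q : ℚ) / (3 * m)) * ∑ d ∈ m.divisors.filter (fun d => ¬ 3 ∣ d),
          ((ArithmeticFunction.moebius d : ℤ) : ℚ) *
            ((q : ℚ) + ε ^ (m / d)) * ((q : ℚ) ^ (m / d) - ε ^ (m / d)) := by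
  intro ε hε
  let Ω := AlgebraicClosure F
  have h3 : (3 : F) ≠ 0 := by
    intro h
    have hqF : (q : F) = 0 := by rw [← hq]; exact FiniteField.cast_card_eq_zero F
    have hc : IsCoprime (3 : ℤ) (q : ℤ) := by
      apply (Nat.isCoprime_iff_coprime (m := 3)).2
      exact (Nat.Prime.coprime_iff_not_dvd Nat.prime_three).2 hq3
    obtain ⟨u, v, huv⟩ := hc
    have := congrArg (Int.cast : ℤ → F) huv
    push_cast at this
    rw [h, hqF] at this
    simp at this
  have hm0 : (m : ℚ) ≠ 0 := by positivity
  have e1 : ∀ p : F × F,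
      ((IrredSet (X ^ 3 : F[X]) (C p.2 * X ^ 2 + C p.1 * X + 1) m).ncard : ℚ) =
        1 / (3 * m) * ((Aset F Ω 0 (p.2 - p.1 ^ 2 / 3) m).ncard : ℚ) := by
    intro p
    rw [← Aset_shift F h3, Irred_ncard F p.1 p.2 m hm]
    push_cast
    field_simp
  have e2 : ∀ a : F, ∑ b : F, ((Aset F Ω 0 (b - a ^ 2 / 3) m).ncard : ℚ) =
      ∑ b : F, ((Aset F Ω 0 b m).ncard : ℚ) := fun a =>
    (Equiv.subRight (a ^ 2 / 3)).sum_comp (fun b => ((Aset F Ω 0 b m).ncard : ℚ))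
  have e3 := chi_inversion (fun k => ∑ b : F, ((Aset F Ω 0 b k).ncard : ℚ))
    (fun k => ∑ b : F, ((Bset (frk F Ω k : Ω →+* Ω) (algebraMap F Ω b)).ncard : ℚ))
    (by
      intro k hk
      simp only [Bset_ncard F _ k hk]
      push_cast
      exact Finset.sum_comm) m (by omega)
  rw [Finset.sum_congr rfl (fun p _ => e1 p), ← Finset.mul_sum, Fintype.sum_prod_type]
  simp only [e2]
  rw [Finset.sum_const, Finset.card_univ, hq, nsmul_eq_mul, e3, ← mul_assoc]
  congr 1
  · ring
  · apply Finset.sum_congr rfl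
    intro d hd
    have hd' := Finset.mem_of_mem_filter d hd
    rw [sum_Bset F q hq hq3 ε hε (m / d)
      (Nat.div_pos (Nat.divisor_le hd') (Nat.pos_of_mem_divisors hd')), mul_assoc]
end

section
/- Let q be a power of 3 and let m > 1 be an integer. Then the sum of |𝓘(x^3, h, m, q)| over all polynomials h(x) ∈ F_q[x] of degree at most 2 with h(0) = 1 equals ((q−1)/(3m)) ∑_{d ∣ m, 3 ∤ d} μ(d) (q + (3 + (−1)^{m/d})/2) q^{m/d}, where μ is the Möbius function. -/
open Polynomial

theorem s19_deg_dvd {F K : Type*} [Field F] [Finite F] [Field K] [Algebra F K] [Finite K]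
    (x : K) (n : ℕ) : (minpoly F x).natDegree ∣ n ↔ x ^ (Nat.card F ^ n) = x := by
  have hi : IsIntegral F x := Algebra.IsIntegral.isIntegral x
  rw [(minpoly.irreducible hi).natDegree_dvd_iff_dvd_X_pow_card_pow_sub_X, minpoly.dvd_iff]
  simp [sub_eq_zero]

theorem s19_exists_root {F K : Type*} [Field F] [Finite F] [Field K] [Algebra F K] [Finite K]
    (p : F[X]) (hp : Irreducible p) (h : p.natDegree ∣ Module.finrank F K) :
    ∃ y : K, aeval y p = 0 := by
  haveI : Fact (Irreducible p) := ⟨hp⟩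
  have h1 : Module.finrank F (AdjoinRoot p) = p.natDegree :=
    finrank_quotient_span_eq_natDegree (f := p)
  obtain ⟨φ⟩ := FiniteField.nonempty_algHom_of_finrank_dvd (F := F) (K := AdjoinRoot p) (L := K)
    (by rwa [h1])
  exact ⟨φ (AdjoinRoot.root p), by rw [aeval_algHom_apply]; simp⟩

theorem s19_card_roots {F K : Type*} [Field F] [Finite F] [Field K] [Algebra F K] [Finite K]
    (p : F[X]) (hp : Irreducible p) (hm : p.Monic) (h : p.natDegree ∣ Module.finrank F K) :
    Nat.card {x : K // minpoly F x = p} = p.natDegree := by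
  haveI : Fact (Irreducible p) := ⟨hp⟩
  have h1 : Module.finrank F (AdjoinRoot p) = p.natDegree :=
    finrank_quotient_span_eq_natDegree (f := p)
  have h2 := FiniteField.natCard_algHom_of_finrank_dvd (F := F) (K := AdjoinRoot p) (L := K)
    (by rwa [h1])
  rw [h1] at h2
  rw [← h2, Nat.card_congr (AdjoinRoot.equiv K F p hp.ne_zero)]
  refine Nat.card_congr (Equiv.subtypeEquivRight fun x => ?_)
  rw [mem_aroots]
  constructor
  · rintro rfl
    exact ⟨hp.ne_zero, minpoly.aeval F x⟩
  · rintro ⟨_, hx⟩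
    exact (minpoly.eq_of_irreducible_of_monic hp hx hm).symm

section cubic
variable {L : Type*} [Field L] [Fintype L] [DecidableEq L] [CharP L 3]

theorem s19_three : (3 : L) = 0 := by
  have := CharP.cast_eq_zero L 3
  exact_mod_cast this

theorem s19_fiber (a b β : L) (hβ : a ≠ 0 → β ≠ (b/a)^3 + a * (b/a)^2 + b * (b/a)) :
    (if ∀ y : L, y^3 + a*y^2 + b*y ≠ β then (3:ℤ) else 0) =
      ((Finset.univ.filter fun y : L => y^3 + a*y^2 + b*y = β).card : ℤ)^2
        - 4 * ((Finset.univ.filter fun y : L => y^3 + a*y^2 + b*y = β).card : ℤ) + 3 := by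
  have h3 : (3:L) = 0 := s19_three
  split_ifs with h
  · rw [Finset.filter_false_of_mem (fun y _ => h y)]; simp
  · push Not at h
    obtain ⟨x, hx⟩ := h
    by_cases hu : ∀ y : L, y^3 + a*y^2 + b*y = β → y = x
    · have : (Finset.univ.filter fun y : L => y^3 + a*y^2 + b*y = β) = {x} := by
        ext y; simp; exact ⟨hu y, fun h => h ▸ hx⟩
      rw [this]; simp
    · push Not at hu
      obtain ⟨y, hy, hyx⟩ := hu
      have hxy : x - y ≠ 0 := sub_ne_zero.2 hyx.symm
      have e1 : x^2 + x*y + y^2 + a*(x+y) + b = 0 := by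
        apply mul_left_cancel₀ hxy
        linear_combination hx - hy
      set z := -a - x - y with hz
      have key : ∀ w : L, w^3 + a*w^2 + b*w - β = (w-x)*(w-y)*(w-z) := by
        intro w
        rw [hz]; linear_combination (w-x) * e1 + hx
      have dbl : ∀ u v : L, u ≠ v → u^3 + a*u^2 + b*u = β → u^2 + u*v + v^2 + a*(u+v) + b = 0 →
          -a - u - v ≠ u := by
        intro u v huv hu e huz
        have hav : v = -a - 2*u := by linear_combination -huz
        have ha : a ≠ 0 := by
          rintro rfl
          apply huv
          rw [hav]; linear_combination u * h3
        apply hβ ha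
        have hua : u = b / a := by
          rw [eq_div_iff ha]
          subst hav
          linear_combination (-1:L) * e + (u^2  + a*u) * h3
        rw [← hua, hu]
      have hzx : z ≠ x := dbl x y hyx.symm hx e1
      have hzy : z ≠ y := by
        have := dbl y x hyx hy (by linear_combination e1)
        intro h; apply this; rw [hz] at h; linear_combination h
      have : (Finset.univ.filter fun y : L => y^3 + a*y^2 + b*y = β) = {x, y, z} := by
        ext w
        simp only [Finset.mem_filter, Finset.mem_univ, true_and, Finset.mem_insert,
          Finset.mem_singleton]
        rw [← sub_eq_zero, key w]
        simp [sub_eq_zero, or_assoc]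
      rw [this, Finset.card_insert_of_notMem, Finset.card_insert_of_notMem]
      · simp
      · simpa using hzy.symm
      · simp [hyx.symm, hzx.symm]

theorem s19_fiber0 (a b : L) (ha : a ≠ 0) :
    (Finset.univ.filter fun y : L => y^3 + a*y^2 + b*y =
      (b/a)^3 + a * (b/a)^2 + b * (b/a)).card = 2 := by
  have h3 : (3:L) = 0 := s19_three
  have : (Finset.univ.filter fun y : L => y^3 + a*y^2 + b*y =
      (b/a)^3 + a * (b/a)^2 + b * (b/a)) = {b/a, b/a - a} := by
    ext w
    simp only [Finset.mem_filter, Finset.mem_univ, true_and, Finset.mem_insert,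
      Finset.mem_singleton]
    obtain ⟨c, hc⟩ : ∃ c, c = b/a := ⟨_, rfl⟩
    have hb : b = c * a := by rw [hc]; field_simp
    rw [← hc, hb, ← sub_eq_zero]
    have : w ^ 3 + a * w ^ 2 + c * a * w - (c ^ 3 + a * c ^ 2 + c * a * c)
      = (w - c) * (w-c) * (w - (c - a)) := by
      linear_combination (c*w^2 - c^2*w + a*c*w - a*c^2) * h3
    rw [this]; simp [sub_eq_zero]
  rw [this, Finset.card_pair]
  intro h; apply ha; linear_combination h

theorem s19_pairs (a b : L) :
    ∑ β : L, ((Finset.univ.filter fun y : L => y^3 + a*y^2 + b*y = β).card : ℤ)^2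
     = Fintype.card L + ((Finset.univ.filter fun p : L × L =>
        p.2 ≠ 0 ∧ p.2^2 - a * p.1 - a * p.2 + b = 0).card : ℤ) := by
  have h3 : (3:L) = 0 := s19_three
  have h1 : ∑ β : L, ((Finset.univ.filter fun y : L => y^3 + a*y^2 + b*y = β).card)^2
     = (Finset.univ.filter fun p : L × L =>
       p.1^3 + a*p.1^2 + b*p.1 = p.2^3 + a*p.2^2 + b*p.2).card := by
    rw [Finset.card_eq_sum_card_fiberwise (f := fun p : L × L => p.1^3 + a*p.1^2 + b*p.1)
      (t := Finset.univ) (fun _ _ => Finset.mem_coe.2 (Finset.mem_univ _))]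
    refine Finset.sum_congr rfl fun β _ => ?_
    rw [sq, ← Finset.card_product]
    congr 1
    ext ⟨x, y⟩
    simp only [Finset.mem_product, Finset.mem_filter, Finset.mem_univ, true_and]
    constructor
    · rintro ⟨h, h'⟩; exact ⟨h.trans h'.symm, h⟩
    · rintro ⟨h, h'⟩; exact ⟨h', h ▸ h'⟩
  have h2 : (Finset.univ.filter fun p : L × L =>
       p.1^3 + a*p.1^2 + b*p.1 = p.2^3 + a*p.2^2 + b*p.2).card
      = (Finset.univ.filter fun p : L × L =>
        p.2 = 0 ∨ p.2^2 - a * p.1 - a * p.2 + b = 0).card := by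
    refine Finset.card_bij' (fun p _ => (p.1, p.1 - p.2)) (fun p _ => (p.1, p.1 - p.2)) ?_ ?_
      (by simp) (by simp)
    · rintro ⟨x, y⟩ h
      simp only [Finset.mem_filter, Finset.mem_univ, true_and] at h ⊢
      rw [← mul_eq_zero]
      linear_combination h + (-x^2*y + x*y^2  - a*x^2 + a*x*y) * h3
    · rintro ⟨x, y⟩ h
      simp only [Finset.mem_filter, Finset.mem_univ, true_and] at h ⊢
      rw [← mul_eq_zero] at h
      linear_combination h + (x*a*y - x*y^2 + x^2*y) * h3
  have h4 : (Finset.univ.filter fun p : L × L =>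
        p.2 = 0 ∨ p.2^2 - a * p.1 - a * p.2 + b = 0).card
      = Fintype.card L + (Finset.univ.filter fun p : L × L =>
        p.2 ≠ 0 ∧ p.2^2 - a * p.1 - a * p.2 + b = 0).card := by
    have hd : (Finset.univ.filter fun p : L × L =>
        p.2 = 0 ∨ p.2^2 - a * p.1 - a * p.2 + b = 0)
        = (Finset.univ.filter fun p : L × L => p.2 = 0) ∪ (Finset.univ.filter fun p : L × L =>
        p.2 ≠ 0 ∧ p.2^2 - a * p.1 - a * p.2 + b = 0) := by
      ext p
      simp only [Finset.mem_filter, Finset.mem_univ, true_and, Finset.mem_union]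
      tauto
    rw [hd, Finset.card_union_of_disjoint]
    · congr 1
      rw [← Finset.card_univ]
      exact Finset.card_bij' (fun p _ => p.1) (fun x _ => (x, 0)) (by simp) (by simp)
        (by rintro ⟨x, y⟩ h; simp at h; simp [h]) (by simp)
    · rw [Finset.disjoint_filter]
      intro p _ h1 h2
      exact h2.1 h1
  exact_mod_cast h1.trans (h2.trans h4)

theorem s19_total (a b : L) :
    3 * ((Finset.univ.filter fun β : L => ∀ y : L, y^3 + a*y^2 + b*y ≠ β).card : ℤ) =
      ((Finset.univ.filter fun p : L × L =>
        p.2 ≠ 0 ∧ p.2^2 - a * p.1 - a * p.2 + b = 0).card : ℤ) + if a = 0 then 0 else 1 := by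
  have h1 : ∀ β : L, (if ∀ y : L, y^3 + a*y^2 + b*y ≠ β then (3:ℤ) else 0) =
      ((Finset.univ.filter fun y : L => y^3 + a*y^2 + b*y = β).card : ℤ)^2
        - 4 * ((Finset.univ.filter fun y : L => y^3 + a*y^2 + b*y = β).card : ℤ) + 3
      + if a ≠ 0 ∧ β = (b/a)^3 + a * (b/a)^2 + b * (b/a) then 1 else 0 := by
    intro β
    split_ifs with h h' h'
    · exact absurd h'.2.symm (h _)
    · have := s19_fiber a b β (by tauto)
      rw [if_pos h] at this
      linarith
    · rw [h'.2, s19_fiber0 a b h'.1]; norm_num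
    · have := s19_fiber a b β (by tauto)
      rw [if_neg h] at this
      linarith
  have h2 : ∑ β : L, ((Finset.univ.filter fun y : L => y^3 + a*y^2 + b*y = β).card : ℤ)
      = Fintype.card L := by
    have := Finset.card_eq_sum_card_fiberwise (s := (Finset.univ : Finset L))
      (f := fun y : L => y^3 + a*y^2 + b*y)
      (t := Finset.univ) (fun _ _ => Finset.mem_coe.2 (Finset.mem_univ _))
    rw [Finset.card_univ] at this
    rw [this]; push_cast; rfl
  have h3 := Finset.sum_congr (rfl : (Finset.univ : Finset L) = Finset.univ) (fun β _ => h1 β)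
  rw [Finset.sum_add_distrib, Finset.sum_add_distrib, Finset.sum_sub_distrib, s19_pairs,
    ← Finset.mul_sum, h2, Finset.sum_ite, Finset.sum_const, Finset.sum_const] at h3
  have h5 : (∑ β : L, if a ≠ 0 ∧ β = (b/a)^3 + a * (b/a)^2 + b * (b/a) then (1:ℤ) else 0)
    = if a = 0 then 0 else 1 := by
    by_cases ha : a = 0 <;> simp [ha]
  rw [h5] at h3
  simp only [Finset.sum_const, Finset.card_univ, nsmul_eq_mul, mul_zero, add_zero] at h3
  linarith

theorem s19_total_ne (a b : L) (ha : a ≠ 0) :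
    3 * ((Finset.univ.filter fun β : L => ∀ y : L, y^3 + a*y^2 + b*y ≠ β).card : ℤ) =
      Fintype.card L := by
  rw [s19_total, if_neg ha]
  have : (Finset.univ.filter fun p : L × L =>
        p.2 ≠ 0 ∧ p.2^2 - a * p.1 - a * p.2 + b = 0).card =
        (Finset.univ.filter fun t : L => t ≠ 0).card := by
    refine Finset.card_bij' (fun p _ => p.2) (fun t _ => ((t^2 - a * t + b)/a, t)) ?_ ?_ ?_ ?_
    · simp +contextual
    · intro t ht
      simp only [Finset.mem_filter, Finset.mem_univ, true_and] at ht ⊢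
      refine ⟨ht, ?_⟩
      field_simp; ring
    · rintro ⟨x, t⟩ h
      simp only [Finset.mem_filter, Finset.mem_univ, true_and] at h ⊢
      ext
      · simp only
        rw [div_eq_iff ha]; linear_combination h.2
      · rfl
    · simp
  rw [this, Finset.filter_ne', Finset.card_erase_of_mem (Finset.mem_univ _), Finset.card_univ]
  have := Fintype.card_pos (α := L)
  omega

theorem s19_total_zero (a b : L) (ha : a = 0) :
    3 * ((Finset.univ.filter fun β : L => ∀ y : L, y^3 + a*y^2 + b*y ≠ β).card : ℤ) =
      Fintype.card L * (Finset.univ.filter fun t : L => t ≠ 0 ∧ t^2 = -b).card := by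
  subst ha
  rw [s19_total, if_pos rfl, add_zero, ← Finset.card_univ]
  norm_cast
  rw [← Finset.card_product]
  congr 1
  ext ⟨x, t⟩
  simp [add_eq_zero_iff_eq_neg]

end cubic


theorem s19_gcd (q e : ℕ) (hq : Odd q) : (q ^ e - 1).gcd (2 * (q - 1)) =
    (q - 1) * (if Even e then 2 else 1) := by
  have h1 : q ^ e - 1 = (q - 1) * ∑ i ∈ Finset.range e, q ^ i := by
    obtain ⟨k, rfl⟩ := hq
    have := mul_geom_sum ((2 * k + 1 : ℕ) : ℤ) e
    have h0 : 1 ≤ (2 * k + 1) ^ e := Nat.one_le_pow _ _ (by omega)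
    zify [h0]
    rw [show 2 * k + 1 - 1 = 2 * k by omega]
    push_cast at this ⊢
    rw [← this]; ring
  rw [h1, mul_comm 2, Nat.gcd_mul_left]
  congr 1
  have h2 : Even (∑ i ∈ Finset.range e, q ^ i) ↔ Even e := by
    clear h1
    induction e with
    | zero => simp
    | succ n ih =>
      have h3 : ¬ Even (q ^ n) := Nat.not_even_iff_odd.2 hq.pow
      rw [Finset.sum_range_succ, Nat.even_add, Nat.even_add_one, ih]
      tauto
  split_ifs with h
  · exact Nat.gcd_eq_right (even_iff_two_dvd.1 (h2.2 h))
  · have := (Nat.not_even_iff_odd.1 (fun h' => h (h2.1 h')))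
    exact Nat.coprime_two_right.2 this

theorem s19_sq_count {F L : Type*} [Field F] [Fintype F] [DecidableEq F] [Field L] [Algebra F L]
    [Fintype L] [DecidableEq L] [CharP F 3] (e : ℕ)
    (hc : Fintype.card L = Fintype.card F ^ e) :
    ∑ b : F, (Finset.univ.filter fun t : L => t ≠ 0 ∧ t^2 = -(algebraMap F L b)).card
      = (Fintype.card F - 1) * (if Even e then 2 else 1) := by
  have hodd : Odd (Fintype.card F) := by
    have : ringChar F ≠ 2 := by rw [ringChar.eq F 3]; norm_num
    exact Nat.odd_iff.2 (FiniteField.odd_card_of_char_ne_two this)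
  rw [← s19_gcd _ _ hodd]
  have h1 : (Fintype.card F ^ e - 1).gcd (2 * (Fintype.card F - 1)) =
      Nat.card (powMonoidHom (2 * (Fintype.card F - 1)) : Lˣ →* Lˣ).ker := by
    rw [IsCyclic.card_powMonoidHom_ker, Nat.card_units, Nat.card_eq_fintype_card, hc]
  rw [h1]
  have h2 : ∑ b : F, (Finset.univ.filter fun t : L => t ≠ 0 ∧ t^2 = -(algebraMap F L b)).card
      = (Finset.univ.filter fun t : L => t ≠ 0 ∧ ∃ b : F, t^2 = -(algebraMap F L b)).card := by
    rw [← Finset.card_biUnion]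
    · congr 1; ext t; simp
    · intro b _ b' _ hbb
      rw [Function.onFun, Finset.disjoint_filter]
      intro t _ h h'
      apply hbb
      have := h.2.symm.trans h'.2
      exact (algebraMap F L).injective (neg_injective this)
  have h4 : ∀ t : L, t ≠ 0 → ((∃ b : F, t^2 = -(algebraMap F L b)) ↔
      t ^ (2 * (Fintype.card F - 1)) = 1) := by
    intro t ht
    have h5 : (∃ b : F, t^2 = -(algebraMap F L b)) ↔ t^2 ∈ (algebraMap F L).range := by
      constructor
      · rintro ⟨b, hb⟩; exact ⟨-b, by rw [hb, map_neg]⟩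
      · rintro ⟨b, hb⟩; exact ⟨-b, by rw [← hb, map_neg, neg_neg]⟩
    have h6 := s19_deg_dvd (F := F) (t^2) 1
    rw [Nat.dvd_one, minpoly.natDegree_eq_one_iff, pow_one, Nat.card_eq_fintype_card] at h6
    rw [h5, h6, pow_mul]
    have h7 : (t^2) ^ Fintype.card F = (t^2) ^ (Fintype.card F - 1) * t^2 := by
      rw [← pow_succ, Nat.sub_add_cancel Fintype.card_pos]
    rw [h7]
    exact mul_eq_right₀ (pow_ne_zero 2 ht)
  rw [h2, ← Nat.subtype_card (p := fun t : L => t ≠ 0 ∧ ∃ b : F, t^2 = -(algebraMap F L b)) _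
    (by simp)]
  refine Nat.card_congr ⟨fun t => ⟨Units.mk0 t.1 t.2.1, ?_⟩, fun u => ⟨u.1.1, u.1.ne_zero, ?_⟩,
    ?_, ?_⟩
  · rw [MonoidHom.mem_ker]
    ext
    simpa using (h4 _ t.2.1).1 t.2.2
  · rw [h4 _ u.1.ne_zero]
    have := u.2
    rw [MonoidHom.mem_ker] at this
    simpa using congrArg Units.val this
  · intro t; rfl
  · intro u; ext; rfl

/-- number of triples over the intermediate field -/
theorem s19_sum_L {F L : Type*} [Field F] [Fintype F] [DecidableEq F] [Field L] [Algebra F L]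
    [Fintype L] [DecidableEq L] [CharP F 3] (e : ℕ)
    (hc : Fintype.card L = Fintype.card F ^ e) :
    ∑ p : F × F, 3 * ((Finset.univ.filter fun β : L => ∀ y : L,
      y^3 + algebraMap F L p.1 * y^2 + algebraMap F L p.2 * y ≠ β).card : ℤ) =
      ((Fintype.card F : ℤ) - 1) * (Fintype.card F : ℤ) * (Fintype.card F : ℤ) ^ e +
      (Fintype.card F : ℤ) ^ e * (((Fintype.card F : ℤ) - 1) * (if Even e then 2 else 1)) := by
  have : CharP L 3 := charP_of_injective_algebraMap (algebraMap F L).injective 3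
  rw [Fintype.sum_prod_type, ← Finset.add_sum_erase _ _ (Finset.mem_univ (0:F)), add_comm]
  have h1 : (1:ℕ) ≤ Fintype.card F := Fintype.card_pos
  congr 1
  · rw [Finset.sum_congr rfl (g := fun _ => (Fintype.card F : ℤ) * (Fintype.card F : ℤ) ^ e)]
    · rw [Finset.sum_const, Finset.card_erase_of_mem (Finset.mem_univ _), Finset.card_univ]
      rw [nsmul_eq_mul]; push_cast [h1]; ring
    · intro a ha
      have ha' : algebraMap F L a ≠ 0 := by simpa using ha
      rw [Finset.sum_congr rfl (fun b _ => s19_total_ne _ (algebraMap F L b) ha'), hc]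
      simp
  · have h2 := s19_sq_count (F := F) (L := L) e hc
    have h3 : (((∑ b : F, (Finset.univ.filter
        fun t : L => t ≠ 0 ∧ t^2 = -(algebraMap F L b)).card) : ℕ) : ℤ)
      = ((Fintype.card F : ℤ) - 1) * (if Even e then 2 else 1) := by
      rw [h2]; push_cast [h1]; rfl
    rw [← h3]
    push_cast
    rw [Finset.mul_sum]
    refine Finset.sum_congr rfl fun b _ => ?_
    have h5 := s19_total_zero 0 (algebraMap F L b) rfl
    rw [hc] at h5
    push_cast at h5
    convert h5


theorem s19_cubic_monic {L : Type*} [Field L] (a b c : L) :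
    (X ^ 3 + C a * X ^ 2 + C b * X + C c : L[X]).Monic ∧
    (X ^ 3 + C a * X ^ 2 + C b * X + C c : L[X]).natDegree = 3 := by
  constructor
  · monicity!
  · compute_degree!

theorem s19_cubic_irred {L : Type*} [Field L] (a b c : L) (h : ∀ y, y^3 + a*y^2 + b*y + c ≠ 0) :
    Irreducible (X ^ 3 + C a * X ^ 2 + C b * X + C c : L[X]) := by
  obtain ⟨h1, h2⟩ := s19_cubic_monic a b c
  rw [irreducible_iff_roots_eq_zero_of_degree_le_three (by omega) (by omega)]
  rw [Multiset.eq_zero_iff_forall_notMem]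
  intro y hy
  have := (mem_roots'.1 hy).2
  apply h y
  simpa using this

/-- descent for roots of a cubic -/
theorem s19_cubic_root {L K : Type*} [Field L] [Finite L] [Field K] [Finite K] [Algebra L K]
    (a b c : L) :
    (∀ y : K, y^3 + algebraMap L K a * y^2 + algebraMap L K b * y ≠ algebraMap L K c) ↔
     ¬ 3 ∣ Module.finrank L K ∧ ∀ y : L, y^3 + a*y^2 + b*y ≠ c := by
  obtain ⟨h1, h2⟩ := s19_cubic_monic a b (-c)
  have hir : (∀ y : L, y^3 + a*y^2 + b*y ≠ c) →
    Irreducible (X ^ 3 + C a * X ^ 2 + C b * X + C (-c) : L[X]) := fun h =>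
    s19_cubic_irred a b (-c) (fun y hy => h y (by linear_combination hy))
  constructor
  · intro h
    have h3 : ∀ y : L, y^3 + a*y^2 + b*y ≠ c := by
      intro y hy
      apply h (algebraMap L K y)
      rw [← hy]; simp
    refine ⟨fun hd => ?_, h3⟩
    obtain ⟨y, hy⟩ := s19_exists_root (K := K) _ (hir h3) (by rwa [h2])
    apply h y
    simp at hy
    linear_combination hy
  · rintro ⟨hd, h3⟩ y hy
    apply hd
    have := minpoly.eq_of_irreducible_of_monic (hir h3) (x := y)
      (by simp; linear_combination hy) h1
    rw [← h2, this]
    exact minpoly.degree_dvd (Algebra.IsIntegral.isIntegral y)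

/-- the elements of `K` lying in the subfield of degree `e`. -/
theorem s19_fixed_count {F K : Type*} [Field F] [Fintype F] [DecidableEq F] [CharP F 3]
    [Field K] [Fintype K] [DecidableEq K] [Algebra F K] (e d : ℕ) (he : e ≠ 0)
    (hed : Module.finrank F K = e * d) :
    ∑ p : F × F, 3 * ((Finset.univ.filter fun β : K => β ^ (Fintype.card F ^ e) = β ∧ ∀ y : K,
      y^3 + algebraMap F K p.1 * y^2 + algebraMap F K p.2 * y ≠ β).card : ℤ) =
      if 3 ∣ d then 0 else
      ((Fintype.card F : ℤ) - 1) * (Fintype.card F : ℤ) * (Fintype.card F : ℤ) ^ e +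
      (Fintype.card F : ℤ) ^ e * (((Fintype.card F : ℤ) - 1) * (if Even e then 2 else 1)) := by
  have : NeZero e := ⟨he⟩
  let L := FiniteField.Extension F 3 e
  have hf : Module.finrank F L = e := FiniteField.finrank_extension F 3 e
  obtain ⟨φ⟩ := FiniteField.nonempty_algHom_of_finrank_dvd (F := F) (K := L) (L := K)
    (by rw [hf, hed]; exact dvd_mul_right _ _)
  letI : Algebra L K := φ.toRingHom.toAlgebra
  have : IsScalarTower F L K := IsScalarTower.of_algebraMap_eq fun x => (φ.commutes x).symm
  letI : Fintype L := Fintype.ofFinite L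
  letI : DecidableEq L := Classical.decEq L
  have hcard : Fintype.card L = Fintype.card F ^ e := by
    rw [← Nat.card_eq_fintype_card, ← Nat.card_eq_fintype_card]
    exact FiniteField.natCard_extension F 3 e
  have hfin : Module.finrank L K = d := by
    have := Module.finrank_mul_finrank F L K
    rw [hf, hed] at this
    exact Nat.eq_of_mul_eq_mul_left (Nat.pos_of_ne_zero he) this
  have hrange : ∀ β : K, β ^ (Fintype.card F ^ e) = β ↔ ∃ x : L, algebraMap L K x = β := by
    intro β
    have := s19_deg_dvd (F := L) β 1
    rw [Nat.dvd_one, minpoly.natDegree_eq_one_iff, pow_one, Nat.card_eq_fintype_card, hcard]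
      at this
    exact this.symm
  rw [show (if 3 ∣ d then 0 else
      ((Fintype.card F : ℤ) - 1) * (Fintype.card F : ℤ) * (Fintype.card F : ℤ) ^ e +
      (Fintype.card F : ℤ) ^ e * (((Fintype.card F : ℤ) - 1) * (if Even e then 2 else 1))) =
    if 3 ∣ d then 0 else _ from by rw [← s19_sum_L (F := F) (L := L) e hcard]]
  have key : ∀ (p : F × F) (x : L), (∀ y : K, y^3 + algebraMap F K p.1 * y^2
      + algebraMap F K p.2 * y ≠ algebraMap L K x) ↔ ¬ 3 ∣ d ∧ ∀ y : L,
      y^3 + algebraMap F L p.1 * y^2 + algebraMap F L p.2 * y ≠ x := by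
    intro p x
    rw [← hfin, ← s19_cubic_root]
    simp only [← IsScalarTower.algebraMap_apply]
  split_ifs with h3
  · apply Finset.sum_eq_zero
    intro p _
    rw [Finset.filter_false_of_mem]
    · simp
    · rintro β _ ⟨hβ, h⟩
      obtain ⟨x, rfl⟩ := (hrange β).1 hβ
      exact ((key p x).1 h).1 h3
  · refine Finset.sum_congr rfl fun p _ => ?_
    congr 2
    symm
    refine Finset.card_bij (fun x _ => algebraMap L K x) ?_ ?_ ?_
    · intro x hx
      simp only [Finset.mem_filter, Finset.mem_univ, true_and] at hx ⊢
      exact ⟨(hrange _).2 ⟨x, rfl⟩, (key p x).2 ⟨h3, hx⟩⟩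
    · intro x _ y _ h
      exact (algebraMap L K).injective h
    · intro β hβ
      simp only [Finset.mem_filter, Finset.mem_univ, true_and] at hβ
      obtain ⟨x, rfl⟩ := (hrange β).1 hβ.1
      exact ⟨x, by simpa using ((key p x).1 hβ.2).2, rfl⟩

theorem s19_trans_monic {F : Type*} [Field F] (f h : F[X]) (hf : f.Monic)
    (hh : h.natDegree ≤ 2) :
    (ratTransform (X^3) h f).Monic ∧ (ratTransform (X^3) h f).natDegree = 3 * f.natDegree := by
  have h1 : ratTransform (X^3) h f = X ^ (3 * f.natDegree) +
      ∑ i ∈ Finset.range (f.natDegree), C (f.coeff i) * (X^3) ^ i * h ^ (f.natDegree - i) := by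
    rw [ratTransform, Finset.sum_range_succ, add_comm]
    congr 1
    simp [hf.coeff_natDegree, ← pow_mul]
  have h2 : (∑ i ∈ Finset.range (f.natDegree), C (f.coeff i) * (X^3) ^ i *
      h ^ (f.natDegree - i)).degree < ((3 * f.natDegree : ℕ) : WithBot ℕ) := by
    refine lt_of_le_of_lt (degree_sum_le _ _) ?_
    rw [Finset.sup_lt_iff (WithBot.bot_lt_coe _)]
    intro i hi
    rw [Finset.mem_range] at hi
    refine lt_of_le_of_lt degree_le_natDegree ?_
    rw [Nat.cast_lt]
    have h3 : (C (f.coeff i) * (X^3) ^ i).natDegree ≤ 3 * i := by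
      rw [← pow_mul]; exact natDegree_C_mul_X_pow_le _ _
    have h4 : (h ^ (f.natDegree - i)).natDegree ≤ (f.natDegree - i) * 2 :=
      natDegree_pow_le_of_le _ hh
    have := natDegree_mul_le_of_le h3 h4
    omega
  rw [h1]
  refine ⟨monic_X_pow_add h2, ?_⟩
  rw [natDegree_add_eq_left_of_degree_lt, natDegree_X_pow]
  rwa [degree_X_pow]

theorem s19_trans_eval {F E : Type*} [Field F] [Field E] [Algebra F E] (f h : F[X]) (x α : E)
    (hx : x ^ 3 = α * aeval x h) :
    aeval x (ratTransform (X^3) h f) = (aeval x h) ^ f.natDegree * aeval α f := by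
  rw [aeval_eq_sum_range (p := f), ratTransform, map_sum, Finset.mul_sum]
  refine Finset.sum_congr rfl fun i hi => ?_
  have hi' : i ≤ f.natDegree := by rw [Finset.mem_range] at hi; omega
  rw [map_mul, map_mul, map_pow, map_pow, map_pow, aeval_X, aeval_C, hx, mul_pow, Algebra.smul_def]
  have : (aeval x h) ^ f.natDegree = (aeval x h) ^ i * (aeval x h) ^ (f.natDegree - i) := by
    rw [← pow_add]; congr 1; omega
  rw [this]; ring

theorem s19_h_deg {F : Type*} [Field F] (a b : F) :
    (C b * X ^ 2 + C a * X + 1 : F[X]).natDegree ≤ 2 := by compute_degree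

theorem s19_ne_zero {F K : Type*} [Field F] [Field K] [Algebra F K]
    (x : K) (h : 1 < (minpoly F x).natDegree) : x ≠ 0 := by
  rintro rfl
  rw [minpoly.zero, natDegree_X] at h
  omega

theorem s19_recip {F E : Type*} [Field F] [Field E] [Algebra F E] (a b : F) (y α : E) (hα : α ≠ 0)
    (h : y^3 + algebraMap F E a * y^2 + algebraMap F E b * y = α⁻¹) :
    y ≠ 0 ∧ (y⁻¹)^3 = α * aeval (y⁻¹) (C b * X ^ 2 + C a * X + 1 : F[X]) := by
  have hy : y ≠ 0 := by
    rintro rfl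
    simp at h
    exact hα h.symm
  refine ⟨hy, ?_⟩
  simp
  field_simp
  field_simp at h
  linear_combination -h

theorem s19_irred_iff {F K : Type*} [Field F] [Finite F] [Field K] [Finite K] [Algebra F K]
    (a b : F) (α : K) (hα : (minpoly F α).natDegree = Module.finrank F K)
    (hm : 1 < Module.finrank F K) :
    Irreducible (ratTransform (X^3) (C b * X ^ 2 + C a * X + 1) (minpoly F α)) ↔
    ∀ y : K, y^3 + algebraMap F K a * y^2 + algebraMap F K b * y ≠ α⁻¹ := by
  have hα0 : α ≠ 0 := s19_ne_zero (F := F) α (by omega)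
  have hIntegral : IsIntegral F α := Algebra.IsIntegral.isIntegral α
  obtain ⟨hm1, hd1⟩ := s19_trans_monic (minpoly F α) _ (minpoly.monic hIntegral) (s19_h_deg a b)
  constructor
  · intro hir y hy
    obtain ⟨hy0, hx⟩ := s19_recip a b y α hα0 hy
    have h1 := s19_trans_eval (minpoly F α) _ _ _ hx
    rw [minpoly.aeval, mul_zero] at h1
    have h2 := minpoly.eq_of_irreducible_of_monic hir h1 hm1
    have h3 := minpoly.natDegree_le (A := F) (y⁻¹)
    rw [← h2, hd1] at h3
    omega
  · intro h
    have hir := s19_cubic_irred (algebraMap F K a) (algebraMap F K b) (-α⁻¹)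
      (fun y hy => h y (by linear_combination hy))
    obtain ⟨hpm, hpd⟩ := s19_cubic_monic (algebraMap F K a) (algebraMap F K b) (-α⁻¹)
    set p := (X ^ 3 + C (algebraMap F K a) * X ^ 2 + C (algebraMap F K b) * X + C (-α⁻¹) : K[X])
      with hp
    have : Fact (Irreducible p) := ⟨hir⟩
    let E := AdjoinRoot p
    have : Module.Finite K E := hpm.finite_adjoinRoot
    have : Finite E := Module.finite_of_finite K
    obtain ⟨γ, hγ⟩ : ∃ γ : E, aeval γ p = 0 := ⟨AdjoinRoot.root p, by
      rw [AdjoinRoot.aeval_eq]; exact AdjoinRoot.mk_self⟩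
    have hmin := minpoly.eq_of_irreducible_of_monic hir hγ hpm
    have hγ' : γ^3 + algebraMap F E a * γ^2 + algebraMap F E b * γ = (algebraMap K E α)⁻¹ := by
      have hγ2 : aeval γ (X ^ 3 + C (algebraMap F K a) * X ^ 2 + C (algebraMap F K b) * X
        + C (-α⁻¹) : K[X]) = 0 := hγ
      simp at hγ2
      simp only [← IsScalarTower.algebraMap_apply] at hγ2
      linear_combination hγ2
    obtain ⟨hγ0, hx⟩ := s19_recip a b γ (algebraMap K E α) (by simpa using hα0) hγ'
    have h1 := s19_trans_eval (minpoly F α) _ _ _ hx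
    rw [aeval_algebraMap_apply, minpoly.aeval, map_zero, mul_zero] at h1
    have hxint : IsIntegral F (γ⁻¹) := Algebra.IsIntegral.isIntegral _
    have hdvd := minpoly.dvd F _ h1
    obtain ⟨D, hD⟩ : ∃ D, D = (minpoly F (γ⁻¹)).natDegree := ⟨_, rfl⟩
    have h2 := (s19_deg_dvd (F := F) (γ⁻¹) D).1 (by rw [hD])
    have h3 : γ ^ (Nat.card F ^ D) = γ := by
      rw [inv_pow] at h2; exact inv_injective h2
    have h4 : Module.finrank F K ∣ D := by
      rw [← hα, s19_deg_dvd]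
      letI := Fintype.ofFinite F
      have hφ : ∀ z : E, ((FiniteField.frobeniusAlgHom F E)^D) z = z ^ (Nat.card F ^ D) := by
        intro z
        rw [Nat.card_eq_fintype_card]
        clear hD h2 h3
        induction D with
        | zero => simp
        | succ n ih =>
          rw [pow_succ', AlgHom.mul_apply, ih, FiniteField.frobeniusAlgHom_apply, ← pow_mul,
            ← pow_succ]
      have h5 := congrArg ((FiniteField.frobeniusAlgHom F E)^D) hγ'
      rw [map_add, map_add, map_mul, map_mul, map_pow, map_pow, AlgHom.commutes, AlgHom.commutes,
        hφ γ, h3, hγ', map_inv₀, hφ, ← map_pow] at h5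
      exact ((algebraMap K E).injective (inv_injective h5)).symm
    obtain ⟨s, hs⟩ := h4
    have h6 : 3 ∣ s := by
      rw [← hpd, hmin, s19_deg_dvd, Module.natCard_eq_pow_finrank (K := F) (V := K), ← pow_mul,
        ← hs, h3]
    have h7 : 3 * Module.finrank F K ≤ D := by
      obtain ⟨t, rfl⟩ := h6
      have hD0 : 0 < D := by rw [hD]; exact minpoly.natDegree_pos hxint
      have : t ≠ 0 := by rintro rfl; simp at hs; omega
      rw [hs]
      have : 1 ≤ t := by omega
      nlinarith
    have h8 := Polynomial.eq_of_monic_of_dvd_of_natDegree_le (minpoly.monic hxint) hm1 hdvd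
      (by rw [hd1, hα, ← hD]; exact h7)
    rw [h8]
    exact minpoly.irreducible hxint

theorem s19_moebius (m k : ℕ) (hm : m ≠ 0) (hk : k ∣ m) :
    ∑ d ∈ m.divisors, (if k ∣ m / d then ArithmeticFunction.moebius d else 0)
      = if k = m then 1 else 0 := by
  obtain ⟨c, rfl⟩ := hk
  have hk0 : k ≠ 0 := left_ne_zero_of_mul hm
  have hc0 : c ≠ 0 := right_ne_zero_of_mul hm
  have h1 : (k * c).divisors.filter (fun d => k ∣ k * c / d) = c.divisors := by
    ext d
    simp only [Finset.mem_filter, Nat.mem_divisors]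
    constructor
    · rintro ⟨⟨⟨t, ht⟩, _⟩, h2⟩
      have hd : d ≠ 0 := by rintro rfl; simp [hk0, hc0] at ht
      rw [ht, Nat.mul_div_cancel_left _ (Nat.pos_of_ne_zero hd)] at h2
      obtain ⟨s, rfl⟩ := h2
      refine ⟨⟨s, ?_⟩, hc0⟩
      apply Nat.eq_of_mul_eq_mul_left (Nat.pos_of_ne_zero hk0)
      rw [ht]; ring
    · rintro ⟨⟨s, rfl⟩, _⟩
      have hd : d ≠ 0 := left_ne_zero_of_mul hc0
      refine ⟨⟨⟨k * s, by ring⟩, hm⟩, ?_⟩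
      rw [show k * (d * s) = d * (k * s) by ring,
        Nat.mul_div_cancel_left _ (Nat.pos_of_ne_zero hd)]
      exact dvd_mul_right _ _
  rw [← Finset.sum_filter, h1, ← ArithmeticFunction.coe_mul_zeta_apply,
    ArithmeticFunction.moebius_mul_coe_zeta, ArithmeticFunction.one_apply]
  have : c = 1 ↔ k = k * c := by
    constructor
    · rintro rfl; simp
    · intro h
      apply Nat.eq_of_mul_eq_mul_left (Nat.pos_of_ne_zero hk0)
      omega
  simp only [this]

theorem s19_deg_inv {F K : Type*} [Field F] [Finite F] [Field K] [Finite K] [Algebra F K]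
    (x : K) : (minpoly F x⁻¹).natDegree = (minpoly F x).natDegree := by
  apply Nat.dvd_antisymm
  · rw [s19_deg_dvd, inv_pow, (s19_deg_dvd x _).1 dvd_rfl]
  · rw [s19_deg_dvd]
    have := (s19_deg_dvd (F := F) x⁻¹ _).1 dvd_rfl
    rw [inv_pow] at this
    exact inv_injective this

theorem s19_ncard {F K : Type*} [Field F] [Finite F] [Field K] [Fintype K] [DecidableEq K]
    [Algebra F K] (a b : F) (m : ℕ) (hfin : Module.finrank F K = m) (hm : 1 < m) :
    (IrredSet (X ^ 3 : F[X]) (C b * X ^ 2 + C a * X + 1) m).ncard * m =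
    (Finset.univ.filter fun β : K => (minpoly F β).natDegree = m ∧
      ∀ y : K, y^3 + algebraMap F K a * y^2 + algebraMap F K b * y ≠ β).card := by
  classical
  have h0 : (Finset.univ.filter fun β : K => (minpoly F β).natDegree = m ∧
      ∀ y : K, y^3 + algebraMap F K a * y^2 + algebraMap F K b * y ≠ β).card =
      (Finset.univ.filter fun α : K => (minpoly F α).natDegree = m ∧
      Irreducible (ratTransform (X^3) (C b * X ^ 2 + C a * X + 1) (minpoly F α))).card := by
    refine Finset.card_bij' (fun x _ => x⁻¹) (fun x _ => x⁻¹) ?_ ?_ (by simp) (by simp)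
    · intro x hx
      simp only [Finset.mem_filter, Finset.mem_univ, true_and] at hx ⊢
      have h1 : (minpoly F x⁻¹).natDegree = m := by rw [s19_deg_inv, hx.1]
      refine ⟨h1, ?_⟩
      rw [s19_irred_iff a b _ (h1.trans hfin.symm) (by omega), inv_inv]
      exact hx.2
    · intro x hx
      simp only [Finset.mem_filter, Finset.mem_univ, true_and] at hx ⊢
      rw [s19_irred_iff a b _ (hx.1.trans hfin.symm) (by omega)] at hx
      exact ⟨by rw [s19_deg_inv, hx.1], hx.2⟩
  rw [h0]
  set S := (Finset.univ.filter fun α : K => (minpoly F α).natDegree = m ∧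
      Irreducible (ratTransform (X^3) (C b * X ^ 2 + C a * X + 1) (minpoly F α))) with hS
  have h1 : IrredSet (X ^ 3 : F[X]) (C b * X ^ 2 + C a * X + 1) m =
      ((S.image (minpoly F) : Finset F[X]) : Set F[X]) := by
    ext f
    simp only [IrredSet, Set.mem_ofPred_eq, Finset.coe_image, Set.mem_image, Finset.mem_coe, hS,
      Finset.mem_filter, Finset.mem_univ, true_and]
    constructor
    · rintro ⟨hf1, hf2, hf3, hf4⟩
      obtain ⟨x, hx⟩ := s19_exists_root (K := K) f hf2 (by rw [hf3, hfin])
      have := minpoly.eq_of_irreducible_of_monic hf2 hx hf1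
      exact ⟨x, by rw [← this]; exact ⟨hf3, hf4⟩, this.symm⟩
    · rintro ⟨x, ⟨h2, h3⟩, rfl⟩
      have hIntegral : IsIntegral F x := Algebra.IsIntegral.isIntegral x
      exact ⟨minpoly.monic hIntegral, minpoly.irreducible hIntegral, h2, h3⟩
  rw [h1, Set.ncard_coe_finset, Finset.card_eq_sum_card_image (minpoly F) S,
    Finset.sum_const_nat (m := m)]
  intro f hf
  obtain ⟨x, hx, rfl⟩ := Finset.mem_image.1 hf
  simp only [hS, Finset.mem_filter, Finset.mem_univ, true_and] at hx
  have hIntegral : IsIntegral F x := Algebra.IsIntegral.isIntegral x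
  have h2 := s19_card_roots (K := K) _ (minpoly.irreducible hIntegral) (minpoly.monic hIntegral)
    (by rw [hx.1, hfin])
  rw [hx.1] at h2
  rw [← h2, ← Nat.subtype_card (p := fun y : K => minpoly F y = minpoly F x)]
  intro y
  simp only [hS, Finset.mem_filter, Finset.mem_univ, true_and]
  constructor
  · rintro ⟨_, h⟩; exact h
  · intro h; exact ⟨by rw [h]; exact hx, h⟩

theorem s19_inversion {F K : Type*} [Field F] [Fintype F] [Field K] [Fintype K] [DecidableEq K]
    [Algebra F K] (m : ℕ) (hfin : Module.finrank F K = m) (hm : m ≠ 0) (N : K → Prop)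
    [DecidablePred N] :
    ((Finset.univ.filter fun β : K => (minpoly F β).natDegree = m ∧ N β).card : ℤ) =
    ∑ d ∈ m.divisors, ArithmeticFunction.moebius d *
     ((Finset.univ.filter fun β : K => β ^ (Fintype.card F ^ (m / d)) = β ∧ N β).card : ℤ) := by
  simp only [Finset.card_filter]
  push_cast
  simp only [Finset.mul_sum]
  rw [Finset.sum_comm]
  refine Finset.sum_congr rfl fun β _ => ?_
  have hd : (minpoly F β).natDegree ∣ m := by
    rw [← hfin]; exact minpoly.degree_dvd (Algebra.IsIntegral.isIntegral β)
  have h1 := s19_moebius m _ hm hd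
  by_cases hN : N β
  · simp only [hN, and_true]
    rw [← h1]
    refine Finset.sum_congr rfl fun d _ => ?_
    simp only [s19_deg_dvd, Nat.card_eq_fintype_card, mul_ite, mul_one, mul_zero]
  · simp [hN]

/-- Theorem 19: for `q` a power of `3` and `m > 1`, the sum of `|𝓘(x³, h, m, q)|` over all
`h(x) = 1 + ax + bx²` (i.e. all `h` of degree at most `2` with `h(0) = 1`) equals
`((q−1)/(3m)) ∑_{d ∣ m, 3 ∤ d} μ(d)(q + (3 + (−1)^{m/d})/2) q^{m/d}`. -/
theorem stmt19 {F : Type*} [Field F] [Fintype F] [CharP F 3] (q : ℕ)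
    (hq : Fintype.card F = q) (m : ℕ) (hm : 1 < m) :
    (∑ p : F × F,
        ((IrredSet (X ^ 3 : F[X]) (C p.2 * X ^ 2 + C p.1 * X + 1) m).ncard : ℚ)) =
      (((q : ℚ) - 1) / (3 * m)) * ∑ d ∈ m.divisors.filter (fun d => ¬ 3 ∣ d),
        ((ArithmeticFunction.moebius d : ℤ) : ℚ) *
          ((q : ℚ) + (3 + (-1 : ℚ) ^ (m / d)) / 2) * (q : ℚ) ^ (m / d) := by
  classical
  have hm0 : m ≠ 0 := by omega
  have : NeZero m := ⟨hm0⟩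
  let K := FiniteField.Extension F 3 m
  have hfin : Module.finrank F K = m := FiniteField.finrank_extension F 3 m
  let _ : Fintype K := Fintype.ofFinite K
  have hm' : (m : ℚ) ≠ 0 := by exact_mod_cast hm0
  have key : (∑ p : F × F, 3 * (((IrredSet (X ^ 3 : F[X])
        (C p.2 * X ^ 2 + C p.1 * X + 1) m).ncard : ℤ) * m)) =
      ∑ d ∈ m.divisors, ArithmeticFunction.moebius d * (if 3 ∣ d then 0 else
      ((Fintype.card F : ℤ) - 1) * (Fintype.card F : ℤ) * (Fintype.card F : ℤ) ^ (m / d) +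
      (Fintype.card F : ℤ) ^ (m / d) * (((Fintype.card F : ℤ) - 1) *
        (if Even (m / d) then 2 else 1))) := by
    have h1 : ∀ p : F × F, 3 * (((IrredSet (X ^ 3 : F[X])
        (C p.2 * X ^ 2 + C p.1 * X + 1) m).ncard : ℤ) * m) =
        ∑ d ∈ m.divisors, ArithmeticFunction.moebius d *
          (3 * ((Finset.univ.filter fun β : K => β ^ (Fintype.card F ^ (m / d)) = β ∧
          ∀ y : K, y^3 + algebraMap F K p.1 * y^2 + algebraMap F K p.2 * y ≠ β).card : ℤ)) := by
      intro p
      have h2 := s19_ncard (K := K) p.1 p.2 m hfin hm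
      have h3 := s19_inversion (F := F) (K := K) m hfin hm0 (fun β => ∀ y : K,
        y^3 + algebraMap F K p.1 * y^2 + algebraMap F K p.2 * y ≠ β)
      rw [← h2] at h3
      push_cast at h3
      rw [h3, Finset.mul_sum]
      refine Finset.sum_congr rfl fun d _ => ?_
      ring
    rw [Finset.sum_congr rfl (fun p _ => h1 p), Finset.sum_comm]
    refine Finset.sum_congr rfl fun d hd => ?_
    rw [← Finset.mul_sum]
    have hd' := Nat.dvd_of_mem_divisors hd
    rw [s19_fixed_count (F := F) (K := K) (m / d) d
      (Nat.div_pos (Nat.le_of_dvd (by omega) hd') (Nat.pos_of_mem_divisors hd)).ne'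
      (by rw [hfin, Nat.div_mul_cancel hd'])]
  have key2 := congrArg (fun z : ℤ => (z : ℚ)) key
  simp only [hq] at key2
  push_cast at key2
  rw [← Finset.mul_sum, ← Finset.sum_mul] at key2
  have h4 : (∑ p : F × F,
        ((IrredSet (X ^ 3 : F[X]) (C p.2 * X ^ 2 + C p.1 * X + 1) m).ncard : ℚ))
      = (1 / (3 * m)) * (3 * ((∑ p : F × F, ((IrredSet (X ^ 3 : F[X])
        (C p.2 * X ^ 2 + C p.1 * X + 1) m).ncard : ℚ)) * m)) := by
    field_simp
  rw [h4, key2, Finset.sum_filter, Finset.mul_sum, Finset.mul_sum]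
  refine Finset.sum_congr rfl fun d _ => ?_
  by_cases h3 : 3 ∣ d
  · simp [h3]
  · rw [if_neg h3, if_pos h3]
    by_cases he : Even (m / d)
    · rw [if_pos he, he.neg_one_pow]; ring
    · rw [if_neg he, (Nat.not_even_iff_odd.1 he).neg_one_pow]; ring
end
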